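/- Let f be an expansive homeomorphism with the shadowing property of a compact metric space X, let ρ: X → (0,∞) be continuous, and let φ be the suspension flow of (f, ρ). Then for every 0 ≤ c < h_top(φ) there exists a compact φ-invariant subset Γ_c of the suspension space such that φ|_{Γ_c} is strictly ergodic and h_top(φ|_{Γ_c}) = c; in particular φ has entropy flexibility. -/

import Mathlib

/-!
The proof works with nested horseshoes of the base homeomorphism `f` and passes to the flow through
return times.

*A horseshoe of large entropy.* Let `0 ≤ c < h_top(φ)`. Separated sets of the flow, once sorted by
the drift of their return times (`Susp.drift`), produce separated sets of the base that are large
relative to `exp (c · return time)` (`Susp.exists_weighted`). A pigeonhole argument selects orbit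
segments of one common length that start and end in the same small cell (`exists_return`).
Shadowing allows these segments to be concatenated freely, and expansiveness makes the coding
equivariant and continuous (`Susp.exists_HS`). The result is a full shift `π : (ℤ → Fin N) → X` over
a power `f ^ m` whose return times are at most `T`, with `c T < log N`.

*Shrinking the entropy to `c` and making averages rigid.* From a horseshoe with supremum `T` of the
return times, one passes to words of length `q` that contain all the letters and all have the same
letter counts. The types of words of length `q` are only polynomially many, so more than
`exp (c q T)` words of one type are available, and exactly `⌊exp (c q T)⌋ + 1` of them are kept
(`HS.exists_step`). The equality of letter counts makes Birkhoff sums over a word almost independent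
of the word. Iteration gives a tower of nested horseshoes (`exists_tower`) whose entropy in flow time
tends to `c` from above and on which Birkhoff averages become constant.

*The set.* `Γ` is a minimal subset of the intersection of the flow saturations of the horseshoes.
Time averages of continuous functions converge uniformly on `Γ` (`Susp.unifAvg`), which gives unique
ergodicity (`UnifAvg.main`). Counting itineraries bounds `h_top(φ|Γ)` from above by `c`
(`Susp.topEntropyOn_le`). Since every word of level `k + 1` contains all letters of level `k`, the set
`Γ` meets all cylinders of level `k`, which gives the lower bound (`Susp.le_topEntropyOn`).

*The measure.* The entropy of the unique invariant measure is at most `h_top(φ|Γ)` by the easy half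
of the variational principle (`measEntropy_le_of_topEntropyOn_le`). It is at least `h_top(φ|Γ)` by
the Misiurewicz argument, in which uniform convergence of averages replaces the choice of a weak limit
(`le_measEntropy_of_uniform`).
-/

open Filter MeasureTheory Set Topology
open scoped ENNReal NNReal

attribute [local instance] PiCountable.metricSpace

namespace EF

/-! ### Topological entropy via separated sets -/

section Entropy

variable {M : Type*} [MetricSpace M]

/-- `Q` is an `(n,ε)`-separated set for `f`. -/
def IsDynSep (f : M → M) (n : ℕ) (ε : ℝ) (Q : Set M) : Prop :=
  Q.Pairwise fun x y => ∃ j : ℕ, j ≤ n ∧ ε < dist (f^[j] x) (f^[j] y)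

/-- Maximal cardinality of an `(n,ε)`-separated subset of `K`. -/
noncomputable def sepCount (f : M → M) (K : Set M) (n : ℕ) (ε : ℝ) : ℕ :=
  sSup {k : ℕ | ∃ Q : Finset M, ↑Q ⊆ K ∧ IsDynSep f n ε ↑Q ∧ Q.card = k}

/-- Topological entropy of `f` on the (not necessarily invariant) set `K`. -/
noncomputable def topEntropyOn (f : M → M) (K : Set M) : EReal :=
  ⨆ (ε : ℝ) (_ : 0 < ε),
    Filter.atTop.limsup fun n : ℕ => ((Real.log (sepCount f K n ε) / n : ℝ) : EReal)

/-- Topological entropy of `f`. -/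
noncomputable def topEntropy (f : M → M) : EReal :=
  topEntropyOn f Set.univ

end Entropy

/-! ### Measure-theoretic (Kolmogorov–Sinai) entropy -/

section MeasEntropy

variable {α : Type*} [MeasurableSpace α]

/-- A finite measurable partition of the whole space. -/
def IsMeasPartition (P : Finset (Set α)) : Prop :=
  (∀ p ∈ P, MeasurableSet p) ∧ ⋃₀ (↑P : Set (Set α)) = Set.univ ∧
    (↑P : Set (Set α)).Pairwise Disjoint

/-- The function `x ↦ - x log x`. -/
noncomputable def negMulLog (x : ℝ) : ℝ := -(x * Real.log x)

/-- Information of the refinement `P ∨ f⁻¹ P ∨ ⋯ ∨ f⁻⁽ⁿ⁻¹⁾ P` with respect to `μ`. -/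
noncomputable def refinedInfo (f : α → α) (μ : Measure α) (P : Finset (Set α)) (n : ℕ) : ℝ :=
  ∑ a : Fin n → {p // p ∈ P},
    negMulLog (μ (⋂ i : Fin n, f^[(i : ℕ)] ⁻¹' ((a i : Set α)))).toReal

/-- Entropy of `f` w.r.t. `μ` and the partition `P`. -/
noncomputable def partEntropy (f : α → α) (μ : Measure α) (P : Finset (Set α)) : ℝ :=
  Filter.atTop.limsup fun n : ℕ => refinedInfo f μ P n / n

/-- Kolmogorov–Sinai entropy of `f` with respect to `μ`. -/
noncomputable def measEntropy (f : α → α) (μ : Measure α) : EReal :=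
  ⨆ (P : Finset (Set α)) (_ : IsMeasPartition P), ((partEntropy f μ P : ℝ) : EReal)

end MeasEntropy

/-! ### Discrete-time dynamics -/

section Discrete

variable {M : Type*} [MetricSpace M]

/-- A set invariant under `f`. -/
def InvSet (f : M → M) (Λ : Set M) : Prop := f '' Λ = Λ

/-- `f` is minimal on the invariant set `Λ`. -/
def MinimalOn (f : M → M) (Λ : Set M) : Prop :=
  ∀ K : Set M, K ⊆ Λ → K.Nonempty → IsClosed K → f '' K = K → K = Λ

variable [MeasurableSpace M]

/-- `f` is uniquely ergodic on `Λ`: there is exactly one invariant Borel probability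
measure supported in `Λ`. -/
def UniquelyErgodicOn (f : M → M) (Λ : Set M) : Prop :=
  ∃! μ : Measure M, IsProbabilityMeasure μ ∧ MeasurePreserving f μ μ ∧ μ Λᶜ = 0

/-- `f` is strictly ergodic on `Λ`: minimal and uniquely ergodic. -/
def StrictlyErgodicOn (f : M → M) (Λ : Set M) : Prop :=
  MinimalOn f Λ ∧ UniquelyErgodicOn f Λ

/-- Entropy flexibility of `f` on an invariant set `S`. -/
def EntropyFlexibleOn (f : M → M) (S : Set M) : Prop :=
  ∀ c : ℝ, 0 ≤ c → (c : EReal) < topEntropyOn f S →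
    ∃ (μ : Measure M) (Λ : Set M), IsProbabilityMeasure μ ∧ Ergodic f μ ∧ μ Sᶜ = 0 ∧
      Λ ⊆ S ∧ IsCompact Λ ∧ f '' Λ = Λ ∧
      topEntropyOn f Λ = (c : EReal) ∧ measEntropy f μ = (c : EReal)

/-- Entropy flexibility of `f` (on the whole space). -/
def EntropyFlexible (f : M → M) : Prop :=
  ∀ c : ℝ, 0 ≤ c → (c : EReal) < topEntropy f →
    ∃ (μ : Measure M) (Λ : Set M), IsProbabilityMeasure μ ∧ Ergodic f μ ∧
      IsCompact Λ ∧ f '' Λ = Λ ∧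
      topEntropyOn f Λ = (c : EReal) ∧ measEntropy f μ = (c : EReal)

end Discrete

/-! ### Shadowing and expansiveness (discrete time) -/

section Shadowing

variable {M : Type*} [MetricSpace M]

/-- The shadowing property for a homeomorphism `f` (full orbits indexed by `ℤ`,
encoded via orbit functions `z` with `z (n+1) = f (z n)`). -/
def ShadowingProperty (f : M → M) : Prop :=
  ∀ ε : ℝ, 0 < ε → ∃ δ : ℝ, 0 < δ ∧ ∀ x : ℤ → M,
    (∀ n : ℤ, dist (f (x n)) (x (n + 1)) ≤ δ) →
    ∃ z : ℤ → M, (∀ n : ℤ, z (n + 1) = f (z n)) ∧ ∀ n : ℤ, dist (z n) (x n) ≤ ε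

/-- The shadowing property relative to an invariant set `Λ`. -/
def ShadowingOn (f : M → M) (Λ : Set M) : Prop :=
  ∀ ε : ℝ, 0 < ε → ∃ δ : ℝ, 0 < δ ∧ ∀ x : ℤ → M, (∀ n : ℤ, x n ∈ Λ) →
    (∀ n : ℤ, dist (f (x n)) (x (n + 1)) ≤ δ) →
    ∃ z : ℤ → M, (∀ n : ℤ, z n ∈ Λ) ∧ (∀ n : ℤ, z (n + 1) = f (z n)) ∧
      ∀ n : ℤ, dist (z n) (x n) ≤ ε

/-- Expansiveness of a homeomorphism, phrased via full orbit functions. -/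
def Expansive (f : M → M) : Prop :=
  ∃ e : ℝ, 0 < e ∧ ∀ z w : ℤ → M,
    (∀ n : ℤ, z (n + 1) = f (z n)) → (∀ n : ℤ, w (n + 1) = f (w n)) →
    (∀ n : ℤ, dist (z n) (w n) ≤ e) → z 0 = w 0

/-- Topological transitivity of `f` on `Λ`. -/
def TransitiveOn (f : M → M) (Λ : Set M) : Prop :=
  ∀ U V : Set M, IsOpen U → IsOpen V → (U ∩ Λ).Nonempty → (V ∩ Λ).Nonempty →
    ∃ n : ℕ, 0 < n ∧ ((f^[n] '' (U ∩ Λ)) ∩ V).Nonempty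

end Shadowing

/-! ### Continuous-time dynamics -/

section Flows

variable {M : Type*} [MetricSpace M]

/-- A set invariant under all time-`t` maps of the flow. -/
def FlowInvSet (φ : Flow ℝ M) (Λ : Set M) : Prop := ∀ t : ℝ, φ.toFun t '' Λ = Λ

/-- Topological entropy of a flow on a set: entropy of its time-one map. -/
noncomputable def flowTopEntropyOn (φ : Flow ℝ M) (K : Set M) : EReal :=
  topEntropyOn (φ.toFun 1) K

/-- Topological entropy of a flow: the entropy of its time-one map. -/
noncomputable def flowTopEntropy (φ : Flow ℝ M) : EReal := topEntropy (φ.toFun 1)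

/-- Minimality of a flow on `Λ`. -/
def FlowMinimalOn (φ : Flow ℝ M) (Λ : Set M) : Prop :=
  ∀ K : Set M, K ⊆ Λ → K.Nonempty → IsClosed K → (∀ t : ℝ, φ.toFun t '' K = K) → K = Λ

variable [MeasurableSpace M]

/-- An invariant measure for a flow. -/
def FlowInvariant (φ : Flow ℝ M) (μ : Measure M) : Prop :=
  ∀ t : ℝ, MeasurePreserving (φ.toFun t) μ μ

/-- An ergodic measure for a flow. -/
def FlowErgodic (φ : Flow ℝ M) (μ : Measure M) : Prop :=
  FlowInvariant φ μ ∧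
    ∀ s : Set M, MeasurableSet s → (∀ t : ℝ, φ.toFun t ⁻¹' s = s) → μ s = 0 ∨ μ s = 1

/-- Measure-theoretic entropy of a flow: entropy of the time-one map. -/
noncomputable def flowMeasEntropy (φ : Flow ℝ M) (μ : Measure M) : EReal :=
  measEntropy (φ.toFun 1) μ

/-- Unique ergodicity of a flow on `Λ`. -/
def FlowUniquelyErgodicOn (φ : Flow ℝ M) (Λ : Set M) : Prop :=
  ∃! μ : Measure M, IsProbabilityMeasure μ ∧ FlowInvariant φ μ ∧ μ Λᶜ = 0

/-- Strict ergodicity of a flow on `Λ`. -/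
def FlowStrictlyErgodicOn (φ : Flow ℝ M) (Λ : Set M) : Prop :=
  FlowMinimalOn φ Λ ∧ FlowUniquelyErgodicOn φ Λ

/-- Entropy flexibility for flows. -/
def FlowEntropyFlexible (φ : Flow ℝ M) : Prop :=
  ∀ c : ℝ, 0 ≤ c → (c : EReal) < flowTopEntropy φ →
    ∃ (μ : Measure M) (Λ : Set M), IsProbabilityMeasure μ ∧ FlowErgodic φ μ ∧
      IsCompact Λ ∧ FlowInvSet φ Λ ∧
      flowTopEntropyOn φ Λ = (c : EReal) ∧ flowMeasEntropy φ μ = (c : EReal)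

end Flows

/-! ### Suspension flows -/

section Suspension

variable {X : Type*} [MetricSpace X] {Λ : Type*} [MetricSpace Λ]

/-- `φ` (a flow on `Λ`) is, on the subset `Γ ⊆ Λ`, the suspension flow of the base
map `f` restricted to `S ⊆ X` under the roof function `ρ`, witnessed by the
embedding `e : X → Λ` of the base. This characterizes the quotient of `S × ℝ` by
`(x, ρ x) ∼ (f x, 0)` with the unit-speed vertical flow. -/
def IsSuspensionOn (f : X → X) (S : Set X) (ρ : X → ℝ) (φ : Flow ℝ Λ) (Γ : Set Λ) : Prop :=
  ∃ e : X → Λ, ContinuousOn e S ∧ (∀ x ∈ S, e x ∈ Γ) ∧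
    (∀ x ∈ S, φ.toFun (ρ x) (e x) = e (f x)) ∧
    (∀ z ∈ Γ, ∃ x ∈ S, ∃ s : ℝ, 0 ≤ s ∧ s < ρ x ∧ φ.toFun s (e x) = z) ∧
    (∀ x ∈ S, ∀ y ∈ S, ∀ s u : ℝ, 0 ≤ s → s < ρ x → 0 ≤ u → u < ρ y →
      φ.toFun s (e x) = φ.toFun u (e y) → x = y ∧ s = u)

end Suspension

/-! ### Symbolic dynamics -/

section Symbolic

/-- The full shift map on `ℤ → A`. -/
def fullShift (A : Type*) : (ℤ → A) → (ℤ → A) := fun x i => x (i + 1)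

variable {A : Type*} [MetricSpace A]

/-- A subshift: a closed shift-invariant subset of the full shift. -/
def IsSubshift (S : Set (ℤ → A)) : Prop :=
  IsClosed S ∧ fullShift A '' S = S

/-- The vertex shift determined by a transition relation `Adj`. -/
def vertexShift {B : Type*} (Adj : B → B → Prop) : Set (ℤ → B) :=
  {x | ∀ i : ℤ, Adj (x i) (x (i + 1))}

/-- A topological conjugacy between two shift spaces (over possibly different
alphabets): a homeomorphism of the subspaces intertwining the shift maps. -/
def ShiftConj {B : Type*} [mB : MetricSpace B] (S : Set (ℤ → A)) (T : Set (ℤ → B)) : Prop :=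
  ∃ h : ↥S ≃ₜ ↥T, ∀ x y : ↥S, (y : ℤ → A) = fullShift A (x : ℤ → A) →
    ((h y : ℤ → B)) = fullShift B ((h x : ℤ → B))

/-- A subshift of finite type: a subshift topologically conjugate to a vertex shift
over some finite alphabet. -/
def IsSFT [Fintype A] (S : Set (ℤ → A)) : Prop :=
  IsSubshift S ∧ ∃ (B : Type) (_ : Fintype B) (mB : MetricSpace B) (Adj : B → B → Prop),
    @ShiftConj A _ B mB S (vertexShift Adj)

/-- The word `w` occurs in some point of `S`. -/
def occursIn (w : List A) (S : Set (ℤ → A)) : Prop :=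
  ∃ x ∈ S, ∃ a : ℤ, ∀ i : Fin w.length, x (a + (i : ℕ)) = w.get i

/-- The words of length `s` in the language of `S`. -/
def langOf (s : ℕ) (S : Set (ℤ → A)) : Set (List A) :=
  {w | w.length = s ∧ occursIn w S}

/-- `r` is a parsing of `x` into words from `𝒲`. -/
def ParsesAt (x : ℤ → A) (𝒲 : Finset (List A)) (r : ℤ → ℤ) : Prop :=
  ∀ j : ℤ, ∃ w ∈ 𝒲, r (j + 1) = r j + w.length ∧
    ∀ i : Fin w.length, x (r j + (i : ℕ)) = w.get i

/-- The renewal system over a finite set of words `𝒲`: all bi-infinite free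
concatenations of words from `𝒲`. -/
def renewalSet (𝒲 : Finset (List A)) : Set (ℤ → A) :=
  {x | ∃ r : ℤ → ℤ, ParsesAt x 𝒲 r}

end Symbolic

/-! ### Horseshoes for flows -/

section Horseshoe

variable {M : Type*} [MetricSpace M]

/-- Auxiliary: `Λ` is a horseshoe of `φ` with symbol space `B`. -/
def HorseshoeWitness (φ : Flow ℝ M) (Λ : Set M) (B : Type) [Fintype B] [MetricSpace B] : Prop :=
  2 ≤ Fintype.card B ∧ ∃ ρ : (ℤ → B) → ℝ, Continuous ρ ∧ (∀ x, 0 < ρ x) ∧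
    IsSuspensionOn (fullShift B) Set.univ ρ φ Λ

/-- A horseshoe of a flow: a compact invariant set on which the flow is conjugate to
a suspension flow over a full shift on at least two symbols. -/
def IsHorseshoe (φ : Flow ℝ M) (Λ : Set M) : Prop :=
  ∃ (B : Type) (iB : Fintype B) (mB : MetricSpace B), @HorseshoeWitness M _ φ Λ B iB mB

end Horseshoe

/-! ### The metric on measures and empirical measures -/

section MeasMetric

variable {M : Type*} [MetricSpace M] [MeasurableSpace M]

/-- The metric `𝔡` on Borel (probability) measures determined by a sequence of test
functions `Φ`. -/
noncomputable def measDist (Φ : ℕ → M → ℝ) (μ ν : Measure M) : ℝ :=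
  ∑' n : ℕ, (1 / 2 : ℝ) ^ (n + 1) * |(∫ x, Φ n x ∂μ) - ∫ x, Φ n x ∂ν|

/-- A sequence of test functions with `‖Φ n‖_∞ + Lip (Φ n) ≤ 1`, dense in `C(M,ℝ)`. -/
def GoodTestSeq (Φ : ℕ → M → ℝ) : Prop :=
  (∀ n : ℕ, ∃ C K : ℝ, 0 ≤ C ∧ 0 ≤ K ∧ C + K ≤ 1 ∧ (∀ x, |Φ n x| ≤ C) ∧
    ∀ x y, |Φ n x - Φ n y| ≤ K * dist x y) ∧
  ∀ g : M → ℝ, Continuous g → ∀ ε : ℝ, 0 < ε → ∃ n : ℕ, ∀ x, |g x - Φ n x| < ε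

/-- The `n`-th empirical measure of the point `x` for the map `f`. -/
noncomputable def empMeasure (f : M → M) (n : ℕ) (x : M) : Measure M :=
  (n : ℝ≥0∞)⁻¹ • ∑ j ∈ Finset.range n, Measure.dirac (f^[j] x)

/-- The topological support of a measure. -/
def measSupport (μ : Measure M) : Set M :=
  {x | ∀ U : Set M, IsOpen U → x ∈ U → 0 < μ U}

/-- A measure of maximal entropy of `f` on `Λ`. -/
def IsMaxEntropyMeasureOn (f : M → M) (Λ : Set M) (μ : Measure M) : Prop :=
  IsProbabilityMeasure μ ∧ MeasurePreserving f μ μ ∧ μ Λᶜ = 0 ∧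
    measEntropy f μ = topEntropyOn f Λ

end MeasMetric

/-! ### Flow shadowing and expansiveness -/

section FlowShadow

variable {M : Type*} [MetricSpace M]

/-- Bowen–Walters expansiveness for flows. -/
def FlowExpansive (φ : Flow ℝ M) : Prop :=
  ∀ ε : ℝ, 0 < ε → ∃ δ : ℝ, 0 < δ ∧ ∀ x y : M, ∀ s : ℝ → ℝ, Continuous s → s 0 = 0 →
    (∀ t : ℝ, dist (φ.toFun t x) (φ.toFun (s t) y) ≤ δ) →
    ∃ τ : ℝ, |τ| ≤ ε ∧ y = φ.toFun τ x

/-- The shadowing property for flows: every `(δ,1)`-pseudo-orbit is `ε`-traced,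
up to an orientation preserving reparametrization of time, by a true orbit. -/
def FlowShadowing (φ : Flow ℝ M) : Prop :=
  ∀ ε : ℝ, 0 < ε → ∃ δ : ℝ, 0 < δ ∧
    ∀ (x : ℤ → M) (T S : ℤ → ℝ), (∀ i : ℤ, 1 ≤ T i) →
      (∀ i : ℤ, dist (φ.toFun (T i) (x i)) (x (i + 1)) ≤ δ) →
      S 0 = 0 → (∀ i : ℤ, S (i + 1) = S i + T i) →
      ∃ (z : M) (h : ℝ → ℝ), StrictMono h ∧ Continuous h ∧ Function.Surjective h ∧
        ∀ i : ℤ, ∀ t : ℝ, S i ≤ t → t < S (i + 1) →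
          dist (φ.toFun (h t) z) (φ.toFun (t - S i) (x i)) ≤ ε

end FlowShadow

/-! ### Lift of a measure to a suspension flow -/

section Lift

variable {X : Type*} [MeasurableSpace X] {Y : Type*} [TopologicalSpace Y] [MeasurableSpace Y]

/-- The lift of a base measure `ν` to the suspension flow `φ` with roof `ρ`,
via the base embedding `e`: the normalized image of `ν ⊗ Leb` on the region
below the roof. -/
noncomputable def suspLift (φ : Flow ℝ Y) (e : X → Y) (ρ : X → ℝ) (ν : Measure X) :
    Measure Y :=
  (ENNReal.ofReal (∫ x, ρ x ∂ν))⁻¹ •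
    Measure.map (fun p : X × ℝ => φ.toFun p.2 (e p.1))
      ((ν.prod (volume : Measure ℝ)).restrict {p : X × ℝ | 0 ≤ p.2 ∧ p.2 < ρ p.1})

end Lift

end EF

open EF

set_option linter.unusedSectionVars false

namespace EFlex

/-! ### Finite partitions, separated sets and entropy -/

/-- Every compact metric space splits into finitely many pieces of diameter at most `δ`. -/
lemma exists_cells {Z : Type*} [MetricSpace Z] [CompactSpace Z] {δ : ℝ} (hδ : 0 < δ) :
    ∃ (K : ℕ) (κ : Z → Fin K), ∀ x y, κ x = κ y → dist x y ≤ δ := by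
  obtain ⟨t, -, ht⟩ := isCompact_univ.elim_nhds_subcover (fun x : Z => Metric.ball x (δ / 2))
    (fun x _ => Metric.ball_mem_nhds x (by positivity))
  have h : ∀ x : Z, ∃ y : t, x ∈ Metric.ball (y : Z) (δ / 2) := by
    intro x
    have := ht (mem_univ x)
    simp only [mem_iUnion] at this
    obtain ⟨y, hy, hxy⟩ := this
    exact ⟨⟨y, hy⟩, hxy⟩
  choose g hg using h
  refine ⟨t.card, fun x => t.equivFin (g x), fun x y hxy => ?_⟩
  have h1 : g x = g y := t.equivFin.injective hxy
  have h2 := hg x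
  have h3 := hg y
  rw [← h1] at h3
  rw [Metric.mem_ball] at h2 h3
  have := dist_triangle_right x y (g x : Z)
  linarith

/-- A finite set contains a maximal subset of pairwise unrelated points. -/
lemma exists_maximal_sep {α : Type*} (Q : Finset α) (r : α → α → Prop) (hr : ∀ x, r x x)
    (hs : ∀ x y, r x y → r y x) :
    ∃ R ⊆ Q, (R : Set α).Pairwise (fun x y => ¬ r x y) ∧ ∀ x ∈ Q, ∃ y ∈ R, r x y := by
  classical
  obtain ⟨R, hR, hmax⟩ := Finset.exists_max_image
    (Q.powerset.filter (fun R : Finset α => (R : Set α).Pairwise (fun x y => ¬ r x y))) Finset.card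
    ⟨∅, by simp⟩
  simp only [Finset.mem_filter, Finset.mem_powerset] at hR hmax
  refine ⟨R, hR.1, hR.2, fun x hx => ?_⟩
  by_contra! hcon
  have hxR : x ∉ R := fun h => hcon x h (hr x)
  have := hmax (insert x R) ⟨Finset.insert_subset hx hR.1, by
    rw [Finset.coe_insert]
    exact hR.2.insert (fun y hy _ => ⟨hcon y hy, fun h => hcon y hy (hs _ _ h)⟩)⟩
  rw [Finset.card_insert_of_notMem hxR] at this
  omega

section Sep

variable {M : Type*} [MetricSpace M] [CompactSpace M]

lemma sep_card_bdd (f : M → M) (K : Set M) (n : ℕ) {ε : ℝ} (hε : 0 < ε) :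
    BddAbove {k : ℕ | ∃ Q : Finset M, ↑Q ⊆ K ∧ IsDynSep f n ε ↑Q ∧ Q.card = k} := by
  obtain ⟨K', κ, hκ⟩ := exists_cells (Z := M) hε
  refine ⟨Fintype.card (Fin (n + 1) → Fin K'), ?_⟩
  rintro k ⟨Q, -, hQ, rfl⟩
  rw [← Finset.card_univ]
  refine Finset.card_le_card_of_injOn (fun x j => κ (f^[(j : ℕ)] x)) (by simp) ?_
  intro x hx y hy hxy
  by_contra hne
  obtain ⟨j, hj, hd⟩ := hQ hx hy hne
  have := congrFun hxy ⟨j, by omega⟩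
  exact absurd (hκ _ _ this) (not_le.mpr hd)

lemma card_le_sepCount {f : M → M} {K : Set M} {n : ℕ} {ε : ℝ} (hε : 0 < ε) {Q : Finset M}
    (hQK : ↑Q ⊆ K) (hQ : IsDynSep f n ε ↑Q) : Q.card ≤ sepCount f K n ε :=
  le_csSup (sep_card_bdd f K n hε) ⟨Q, hQK, hQ, rfl⟩

lemma exists_card_eq_sepCount (f : M → M) (K : Set M) (n : ℕ) {ε : ℝ} (hε : 0 < ε) :
    ∃ Q : Finset M, ↑Q ⊆ K ∧ IsDynSep f n ε ↑Q ∧ Q.card = sepCount f K n ε :=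
  Nat.sSup_mem (s := {k : ℕ | ∃ Q : Finset M, (Q : Set M) ⊆ K ∧ IsDynSep f n ε ↑Q ∧ Q.card = k})
    ⟨0, ∅, by simp, by simp [IsDynSep], rfl⟩ (sep_card_bdd f K n hε)

/-- A separated set of maximal cardinality spans. -/
lemma exists_spanning (f : M → M) (K : Set M) (n : ℕ) {ε : ℝ} (hε : 0 < ε) :
    ∃ Q : Finset M, ↑Q ⊆ K ∧ Q.card = sepCount f K n ε ∧
      ∀ z ∈ K, ∃ x ∈ Q, ∀ j ≤ n, dist (f^[j] z) (f^[j] x) ≤ ε := by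
  classical
  obtain ⟨Q, hQK, hQ, hc⟩ := exists_card_eq_sepCount f K n hε
  refine ⟨Q, hQK, hc, fun z hz => ?_⟩
  by_contra! hcon
  have hzQ : z ∉ Q := fun h => by
    obtain ⟨j, -, hj⟩ := hcon z h
    rw [dist_self] at hj; linarith
  have h1 : IsDynSep f n ε ↑(insert z Q) := by
    unfold IsDynSep
    rw [Finset.coe_insert]
    refine hQ.insert (fun y hy _ => ⟨?_, ?_⟩)
    · exact hcon y hy
    · obtain ⟨j, hj, h⟩ := hcon y hy
      exact ⟨j, hj, by rwa [dist_comm]⟩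
  have h2 : ((insert z Q : Finset M) : Set M) ⊆ K := by
    rw [Finset.coe_insert]; exact insert_subset hz hQK
  have := card_le_sepCount hε h2 h1
  rw [Finset.card_insert_of_notMem hzQ] at this
  omega

end Sep

section Entropy

variable {M : Type*} [MetricSpace M]

lemma topEntropyOn_le_of {f : M → M} {K : Set M} {c : ℝ}
    (h : ∀ ε > 0, ∀ c' > c, ∀ᶠ n : ℕ in atTop, Real.log (sepCount f K n ε) ≤ c' * n) :
    topEntropyOn f K ≤ c := by
  refine iSup₂_le fun ε hε => ?_
  refine EReal.le_of_forall_lt_iff_le.mp fun z hz => ?_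
  rw [EReal.coe_lt_coe_iff] at hz
  refine limsup_le_of_le (by isBoundedDefault) ?_
  filter_upwards [h ε hε z hz, eventually_gt_atTop 0] with n hn h0
  rw [EReal.coe_le_coe_iff, div_le_iff₀ (by positivity)]
  exact hn

lemma le_topEntropyOn_of {f : M → M} {K : Set M} {c : ℝ} {ε : ℝ} (hε : 0 < ε)
    (h : ∀ c' < c, ∃ᶠ n : ℕ in atTop, c' * n ≤ Real.log (sepCount f K n ε)) :
    (c : EReal) ≤ topEntropyOn f K := by
  refine le_trans ?_ (le_iSup₂ (f := fun (ε : ℝ) (_ : 0 < ε) =>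
    Filter.atTop.limsup fun n : ℕ => ((Real.log (sepCount f K n ε) / n : ℝ) : EReal)) ε hε)
  refine EReal.ge_of_forall_gt_iff_ge.mp fun z hz => ?_
  rw [EReal.coe_lt_coe_iff] at hz
  refine le_limsup_of_frequently_le ?_ (by isBoundedDefault)
  refine ((h z hz).and_eventually (eventually_gt_atTop 0)).mono ?_
  rintro n ⟨hn, h0⟩
  rw [EReal.coe_le_coe_iff, le_div_iff₀ (by positivity)]
  exact hn

lemma exists_of_lt_topEntropyOn {f : M → M} {K : Set M} {c : ℝ}
    (h : (c : EReal) < topEntropyOn f K) :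
    ∃ ε > 0, ∃ c' > c, ∃ᶠ n : ℕ in atTop, c' * n ≤ Real.log (sepCount f K n ε) := by
  unfold topEntropyOn at h
  simp only [lt_iSup_iff] at h
  obtain ⟨ε, hε, h⟩ := h
  obtain ⟨c', hc, hc'⟩ := EReal.lt_iff_exists_real_btwn.mp h
  refine ⟨ε, hε, c', by exact_mod_cast hc, ?_⟩
  refine ((frequently_lt_of_lt_limsup (by isBoundedDefault) hc').and_eventually
    (eventually_gt_atTop 0)).mono ?_
  rintro n ⟨hn, h0⟩
  rw [EReal.coe_lt_coe_iff, lt_div_iff₀ (by positivity)] at hn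
  exact hn.le

lemma eventually_of_topEntropyOn_le {f : M → M} {K : Set M} {c : ℝ}
    (h : topEntropyOn f K ≤ c) {ε : ℝ} (hε : 0 < ε) {c' : ℝ} (hc : c < c') :
    ∀ᶠ n : ℕ in atTop, Real.log (sepCount f K n ε) ≤ c' * n := by
  have h1 : Filter.atTop.limsup (fun n : ℕ => ((Real.log (sepCount f K n ε) / n : ℝ) : EReal))
      < c' := by
    refine lt_of_le_of_lt ?_ (EReal.coe_lt_coe_iff.mpr hc)
    refine le_trans ?_ h
    exact le_iSup₂ (f := fun (ε : ℝ) (_ : 0 < ε) =>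
      Filter.atTop.limsup fun n : ℕ => ((Real.log (sepCount f K n ε) / n : ℝ) : EReal)) ε hε
  filter_upwards [eventually_lt_of_limsup_lt h1 (by isBoundedDefault),
    eventually_gt_atTop 0] with n hn h0
  rw [EReal.coe_lt_coe_iff, div_lt_iff₀ (by positivity)] at hn
  exact hn.le

end Entropy

/-! ### Shannon entropy of finite-valued maps -/

/-- Gibbs' inequality for a probability vector `p` and a subprobability vector `q`. -/
lemma gibbs {ι : Type*} [Fintype ι] (p q : ι → ℝ) (hp : ∀ i, 0 ≤ p i) (hp1 : ∑ i, p i = 1)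
    (hq : ∀ i, 0 ≤ q i) (hq1 : ∑ i, q i ≤ 1) (hpq : ∀ i, q i = 0 → p i = 0) :
    ∑ i, Real.negMulLog (p i) ≤ ∑ i, p i * (-Real.log (q i)) := by
  have key : ∀ i, Real.negMulLog (p i) ≤ p i * (-Real.log (q i)) + (q i - p i) := by
    intro i
    rcases (hp i).eq_or_lt with h | h
    · simp [← h, hq i]
    · have hq' : 0 < q i := lt_of_le_of_ne (hq i) fun h' => by
        have := hpq i h'.symm; linarith
      have := Real.log_le_sub_one_of_pos (div_pos hq' h)
      rw [Real.log_div hq'.ne' h.ne'] at this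
      have h2 := mul_le_mul_of_nonneg_left this h.le
      have h3 : p i * (q i / p i - 1) = q i - p i := by field_simp
      rw [h3] at h2
      unfold Real.negMulLog
      nlinarith
  calc ∑ i, Real.negMulLog (p i) ≤ ∑ i, (p i * (-Real.log (q i)) + (q i - p i)) :=
        Finset.sum_le_sum fun i _ => key i
    _ = ∑ i, p i * (-Real.log (q i)) + (∑ i, q i - ∑ i, p i) := by
        rw [Finset.sum_add_distrib, Finset.sum_sub_distrib]
    _ ≤ _ := by rw [hp1]; linarith

section Ent

variable {α : Type*} [MeasurableSpace α] {ι κ η : Type*} [Fintype ι] [Fintype κ] [Fintype η]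

/-- Measurability of a map into a finite set, in terms of its fibres. -/
def FM (p : α → ι) : Prop := ∀ i, MeasurableSet (p ⁻¹' {i})

/-- Shannon entropy of the distribution of a finite-valued map. -/
noncomputable def Hent (μ : Measure α) (p : α → ι) : ℝ :=
  ∑ i, Real.negMulLog (μ.real (p ⁻¹' {i}))

lemma FM.pair {p : α → ι} {q : α → κ} (hp : FM p) (hq : FM q) : FM (fun x => (p x, q x)) := by
  rintro ⟨i, j⟩
  have : (fun x => (p x, q x)) ⁻¹' {(i, j)} = p ⁻¹' {i} ∩ q ⁻¹' {j} := by
    ext x; simp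
  rw [this]
  exact (hp i).inter (hq j)

lemma FM.pi {β : Type*} [Fintype β] [DecidableEq β] {q : β → α → κ} (hq : ∀ b, FM (q b)) :
    FM (fun x b => q b x) := by
  intro a
  have : (fun x b => q b x) ⁻¹' {a} = ⋂ b, q b ⁻¹' {a b} := by
    ext x; simp [funext_iff]
  rw [this]
  exact MeasurableSet.iInter fun b => hq b _

lemma FM.comp {p : α → ι} (hp : FM p) {β : Type*} [MeasurableSpace β] {g : β → α}
    (hg : Measurable g) : FM (p ∘ g) := fun i => hg (hp i)

variable (μ : Measure α) [IsProbabilityMeasure μ]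

lemma sum_measureReal_inter_fiber {p : α → ι} (hp : FM p) {A : Set α} (hA : MeasurableSet A) :
    ∑ i, μ.real (A ∩ p ⁻¹' {i}) = μ.real A := by
  rw [← measureReal_iUnion_fintype]
  · congr 1
    ext x; simp
  · intro i j hij
    refine Set.disjoint_left.mpr ?_
    rintro x ⟨_, hx⟩ ⟨_, hy⟩
    exact hij (hx.symm.trans hy)
  · exact fun i => hA.inter (hp i)

lemma sum_measureReal_fiber {p : α → ι} (hp : FM p) : ∑ i, μ.real (p ⁻¹' {i}) = 1 := by
  have := sum_measureReal_inter_fiber μ hp MeasurableSet.univ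
  simpa using this

lemma Hent_nonneg (p : α → ι) : 0 ≤ Hent μ p :=
  Finset.sum_nonneg fun _ _ => Real.negMulLog_nonneg measureReal_nonneg measureReal_le_one

lemma Hent_le_log_card {p : α → ι} (hp : FM p) : Hent μ p ≤ Real.log (Fintype.card ι) := by
  have hne : Nonempty ι := by
    by_contra h
    rw [not_nonempty_iff] at h
    have := sum_measureReal_fiber μ hp
    simp at this
  have hc : (0 : ℝ) < Fintype.card ι := by exact_mod_cast Fintype.card_pos
  refine (gibbs (fun i => μ.real (p ⁻¹' {i})) (fun _ => (Fintype.card ι : ℝ)⁻¹)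
    (fun i => measureReal_nonneg) (sum_measureReal_fiber μ hp) (fun _ => by positivity)
    (by simp [hc.ne']) (fun i h => absurd h (by positivity))).trans (le_of_eq ?_)
  rw [← Finset.sum_mul, sum_measureReal_fiber μ hp, Real.log_inv, one_mul, neg_neg]

lemma Hent_pair_le {p : α → ι} {q : α → κ} (hp : FM p) (hq : FM q) :
    Hent μ (fun x => (p x, q x)) ≤ Hent μ p + Hent μ q := by
  set J : ι → κ → ℝ := fun i j => μ.real ((fun x => (p x, q x)) ⁻¹' {(i, j)}) with hJ
  have hJe : ∀ i j, (fun x => (p x, q x)) ⁻¹' {(i, j)} = p ⁻¹' {i} ∩ q ⁻¹' {j} := by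
    intro i j; ext x; simp
  have hJ1 : ∀ i, ∑ j, J i j = μ.real (p ⁻¹' {i}) := fun i => by
    simp only [hJ, hJe]
    exact sum_measureReal_inter_fiber μ hq (hp i)
  have hJ2 : ∀ j, ∑ i, J i j = μ.real (q ⁻¹' {j}) := fun j => by
    simp only [hJ, hJe, inter_comm (p ⁻¹' _)]
    exact sum_measureReal_inter_fiber μ hp (hq j)
  have hJp : ∀ i j, J i j ≤ μ.real (p ⁻¹' {i}) := fun i j => by
    simp only [hJ, hJe]; exact measureReal_mono inter_subset_left
  have hJq : ∀ i j, J i j ≤ μ.real (q ⁻¹' {j}) := fun i j => by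
    simp only [hJ, hJe]; exact measureReal_mono inter_subset_right
  have hJ0 : ∀ i j, 0 ≤ J i j := fun i j => measureReal_nonneg
  have h := gibbs (fun x : ι × κ => J x.1 x.2)
    (fun x => μ.real (p ⁻¹' {x.1}) * μ.real (q ⁻¹' {x.2})) (fun x => hJ0 _ _)
    (sum_measureReal_fiber μ (hp.pair hq)) (fun x => by positivity)
    (by
      rw [Fintype.sum_prod_type]
      simp only [← Finset.mul_sum, sum_measureReal_fiber μ hq, mul_one, sum_measureReal_fiber μ hp]
      exact le_rfl)
    (fun x h => by
      rcases mul_eq_zero.mp h with h | h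
      · exact le_antisymm (h ▸ hJp _ _) (hJ0 _ _)
      · exact le_antisymm (h ▸ hJq _ _) (hJ0 _ _))
  refine h.trans (le_of_eq ?_)
  have h2 : ∀ i j, J i j * -Real.log (μ.real (p ⁻¹' {i}) * μ.real (q ⁻¹' {j})) =
      J i j * -Real.log (μ.real (p ⁻¹' {i})) + J i j * -Real.log (μ.real (q ⁻¹' {j})) := by
    intro i j
    rcases eq_or_ne (J i j) 0 with h0 | h0
    · simp [h0]
    · have hpos : 0 < J i j := lt_of_le_of_ne (hJ0 i j) (Ne.symm h0)
      rw [Real.log_mul (by linarith [hJp i j]) (by linarith [hJq i j])]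
      ring
  simp only [h2]
  rw [Finset.sum_add_distrib]
  congr 1
  · rw [Fintype.sum_prod_type]
    simp only [← Finset.sum_mul, hJ1, Hent, Real.negMulLog]
    exact Finset.sum_congr rfl fun i _ => by ring
  · rw [Fintype.sum_prod_type_right]
    simp only [← Finset.sum_mul, hJ2, Hent, Real.negMulLog]
    exact Finset.sum_congr rfl fun i _ => by ring

/-- The entropy of a map is at most that of any map which determines it. -/
lemma Hent_le_of_det {p : α → ι} {q : α → κ} (hp : FM p) (hq : FM q)
    (h : ∀ x y, q x = q y → p x = p y) : Hent μ p ≤ Hent μ q := by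
  classical
  set J : ι → κ → ℝ := fun i j => μ.real (p ⁻¹' {i} ∩ q ⁻¹' {j}) with hJ
  have hJ1 : ∀ i, ∑ j, J i j = μ.real (p ⁻¹' {i}) := fun i =>
    sum_measureReal_inter_fiber μ hq (hp i)
  have hJp : ∀ i j, J i j ≤ μ.real (p ⁻¹' {i}) := fun i j => measureReal_mono inter_subset_left
  have hJ0 : ∀ i j, 0 ≤ J i j := fun i j => measureReal_nonneg
  have h1 : Hent μ p ≤ ∑ i, ∑ j, Real.negMulLog (J i j) := by
    refine Finset.sum_le_sum fun i _ => ?_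
    have : Real.negMulLog (μ.real (p ⁻¹' {i})) =
        ∑ j, J i j * -Real.log (μ.real (p ⁻¹' {i})) := by
      rw [← Finset.sum_mul, hJ1, Real.negMulLog]; ring
    rw [this]
    refine Finset.sum_le_sum fun j _ => ?_
    rcases eq_or_ne (J i j) 0 with h0 | h0
    · simp [h0]
    · have hpos : 0 < J i j := lt_of_le_of_ne (hJ0 i j) (Ne.symm h0)
      have := Real.log_le_log hpos (hJp i j)
      unfold Real.negMulLog
      nlinarith
  refine h1.trans ?_
  rw [Finset.sum_comm]
  refine Finset.sum_le_sum fun j _ => ?_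
  rcases (q ⁻¹' {j}).eq_empty_or_nonempty with he | ⟨x, hx⟩
  · simp [hJ, he]
  · rw [Finset.sum_eq_single (p x)]
    · have : p ⁻¹' {p x} ∩ q ⁻¹' {j} = q ⁻¹' {j} := by
        refine inter_eq_right.mpr fun y hy => ?_
        exact h y x (hy.trans hx.symm)
      simp [hJ, this]
    · intro i _ hi
      have : p ⁻¹' {i} ∩ q ⁻¹' {j} = ∅ := by
        refine Set.eq_empty_of_forall_notMem ?_
        rintro y ⟨hy1, hy2⟩
        exact hi (hy1.symm.trans (h y x (hy2.trans hx.symm)))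
      simp [hJ, this]
    · simp

lemma Hent_family_le {β : Type*} [DecidableEq β] (q : β → α → κ) (hq : ∀ b, FM (q b))
    (B : Finset β) : Hent μ (fun x (b : B) => q b x) ≤ ∑ b ∈ B, Hent μ (q b) := by
  classical
  induction B using Finset.induction_on with
  | empty =>
    have hu : FM (fun _ : α => ()) := fun i => by simp
    refine (Hent_le_of_det μ (FM.pi (q := fun (b : (∅ : Finset β)) => q b) fun b => hq b) hu fun x y _ => ?_).trans ?_
    · funext b
      exact absurd b.2 (Finset.notMem_empty _)
    · simp [Hent]
  | insert b0 B hb ih =>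
    have h1 : FM (fun x (b : B) => q b x) := FM.pi fun b => hq b
    rw [Finset.sum_insert hb]
    have h3 := Hent_le_of_det μ (p := fun x (b : (insert b0 B : Finset β)) => q b x)
      (FM.pi fun b => hq b) ((hq b0).pair h1) (fun x y hxy => funext fun b => by
      simp only [Prod.mk.injEq] at hxy
      rcases Finset.mem_insert.mp b.2 with h | hb'
      · simp only [h]; exact hxy.1
      · exact congrFun hxy.2 ⟨b, hb'⟩)
    have h4 := Hent_pair_le μ (hq b0) h1
    linarith

/-- Subadditivity of entropy along a finite family of maps. -/
lemma Hent_le_sum {β : Type*} [DecidableEq β] (q : β → α → κ) (hq : ∀ b, FM (q b)) (B : Finset β)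
    {p : α → ι} (hp : FM p) (h : ∀ x y, (∀ b ∈ B, q b x = q b y) → p x = p y) :
    Hent μ p ≤ ∑ b ∈ B, Hent μ (q b) :=
  (Hent_le_of_det μ hp (FM.pi (q := fun (b : B) => q b) fun b => hq b) fun x y hxy =>
    h x y fun b hb => congrFun hxy ⟨b, hb⟩).trans (Hent_family_le μ q hq B)

end Ent

/-! ### Partitions as finite-valued maps -/

section Part

variable {α : Type*} [MeasurableSpace α]

/-- The cell map of a finite measurable partition. -/
lemma exists_cell {P : Finset (Set α)} (hP : IsMeasPartition P) :
    ∃ pc : α → {p // p ∈ P}, (∀ i, pc ⁻¹' {i} = (i : Set α)) ∧ FM pc := by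
  have h : ∀ x : α, ∃ i : {p // p ∈ P}, x ∈ (i : Set α) := by
    intro x
    have : x ∈ ⋃₀ (↑P : Set (Set α)) := by rw [hP.2.1]; trivial
    obtain ⟨p, hp, hx⟩ := this
    exact ⟨⟨p, hp⟩, hx⟩
  choose pc hpc using h
  have h1 : ∀ i, pc ⁻¹' {i} = (i : Set α) := by
    intro i
    ext x
    constructor
    · intro hx
      have : pc x = i := hx
      rw [← this]; exact hpc x
    · intro hx
      by_contra hne
      have hne' : (pc x : Set α) ≠ i := fun h => hne (Subtype.ext h)
      exact Set.disjoint_left.mp (hP.2.2 (pc x).2 i.2 hne') (hpc x) hx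
  exact ⟨pc, h1, fun i => by rw [h1]; exact hP.1 _ i.2⟩

/-- The itinerary of length `n` of a point through the cells of `pc`. -/
def name {ι : Type*} (f : α → α) (pc : α → ι) (n : ℕ) (x : α) : Fin n → ι :=
  fun i => pc (f^[(i : ℕ)] x)

lemma FM_name {ι : Type*} [Fintype ι] {f : α → α} (hf : Measurable f) {pc : α → ι} (hpc : FM pc)
    (n : ℕ) : FM (name f pc n) :=
  FM.pi (q := fun (i : Fin n) x => pc (f^[(i : ℕ)] x)) fun i => hpc.comp (hf.iterate i)

lemma refinedInfo_eq (f : α → α) (μ : Measure α) {P : Finset (Set α)}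
    {pc : α → {p // p ∈ P}} (hpc : ∀ i, pc ⁻¹' {i} = (i : Set α)) (n : ℕ) :
    refinedInfo f μ P n = Hent μ (name f pc n) := by
  unfold refinedInfo Hent
  refine Finset.sum_congr rfl fun a _ => ?_
  have : name f pc n ⁻¹' {a} = ⋂ i : Fin n, f^[(i : ℕ)] ⁻¹' ((a i : Set α)) := by
    ext x
    simp only [mem_preimage, mem_singleton_iff, mem_iInter, ← hpc, funext_iff, name]
  rw [this]
  simp [negMulLog, Real.negMulLog, Measure.real]

lemma refinedInfo_bounds {f : α → α} (hf : Measurable f) (μ : Measure α) [IsProbabilityMeasure μ]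
    {P : Finset (Set α)} (hP : IsMeasPartition P) (n : ℕ) :
    0 ≤ refinedInfo f μ P n / n ∧ refinedInfo f μ P n / n ≤ Real.log P.card := by
  obtain ⟨pc, hpc, hm⟩ := exists_cell hP
  rw [refinedInfo_eq f μ hpc]
  have h1 := Hent_le_log_card μ (FM_name hf hm n)
  refine ⟨div_nonneg (Hent_nonneg _ _) (by positivity), ?_⟩
  have h2 : Real.log (Fintype.card (Fin n → {p // p ∈ P})) = n * Real.log P.card := by
    simp
  rw [h2] at h1
  have h3 : 0 ≤ Real.log (P.card : ℝ) := Real.log_natCast_nonneg _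
  rcases Nat.eq_zero_or_pos n with rfl | hn
  · simpa using h3
  · rw [div_le_iff₀ (by positivity)]
    linarith

end Part

/-! ### Measure entropy is bounded by topological entropy on a carrier -/

lemma integral_comp_FM {α ι : Type*} [MeasurableSpace α] [Fintype ι] (μ : Measure α)
    [IsProbabilityMeasure μ] {p : α → ι} (hp : FM p) (g : ι → ℝ) :
    Integrable (fun x => g (p x)) μ ∧ ∫ x, g (p x) ∂μ = ∑ i, μ.real (p ⁻¹' {i}) * g i := by
  classical
  have h : (fun x => g (p x)) = fun x => ∑ i, (p ⁻¹' {i}).indicator (fun _ => g i) x := by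
    funext x
    rw [Finset.sum_eq_single (p x)]
    · simp
    · intro i _ hi
      exact Set.indicator_of_notMem (fun h => hi h.symm) _
    · simp
  have hi : ∀ i, Integrable ((p ⁻¹' {i}).indicator (fun _ => g i)) μ := fun i =>
    (integrable_const _).indicator (hp i)
  refine ⟨by rw [h]; exact integrable_finsetSum _ fun i _ => hi i, ?_⟩
  rw [h, integral_finsetSum _ fun i _ => hi i]
  refine Finset.sum_congr rfl fun i _ => ?_
  rw [integral_indicator_const _ (hp i), smul_eq_mul]

/-- A finite measurable partition is approximated from inside by compact pieces at a positive
distance from each other. -/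
lemma exists_compact_pieces {Y ι : Type*} [MetricSpace Y] [CompactSpace Y] [MeasurableSpace Y]
    [BorelSpace Y] [Fintype ι] (μ : Measure Y) [IsProbabilityMeasure μ] {p : Y → ι} (hp : FM p)
    {θ : ℝ} (hθ : 0 < θ) :
    ∃ B : ι → Set Y, (∀ i, IsCompact (B i)) ∧ (∀ i, B i ⊆ p ⁻¹' {i}) ∧
      μ.real (⋃ i, B i)ᶜ ≤ θ ∧ ∃ ε > 0, ∀ i j, ∀ y ∈ B i, ∀ y' ∈ B j, ∀ z,
        dist z y ≤ ε → dist z y' ≤ ε → i = j := by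
  classical
  have hne : Nonempty ι := by
    by_contra h
    rw [not_nonempty_iff] at h
    have := sum_measureReal_fiber μ hp
    simp at this
  have hc : (0 : ℝ) < Fintype.card ι := by exact_mod_cast Fintype.card_pos
  have h1 : ∀ i, ∃ K ⊆ p ⁻¹' {i}, IsCompact K ∧
      μ (p ⁻¹' {i} \ K) < ENNReal.ofReal (θ / Fintype.card ι) := fun i =>
    (hp i).exists_isCompact_sdiff_lt (measure_ne_top _ _) (by
      simpa using div_pos hθ hc)
  choose B hB hBc hBμ using h1
  refine ⟨B, hBc, hB, ?_, ?_⟩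
  · have hsub : (⋃ i, B i)ᶜ ⊆ ⋃ i, (p ⁻¹' {i} \ B i) := by
      intro y hy
      simp only [mem_compl_iff, mem_iUnion, not_exists] at hy
      exact mem_iUnion.mpr ⟨p y, rfl, hy _⟩
    refine (measureReal_mono hsub).trans ((measureReal_iUnion_fintype_le _).trans ?_)
    have : ∀ i ∈ (Finset.univ : Finset ι), μ.real (p ⁻¹' {i} \ B i) ≤ θ / Fintype.card ι := by
      intro i _
      exact ENNReal.toReal_le_of_le_ofReal (by positivity) (hBμ i).le
    refine (Finset.sum_le_sum this).trans ?_
    simp [mul_div_cancel₀ _ hc.ne']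
  · have hev : ∀ᶠ ε : ℝ in 𝓝[>] 0, ∀ i j, i ≠ j →
        Disjoint (Metric.thickening ε (B i)) (Metric.thickening ε (B j)) := by
      rw [eventually_all]; intro i
      rw [eventually_all]; intro j
      by_cases hij : i = j
      · simp [hij]
      have hd : Disjoint (B i) (B j) := by
        refine Set.disjoint_left.mpr fun y hy hy' => hij ?_
        exact (hB i hy).symm.trans (hB j hy')
      obtain ⟨δ, hδ, hdis⟩ := hd.exists_thickenings (hBc i) (hBc j).isClosed
      filter_upwards [Ioo_mem_nhdsGT hδ] with ε hε _
      exact hdis.mono (Metric.thickening_mono hε.2.le _) (Metric.thickening_mono hε.2.le _)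
    obtain ⟨ε, hε, hpos⟩ := (hev.and self_mem_nhdsWithin).exists
    have hpos : 0 < ε := hpos
    refine ⟨ε / 2, by positivity, fun i j y hy y' hy' z hz hz' => ?_⟩
    by_contra hij
    refine Set.disjoint_left.mp (hε i j hij) (?_ : z ∈ _) ?_
    · exact Metric.mem_thickening_iff.mpr ⟨y, hy, by linarith⟩
    · exact Metric.mem_thickening_iff.mpr ⟨y', hy', by linarith⟩

/-- Gibbs' inequality against the mixture, over a spanning set, of randomly perturbed
itineraries. -/
lemma Hent_name_le {Y ι : Type*} [MetricSpace Y] [CompactSpace Y] [MeasurableSpace Y]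
    [BorelSpace Y] [Fintype ι] {T : Y → Y} (hT : Continuous T)
    (μ : Measure Y) [IsProbabilityMeasure μ] (hμ : MeasurePreserving T μ μ) {Γ : Set Y}
    (hΓ : μ Γᶜ = 0) {p : Y → ι} (hp : FM p) {B : ι → Set Y} (hBc : ∀ i, IsCompact (B i))
    (hB : ∀ i, B i ⊆ p ⁻¹' {i}) {ε : ℝ} (hε : 0 < ε)
    (hsep : ∀ i j, ∀ y ∈ B i, ∀ y' ∈ B j, ∀ z, dist z y ≤ ε → dist z y' ≤ ε → i = j)
    {β : ℝ} (hβ : 0 < β) (hβ1 : β < 1) (n : ℕ) :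
    Hent μ (name T p n) ≤ Real.log (sepCount T Γ n ε) +
      n * (-Real.log (1 - β) + Real.log (Fintype.card ι / β) * μ.real (⋃ i, B i)ᶜ) := by
  classical
  have hYne : Γ.Nonempty := by
    by_contra h
    rw [Set.not_nonempty_iff_eq_empty] at h
    simp [h] at hΓ
  obtain ⟨y0, hy0⟩ := hYne
  have hne : Nonempty ι := ⟨p y0⟩
  have hk : (0 : ℝ) < Fintype.card ι := by exact_mod_cast Fintype.card_pos
  have hk1 : (1 : ℝ) ≤ Fintype.card ι := by exact_mod_cast Fintype.card_pos
  set k : ℝ := (Fintype.card ι : ℝ) with hkdef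
  obtain ⟨E, hEΓ, hEc, hE⟩ := exists_spanning T Γ n hε
  have hEne : E.Nonempty := let ⟨x, hx, _⟩ := hE y0 hy0; ⟨x, hx⟩
  have hEpos : (0 : ℝ) < E.card := by exact_mod_cast hEne.card_pos
  set cc : Y → ι := fun y => if h : ∃ i, ∃ b ∈ B i, dist y b ≤ ε then h.choose else p y0
  have hcc : ∀ y i, ∀ b ∈ B i, dist y b ≤ ε → cc y = i := by
    intro y i b hb hd
    have h : ∃ i, ∃ b ∈ B i, dist y b ≤ ε := ⟨i, b, hb, hd⟩
    have : cc y = h.choose := dif_pos h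
    rw [this]
    obtain ⟨b', hb', hd'⟩ := h.choose_spec
    exact hsep _ _ b' hb' b hb y hd' hd
  set κ : ι → ι → ℝ := fun i c => (if i = c then 1 - β else 0) + β / k with hκ
  have hκ0 : ∀ i c, β / k ≤ κ i c := fun i c => by
    simp only [hκ]; split_ifs <;> linarith
  have hβk : 0 < β / k := by positivity
  have hκpos : ∀ i c, 0 < κ i c := fun i c => hβk.trans_le (hκ0 i c)
  have hκ1 : ∀ c, ∑ i, κ i c = 1 := fun c => by
    simp only [hκ, Finset.sum_add_distrib, Finset.sum_ite_eq', Finset.mem_univ, if_true]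
    simp [← hkdef, mul_div_cancel₀ _ hk.ne']
  set q : (Fin n → ι) → ℝ := fun a =>
    (E.card : ℝ)⁻¹ * ∑ x ∈ E, ∏ j : Fin n, κ (a j) (cc (T^[(j : ℕ)] x)) with hq
  have hprodpos : ∀ (a : Fin n → ι) x, 0 < ∏ j : Fin n, κ (a j) (cc (T^[(j : ℕ)] x)) :=
    fun a x => Finset.prod_pos fun j _ => hκpos _ _
  have hqpos : ∀ a, 0 < q a := fun a =>
    mul_pos (by positivity) (Finset.sum_pos (fun x _ => hprodpos a x) hEne)
  have hqsum : ∑ a, q a = 1 := by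
    simp only [hq]
    rw [← Finset.mul_sum, Finset.sum_comm]
    have : ∀ x ∈ E, ∑ a : Fin n → ι, ∏ j : Fin n, κ (a j) (cc (T^[(j : ℕ)] x)) = 1 := by
      intro x _
      rw [← Fintype.prod_sum (fun (j : Fin n) i => κ i (cc (T^[(j : ℕ)] x)))]
      simp [hκ1]
    rw [Finset.sum_congr rfl this]
    simp [hEpos.ne']
  set A : Set Y := (⋃ i, B i)ᶜ with hA
  have hAm : MeasurableSet A :=
    (MeasurableSet.iUnion fun i => (hBc i).measurableSet).compl
  set L : ℝ := Real.log (k / β) with hL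
  have hL0 : 0 ≤ L := Real.log_nonneg (by rw [le_div_iff₀ hβ]; linarith)
  have hnames := FM_name hT.measurable hp n
  have hg := gibbs (fun a => μ.real (name T p n ⁻¹' {a})) q (fun _ => measureReal_nonneg)
    (sum_measureReal_fiber μ hnames) (fun a => (hqpos a).le) hqsum.le
    (fun a h => absurd h (hqpos a).ne')
  refine hg.trans ?_
  obtain ⟨hgint, hI⟩ := integral_comp_FM μ hnames (fun a => -Real.log (q a))
  rw [← hI]
  set F : Y → ℝ := fun z => (Real.log E.card + n * (-Real.log (1 - β))) +
    ∑ j ∈ Finset.range n, A.indicator (fun _ => L) (T^[j] z) with hF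
  have hindint : Integrable (A.indicator (fun _ => L)) μ := (integrable_const _).indicator hAm
  have hpres : ∀ j, MeasurePreserving (T^[j]) μ μ := fun j => hμ.iterate j
  have hi1 : ∀ j, Integrable (fun z => A.indicator (fun _ => L) (T^[j] z)) μ := fun j =>
    (hpres j).integrable_comp_of_integrable hindint
  have hFint : Integrable F μ := (integrable_const _).add
    (integrable_finsetSum _ fun j _ => hi1 j)
  have hFI : ∫ z, F z ∂μ = Real.log E.card + (n * (-Real.log (1 - β)) + n * (μ.real A * L)) := by
    simp only [hF]
    rw [integral_add (integrable_const _) (integrable_finsetSum _ fun j _ => hi1 j),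
      integral_finsetSum _ fun j _ => hi1 j]
    have h2 : ∀ j ∈ Finset.range n, ∫ z, A.indicator (fun _ => L) (T^[j] z) ∂μ
        = μ.real A * L := by
      intro j _
      have h3 := (hpres j).map_eq
      have h4 : ∫ z, A.indicator (fun _ => L) (T^[j] z) ∂μ
          = ∫ z, A.indicator (fun _ => L) z ∂(μ.map (T^[j])) := by
        rw [integral_map (hpres j).measurable.aemeasurable]
        exact ((stronglyMeasurable_const.indicator hAm)).aestronglyMeasurable
      rw [h4, h3, integral_indicator_const _ hAm, smul_eq_mul]
    rw [Finset.sum_congr rfl h2]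
    simp [add_assoc]
  have hle : ∀ᵐ z ∂μ, -Real.log (q (name T p n z)) ≤ F z := by
    have hae : ∀ᵐ z ∂μ, z ∈ Γ := by
      rw [ae_iff]; exact hΓ
    filter_upwards [hae] with z hz
    obtain ⟨x, hx, hxz⟩ := hE z hz
    have h1 : ∀ j : Fin n, Real.log (1 - β) - A.indicator (fun _ => L) (T^[(j : ℕ)] z) ≤
        Real.log (κ (name T p n z j) (cc (T^[(j : ℕ)] x))) := by
      intro j
      by_cases hj : T^[(j : ℕ)] z ∈ A
      · rw [Set.indicator_of_mem hj]
        have h2 := Real.log_le_log hβk (hκ0 (name T p n z j) (cc (T^[(j : ℕ)] x)))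
        have h3 : L = - Real.log (β / k) := by rw [hL, ← Real.log_inv, inv_div]
        have h4 : Real.log (1 - β) ≤ 0 := Real.log_nonpos (by linarith) (by linarith)
        linarith
      · rw [Set.indicator_of_notMem hj, sub_zero]
        simp only [hA, mem_compl_iff, not_not, mem_iUnion] at hj
        obtain ⟨i, hi⟩ := hj
        have h5 : name T p n z j = i := hB i hi
        have h6 : cc (T^[(j : ℕ)] x) = i := hcc _ i _ hi (by
          rw [dist_comm]; exact hxz j j.2.le)
        rw [h5, h6]
        refine Real.log_le_log (by linarith) ?_
        simp only [hκ, if_true]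
        linarith
    have h7 : (E.card : ℝ)⁻¹ * ∏ j : Fin n, κ (name T p n z j) (cc (T^[(j : ℕ)] x)) ≤
        q (name T p n z) := by
      refine mul_le_mul_of_nonneg_left ?_ (by positivity)
      exact Finset.single_le_sum
        (f := fun x => ∏ j : Fin n, κ (name T p n z j) (cc (T^[(j : ℕ)] x)))
        (fun x _ => (hprodpos _ x).le) hx
    have h8 := Real.log_le_log (mul_pos (by positivity) (hprodpos _ x)) h7
    rw [Real.log_mul (by positivity) (hprodpos _ x).ne', Real.log_inv,
      Real.log_prod (fun j _ => (hκpos _ _).ne')] at h8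
    have h9 := Finset.sum_le_sum fun (j : Fin n) (_ : j ∈ Finset.univ) => h1 j
    rw [Finset.sum_sub_distrib, Finset.sum_const, Finset.card_univ, Fintype.card_fin,
      nsmul_eq_mul, Fin.sum_univ_eq_sum_range (fun j => A.indicator (fun _ => L) (T^[j] z))] at h9
    simp only [hF]
    linarith
  refine (integral_mono_ae hgint hFint hle).trans (le_of_eq ?_)
  rw [hFI, hEc]
  ring

/-- The easy half of the variational principle, relative to a set of full measure. -/
theorem measEntropy_le_of_topEntropyOn_le {Y : Type*} [MetricSpace Y] [CompactSpace Y]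
    [MeasurableSpace Y] [BorelSpace Y] {T : Y → Y} (hT : Continuous T)
    (μ : Measure Y) [IsProbabilityMeasure μ] (hμ : MeasurePreserving T μ μ) {Γ : Set Y}
    (hΓ : μ Γᶜ = 0) {c : ℝ} (h : topEntropyOn T Γ ≤ c) : measEntropy T μ ≤ c := by
  refine iSup₂_le fun P hP => ?_
  rw [EReal.coe_le_coe_iff]
  obtain ⟨pc, hpc, hm⟩ := exists_cell hP
  refine le_of_forall_pos_le_add fun τ hτ => ?_
  have hb := refinedInfo_bounds hT.measurable μ hP
  unfold partEntropy
  refine limsup_le_of_le (Filter.IsBoundedUnder.isCoboundedUnder_le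
    (isBoundedUnder_of ⟨0, fun n => (hb n).1⟩)) ?_
  have hlog : Tendsto (fun β : ℝ => -Real.log (1 - β)) (𝓝 0) (𝓝 0) := by
    have : ContinuousAt (fun β : ℝ => -Real.log (1 - β)) 0 := by
      refine (ContinuousAt.log (by fun_prop) (by norm_num)).neg
    have h2 := this.tendsto
    simpa using h2
  obtain ⟨β, hβlog, hβ⟩ := (((hlog.eventually (gt_mem_nhds (show (0 : ℝ) < τ / 3 by positivity))).filter_mono
    nhdsWithin_le_nhds).and (Ioo_mem_nhdsGT (show (0 : ℝ) < 1 by norm_num))).exists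
  set L : ℝ := Real.log (Fintype.card {p // p ∈ P} / β)
  obtain ⟨B, hBc, hB, hBθ, ε, hε, hsep⟩ := exists_compact_pieces μ hm
    (θ := τ / 3 / (|L| + 1)) (by positivity)
  have hLθ : L * μ.real (⋃ i, B i)ᶜ ≤ τ / 3 := by
    have h1 : L * μ.real (⋃ i, B i)ᶜ ≤ (|L| + 1) * (τ / 3 / (|L| + 1)) :=
      mul_le_mul (by linarith [le_abs_self L]) hBθ measureReal_nonneg (by positivity)
    rwa [mul_div_cancel₀ _ (by positivity)] at h1
  filter_upwards [eventually_of_topEntropyOn_le h hε (show c < c + τ / 3 by linarith),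
    eventually_gt_atTop 0] with n hn hn0
  have hn0' : (0 : ℝ) < n := by exact_mod_cast hn0
  rw [div_le_iff₀ hn0', refinedInfo_eq T μ hpc]
  refine (Hent_name_le hT μ hμ hΓ hm hBc hB hε hsep hβ.1 hβ.2 n).trans ?_
  have : (n : ℝ) * (-Real.log (1 - β) + L * μ.real (⋃ i, B i)ᶜ) ≤ n * (τ / 3 + τ / 3) :=
    mul_le_mul_of_nonneg_left (by linarith) hn0'.le
  linarith

/-! ### The Misiurewicz argument for uniformly convergent time averages -/

/-- The uniform measure on a finite nonempty set. -/
lemma exists_uniform {Y : Type*} [MeasurableSpace Y] [MeasurableSingletonClass Y]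
    {E : Finset Y} (hE : E.Nonempty) :
    ∃ ν : Measure Y, IsProbabilityMeasure ν ∧ (∀ᵐ x ∂ν, x ∈ E) ∧
      ∀ A, MeasurableSet A → (∀ x ∈ E, ∀ y ∈ E, x ∈ A → y ∈ A → x = y) →
        ν.real A ≤ (E.card : ℝ)⁻¹ := by
  classical
  have hc : (E.card : ℝ≥0∞) ≠ 0 := by exact_mod_cast hE.card_pos.ne'
  refine ⟨(E.card : ℝ≥0∞)⁻¹ • ∑ x ∈ E, Measure.dirac x, ⟨?_⟩, ?_, ?_⟩
  · simp [ENNReal.inv_mul_cancel hc]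
  · rw [ae_iff]
    simp only [Measure.smul_apply, Measure.finsetSum_apply, smul_eq_mul, mul_eq_zero]
    right
    refine Finset.sum_eq_zero fun x hx => ?_
    have : MeasurableSet {a | a ∉ E} := E.measurableSet.compl
    rw [Measure.dirac_apply' _ this]
    simp [hx]
  · intro A hA h
    have h1 : ∑ x ∈ E, (Measure.dirac x : Measure Y) A ≤ 1 := by
      by_cases hx : ∃ x ∈ E, x ∈ A
      · obtain ⟨x, hxE, hxA⟩ := hx
        rw [Finset.sum_eq_single_of_mem x hxE]
        · exact prob_le_one
        · intro y hy hyx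
          rw [Measure.dirac_apply' _ hA]
          exact Set.indicator_of_notMem (fun hyA => hyx (h y hy x hxE hyA hxA)) _
      · push Not at hx
        rw [Finset.sum_eq_zero]
        · exact zero_le_one
        · intro x hxE
          rw [Measure.dirac_apply' _ hA]
          exact Set.indicator_of_notMem (hx x hxE) _
    have h2 : ((E.card : ℝ≥0∞)⁻¹ • ∑ x ∈ E, Measure.dirac x) A ≤ (E.card : ℝ≥0∞)⁻¹ := by
      simp only [Measure.smul_apply, Measure.finsetSum_apply, smul_eq_mul]
      exact mul_le_of_le_one_right' h1
    have h3 := ENNReal.toReal_mono (ENNReal.inv_ne_top.mpr hc) h2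
    simpa [Measure.real] using h3

/-- Finite coding of a compact space by small pieces with negligible boundary. -/
lemma exists_null_boundary_code {Y : Type*} [MetricSpace Y] [CompactSpace Y] [MeasurableSpace Y]
    [BorelSpace Y] (μ : Measure Y) [IsProbabilityMeasure μ] {δ : ℝ} (hδ : 0 < δ) :
    ∃ (K : ℕ) (p : Y → (Fin K → Bool)), FM p ∧ (∀ x y, p x = p y → dist x y ≤ δ) ∧
      ∀ᵐ y ∂μ, ∀ᶠ y' in 𝓝 y, p y' = p y := by
  classical
  have h : ∀ x : Y, ∃ r ∈ Ioo 0 (δ / 2), μ (frontier (Metric.thickening r {x})) = 0 := fun x =>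
    exists_null_frontier_thickening μ {x} (by positivity)
  choose r hr hr0 using h
  obtain ⟨t, -, ht⟩ := isCompact_univ.elim_nhds_subcover
    (fun x : Y => Metric.thickening (r x) {x})
    (fun x _ => by
      rw [Metric.thickening_singleton]; exact Metric.ball_mem_nhds x (hr x).1)
  set U : Fin t.card → Set Y := fun i =>
    Metric.thickening (r (t.equivFin.symm i)) {((t.equivFin.symm i : t) : Y)}
  have hUo : ∀ i, IsOpen (U i) := fun i => Metric.isOpen_thickening
  refine ⟨t.card, fun y i => decide (y ∈ U i), ?_, ?_, ?_⟩
  · refine FM.pi (q := fun i y => decide (y ∈ U i)) fun i b => ?_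
    cases b
    · have : (fun y => decide (y ∈ U i)) ⁻¹' {false} = (U i)ᶜ := by ext y; simp
      rw [this]; exact (hUo i).measurableSet.compl
    · have : (fun y => decide (y ∈ U i)) ⁻¹' {true} = U i := by ext y; simp
      rw [this]; exact (hUo i).measurableSet
  · intro x y hxy
    have := ht (mem_univ x)
    simp only [mem_iUnion] at this
    obtain ⟨z, hz, hxz⟩ := this
    have hi : ∀ w, w ∈ U (t.equivFin ⟨z, hz⟩) ↔ dist w z < r z := by
      intro w; simp [U, Metric.thickening_singleton]
    have h1 := congrFun hxy (t.equivFin ⟨z, hz⟩)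
    simp only [decide_eq_decide, hi] at h1
    rw [Metric.thickening_singleton, Metric.mem_ball] at hxz
    have h2 := h1.mp hxz
    have h3 := (hr z).2
    have h4 := dist_triangle_right x y z
    linarith
  · have hae : ∀ᵐ y ∂μ, ∀ i, y ∉ frontier (U i) := by
      rw [ae_all_iff]
      intro i
      rw [ae_iff]
      simp only [not_not, ofPred_mem_eq]
      exact hr0 (t.equivFin.symm i)
    filter_upwards [hae] with y hy
    have h1 : ∀ i, ∀ᶠ y' in 𝓝 y, (y' ∈ U i ↔ y ∈ U i) := by
      intro i
      by_cases hyi : y ∈ U i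
      · filter_upwards [(hUo i).mem_nhds hyi] with y' hy'
        exact ⟨fun _ => hyi, fun _ => hy'⟩
      · have : y ∉ closure (U i) := fun hc => hy i ⟨hc, by rwa [(hUo i).interior_eq]⟩
        filter_upwards [isClosed_closure.isOpen_compl.mem_nhds this] with y' hy'
        exact ⟨fun h => absurd (subset_closure h) hy', fun h => absurd h hyi⟩
    filter_upwards [eventually_all.mpr h1] with y' hy'
    funext i
    simp [hy' i]

/-- Decomposing the times `0,…,n` into blocks of length `q`, in all `q` phases. -/
lemma block_inequality {Y ι : Type*} [MeasurableSpace Y] [Fintype ι] (ν : Measure Y)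
    [IsProbabilityMeasure ν] {E : Finset Y} (hE : E.Nonempty)
    (hν : ∀ A, MeasurableSet A → (∀ x ∈ E, ∀ y ∈ E, x ∈ A → y ∈ A → x = y) →
        ν.real A ≤ (E.card : ℝ)⁻¹)
    (p : ℕ → Y → ι) (hp : ∀ j, FM (p j)) (n q : ℕ) (hq : 0 < q)
    (hinj : ∀ x ∈ E, ∀ y ∈ E, (∀ j ≤ n, p j x = p j y) → x = y) :
    q * Real.log E.card ≤
      ∑ t ∈ Finset.range (n + 1), Hent ν (fun x (i : Fin q) => p (t + i) x) +
        q * (q * Real.log (Fintype.card ι)) := by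
  classical
  set b : ℕ → Y → (Fin q → ι) := fun t x i => p (t + i) x with hb
  have hbm : ∀ t, FM (b t) := fun t => FM.pi (q := fun (i : Fin q) => p (t + i)) fun i => hp _
  have hcpos : (0 : ℝ) < E.card := by exact_mod_cast hE.card_pos
  have hall : FM (fun x (j : Fin (n + 1)) => p j x) :=
    FM.pi (q := fun (j : Fin (n + 1)) => p j) fun j => hp _
  have hlow : Real.log E.card ≤ Hent ν (fun x (j : Fin (n + 1)) => p j x) := by
    have h1 : ∀ a, ν.real ((fun x (j : Fin (n + 1)) => p j x) ⁻¹' {a}) * Real.log E.card ≤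
        Real.negMulLog (ν.real ((fun x (j : Fin (n + 1)) => p j x) ⁻¹' {a})) := by
      intro a
      set m := ν.real ((fun x (j : Fin (n + 1)) => p j x) ⁻¹' {a})
      have hm : m ≤ (E.card : ℝ)⁻¹ := by
        refine hν _ (hall a) fun x hx y hy hxa hya => hinj x hx y hy fun j hj => ?_
        have := hxa.trans hya.symm
        exact congrFun this ⟨j, by omega⟩
      have hm0 : 0 ≤ m := measureReal_nonneg
      rcases hm0.eq_or_lt with h0 | h0
      · simp [← h0]
      · have := Real.log_le_log h0 hm
        rw [Real.log_inv] at this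
        unfold Real.negMulLog
        nlinarith
    have h2 := Finset.sum_le_sum fun a (_ : a ∈ Finset.univ) => h1 a
    rwa [← Finset.sum_mul, sum_measureReal_fiber ν hall, one_mul] at h2
  have hr : ∀ r ∈ Finset.range q, Real.log E.card ≤
      ∑ t ∈ (Finset.range (n + 1)).filter (fun t => t % q = r), Hent ν (b t) +
        q * Real.log (Fintype.card ι) := by
    intro r hr
    rw [Finset.mem_range] at hr
    have h3 : Hent ν (fun x (j : Fin (n + 1)) => p j x) ≤
        ∑ t ∈ insert 0 ((Finset.range (n + 1)).filter (fun t => t % q = r)), Hent ν (b t) := by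
      refine Hent_le_sum ν b hbm _ hall fun x y hxy => funext fun j => ?_
      by_cases hjr : (j : ℕ) < r
      · have := congrFun (hxy 0 (Finset.mem_insert_self _ _)) ⟨j, by omega⟩
        simpa [hb] using this
      · push Not at hjr
        have hm : ((j : ℕ) - r) % q < q := Nat.mod_lt _ hq
        have hm2 : ((j : ℕ) - r) % q ≤ j - r := Nat.mod_le _ _
        have hmod : ((j : ℕ) - ((j : ℕ) - r) % q) % q = r := by
          have h5 := Nat.div_add_mod ((j : ℕ) - r) q
          have h6 : (j : ℕ) - ((j : ℕ) - r) % q = r + q * (((j : ℕ) - r) / q) := by omega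
          rw [h6, Nat.add_mul_mod_self_left, Nat.mod_eq_of_lt hr]
        have := congrFun (hxy ((j : ℕ) - ((j : ℕ) - r) % q) (Finset.mem_insert_of_mem
          (Finset.mem_filter.mpr ⟨Finset.mem_range.mpr (by omega), hmod⟩)))
          ⟨((j : ℕ) - r) % q, hm⟩
        have h7 : (j : ℕ) - ((j : ℕ) - r) % q + ((j : ℕ) - r) % q = j := by omega
        simpa [hb, h7] using this
    have h4 : ∑ t ∈ insert 0 ((Finset.range (n + 1)).filter (fun t => t % q = r)), Hent ν (b t) ≤
        ∑ t ∈ (Finset.range (n + 1)).filter (fun t => t % q = r), Hent ν (b t) +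
          Hent ν (b 0) := by
      by_cases h0 : 0 ∈ (Finset.range (n + 1)).filter (fun t => t % q = r)
      · rw [Finset.insert_eq_of_mem h0]
        linarith [Hent_nonneg ν (b 0)]
      · rw [Finset.sum_insert h0]; linarith
    have h5 := Hent_le_log_card ν (hbm 0)
    rw [Fintype.card_fun, Fintype.card_fin, Nat.cast_pow, Real.log_pow] at h5
    linarith
  have h6 := Finset.sum_le_sum hr
  rw [Finset.sum_const, Finset.card_range, nsmul_eq_mul, Finset.sum_add_distrib, Finset.sum_const,
    Finset.card_range, nsmul_eq_mul, Finset.sum_fiberwise_of_maps_to] at h6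
  · exact h6
  · intro t _
    exact Finset.mem_range.mpr (Nat.mod_lt _ hq)

/-! ### Time averages of measures along a flow -/

/-- Normalized Lebesgue measure on `(0, n + 1]`. -/
noncomputable def unifTime (n : ℕ) : Measure ℝ :=
  ((n + 1 : ℕ) : ℝ≥0∞)⁻¹ • volume.restrict (Ioc (0 : ℝ) (n + 1 : ℕ))

instance (n : ℕ) : IsProbabilityMeasure (unifTime n) := ⟨by
  have h : ((n + 1 : ℕ) : ℝ≥0∞) ≠ 0 := by exact_mod_cast n.succ_ne_zero
  have h2 : ENNReal.ofReal ((n + 1 : ℕ) : ℝ) = ((n + 1 : ℕ) : ℝ≥0∞) := ENNReal.ofReal_natCast _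
  simp only [unifTime, Measure.smul_apply, Measure.restrict_apply MeasurableSet.univ, univ_inter,
    Real.volume_Ioc, sub_zero, smul_eq_mul]
  rw [h2, ENNReal.inv_mul_cancel h (ENNReal.natCast_ne_top _)]⟩

lemma integral_unifTime (n : ℕ) (h : ℝ → ℝ) :
    ∫ u, h u ∂(unifTime n) = ((n + 1 : ℕ) : ℝ)⁻¹ * ∫ u in (0 : ℝ)..(n + 1 : ℕ), h u := by
  rw [unifTime, integral_smul_measure, intervalIntegral.integral_of_le (by positivity),
    ENNReal.toReal_inv, ENNReal.toReal_natCast, smul_eq_mul]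

section
variable {Y : Type*} [MetricSpace Y] [CompactSpace Y] [MeasurableSpace Y] [BorelSpace Y]

/-- The time average over `(0, n + 1]` of a measure along a flow. -/
noncomputable def flowAvg (φ : Flow ℝ Y) (ν : Measure Y) (n : ℕ) : Measure Y :=
  ((unifTime n).prod ν).map (fun z : ℝ × Y => φ.toFun z.1 z.2)

lemma flow_cont (φ : Flow ℝ Y) : Continuous (fun z : ℝ × Y => φ.toFun z.1 z.2) :=
  φ.cont'

instance (φ : Flow ℝ Y) (ν : Measure Y) [IsProbabilityMeasure ν] (n : ℕ) :
    IsProbabilityMeasure (flowAvg φ ν n) :=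
  Measure.isProbabilityMeasure_map (flow_cont φ).measurable.aemeasurable

variable (φ : Flow ℝ Y) (ν : Measure Y) [IsProbabilityMeasure ν]

lemma measurable_measureReal_flow {C : Set Y} (hC : MeasurableSet C) :
    Measurable fun u : ℝ => ν.real (φ.toFun u ⁻¹' C) := by
  have h := measurable_measure_prodMk_left (ν := ν)
    ((flow_cont φ).measurable hC)
  exact h.ennreal_toReal

lemma flowAvg_real (n : ℕ) {C : Set Y} (hC : MeasurableSet C) :
    (flowAvg φ ν n).real C = ∫ u, ν.real (φ.toFun u ⁻¹' C) ∂(unifTime n) := by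
  have hm := (flow_cont φ).measurable
  rw [Measure.real, flowAvg, Measure.map_apply hm hC, Measure.prod_apply (hm hC)]
  have h := measurable_measure_prodMk_left (ν := ν) (hm hC)
  rw [← integral_toReal h.aemeasurable (Eventually.of_forall fun u => measure_lt_top _ _)]
  rfl

lemma integrable_unifTime {h : ℝ → ℝ} (hm : Measurable h) {C : ℝ} (hC : ∀ u, |h u| ≤ C) (n : ℕ) :
    Integrable h (unifTime n) :=
  Integrable.of_bound hm.aestronglyMeasurable C (Eventually.of_forall hC)

lemma negMulLog_le_one {x : ℝ} (h0 : 0 ≤ x) (h1 : x ≤ 1) : |Real.negMulLog x| ≤ 1 := by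
  rw [abs_of_nonneg (Real.negMulLog_nonneg h0 h1)]
  rcases h0.eq_or_lt with h | h
  · simp [← h]
  have := Real.log_le_sub_one_of_pos (inv_pos.mpr h)
  rw [Real.log_inv] at this
  have h3 := mul_le_mul_of_nonneg_left this h0
  have h4 : x * (x⁻¹ - 1) = 1 - x := by field_simp
  unfold Real.negMulLog
  nlinarith

variable {ι : Type*} [Fintype ι]

lemma Hent_flow_measurable {p : Y → ι} (hp : FM p) :
    Measurable (fun u : ℝ => Hent ν (fun x => p (φ.toFun u x))) := by
  unfold Hent
  refine Finset.measurable_sum _ fun i _ => ?_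
  exact Real.continuous_negMulLog.measurable.comp (measurable_measureReal_flow φ ν (hp i))

/-- Concavity of entropy along the time average. -/
lemma integral_Hent_le {p : Y → ι} (hp : FM p) (n : ℕ) :
    ∫ u, Hent ν (fun x => p (φ.toFun u x)) ∂(unifTime n) ≤ Hent (flowAvg φ ν n) p := by
  unfold Hent
  have hm : ∀ i, Measurable fun u : ℝ => ν.real (φ.toFun u ⁻¹' (p ⁻¹' {i})) := fun i =>
    measurable_measureReal_flow φ ν (hp i)
  have hi2 : ∀ i, Integrable (fun u => Real.negMulLog (ν.real (φ.toFun u ⁻¹' (p ⁻¹' {i}))))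
      (unifTime n) := fun i =>
    integrable_unifTime (Real.continuous_negMulLog.measurable.comp (hm i))
      (fun u => negMulLog_le_one measureReal_nonneg measureReal_le_one) n
  have h0 : ∫ u, ∑ i, Real.negMulLog (ν.real ((fun x => p (φ.toFun u x)) ⁻¹' {i})) ∂(unifTime n)
      = ∑ i, ∫ u, Real.negMulLog (ν.real (φ.toFun u ⁻¹' (p ⁻¹' {i}))) ∂(unifTime n) := by
    rw [← integral_finsetSum _ fun i _ => hi2 i]
    rfl
  rw [h0]
  refine Finset.sum_le_sum fun i _ => ?_
  rw [flowAvg_real φ ν n (hp i)]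
  refine Real.concaveOn_negMulLog.le_map_integral Real.continuous_negMulLog.continuousOn
    isClosed_Ici (Eventually.of_forall fun u => measureReal_nonneg) ?_ (hi2 i)
  exact integrable_unifTime (hm i) (C := 1) (fun u => by
    rw [abs_of_nonneg measureReal_nonneg]; exact measureReal_le_one) n

/-- Lower bound for the block entropy of the time average of a measure for which all shifted
block sums are large. -/
lemma Hent_flowAvg_ge {p : Y → ι} (hp : FM p) (n : ℕ) {D : ℝ}
    (hD : ∀ s ∈ Icc (0 : ℝ) 1,
      D ≤ ∑ t ∈ Finset.range (n + 1), Hent ν (fun x => p (φ.toFun (t + s) x))) :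
    D / (n + 1 : ℕ) ≤ Hent (flowAvg φ ν n) p := by
  refine le_trans ?_ (integral_Hent_le φ ν hp n)
  set h : ℝ → ℝ := fun u => Hent ν (fun x => p (φ.toFun u x)) with hh
  have hm : Measurable h := Hent_flow_measurable φ ν hp
  have hbd : ∀ u, ‖h u‖ ≤ Fintype.card ι := by
    intro u
    refine (norm_sum_le _ _).trans ?_
    refine (Finset.sum_le_sum fun i _ =>
      negMulLog_le_one measureReal_nonneg measureReal_le_one).trans ?_
    simp
  have hii : ∀ a b : ℝ, IntervalIntegrable h volume a b := fun a b => by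
    rw [intervalIntegrable_iff]
    exact Measure.integrableOn_of_bounded (M := Fintype.card ι) (by simp)
      hm.aestronglyMeasurable (Eventually.of_forall hbd)
  have hii2 : ∀ t : ℝ, IntervalIntegrable (fun s => h (t + s)) volume 0 1 := fun t => by
    rw [intervalIntegrable_iff]
    exact Measure.integrableOn_of_bounded (M := Fintype.card ι) (by simp)
      (hm.comp (measurable_const_add t)).aestronglyMeasurable
      (Eventually.of_forall fun s => hbd _)
  rw [integral_unifTime, div_eq_inv_mul]
  refine mul_le_mul_of_nonneg_left ?_ (by positivity)
  have h1 := intervalIntegral.sum_integral_adjacent_intervals (f := h) (μ := volume)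
    (a := fun k : ℕ => (k : ℝ)) (n := n + 1) (fun k _ => hii _ _)
  simp only [Nat.cast_zero] at h1
  rw [← h1]
  have h2 : ∀ k ∈ Finset.range (n + 1), ∫ x in (k : ℝ)..((k + 1 : ℕ) : ℝ), h x =
      ∫ s in (0 : ℝ)..1, h (k + s) := by
    intro k _
    rw [intervalIntegral.integral_comp_add_left (fun x => h x) (k : ℝ)]
    simp
  rw [Finset.sum_congr rfl h2, ← intervalIntegral.integral_finsetSum (fun k _ => hii2 _)]
  have h3 : ∫ _ in (0 : ℝ)..1, D = D := by simp
  rw [← h3]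
  refine intervalIntegral.integral_mono_on zero_le_one (by simp) ?_ (fun s hs => hD s hs)
  have h4 := IntervalIntegrable.sum (Finset.range (n + 1))
    (f := fun (k : ℕ) s => h (k + s)) (fun k _ => hii2 k)
  have h5 : (fun s => ∑ k ∈ Finset.range (n + 1), h (k + s)) =
      ∑ k ∈ Finset.range (n + 1), fun s => h (k + s) := by
    funext s
    simp
  rw [h5]
  exact h4

/-- Weak convergence of time averages from uniform convergence on a carrier. -/
lemma integral_flowAvg_sub_le {Γ : Set Y} (hν : ∀ᵐ x ∂ν, x ∈ Γ) {g : Y → ℝ} (hg : Continuous g)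
    {I ε : ℝ} (n : ℕ)
    (hI : ∀ y ∈ Γ, |((n + 1 : ℕ) : ℝ)⁻¹ * (∫ u in (0 : ℝ)..(n + 1 : ℕ), g (φ.toFun u y)) - I| ≤ ε) :
    |∫ y, g y ∂(flowAvg φ ν n) - I| ≤ ε := by
  have hm := (flow_cont φ).measurable
  obtain ⟨C, hC⟩ := isCompact_univ.exists_bound_of_continuousOn hg.continuousOn
  have hgint : Integrable (fun z : ℝ × Y => g (φ.toFun z.1 z.2)) ((unifTime n).prod ν) :=
    Integrable.of_bound ((hg.comp (flow_cont φ)).aestronglyMeasurable) C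
      (Eventually.of_forall fun z => hC _ (mem_univ _))
  rw [flowAvg, integral_map hm.aemeasurable hg.aestronglyMeasurable, integral_prod_symm _ hgint]
  have h1 : ∀ y, ∫ u, g (φ.toFun u y) ∂(unifTime n) =
      ((n + 1 : ℕ) : ℝ)⁻¹ * ∫ u in (0 : ℝ)..(n + 1 : ℕ), g (φ.toFun u y) := fun y =>
    integral_unifTime n _
  have h2 : (∫ y, ∫ u, g (φ.toFun u y) ∂(unifTime n) ∂ν) - I =
      ∫ y, ((∫ u, g (φ.toFun u y) ∂(unifTime n)) - I) ∂ν := by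
    rw [integral_sub hgint.integral_prod_right (integrable_const _)]
    simp
  rw [h2]
  have h3 := norm_integral_le_of_norm_le_const (μ := ν) (C := ε)
    (f := fun y => (∫ u, g (φ.toFun u y) ∂(unifTime n)) - I) (by
      filter_upwards [hν] with y hy
      rw [h1]; exact hI y hy)
  simpa using h3

lemma frontier_fiber_null {p : Y → ι} (h : ∀ᵐ y ∂ν, ∀ᶠ y' in 𝓝 y, p y' = p y) (i : ι) :
    ν (frontier (p ⁻¹' {i})) = 0 := by
  refine measure_mono_null ?_ h
  intro y hy hcon
  have hcon : ∀ᶠ y' in 𝓝 y, p y' = p y := hcon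
  by_cases hi : p y = i
  · refine hy.2 (mem_interior_iff_mem_nhds.mpr ?_)
    filter_upwards [hcon] with y' hy'
    exact hy'.trans hi
  · have hcl := mem_closure_iff_frequently.mp hy.1
    obtain ⟨y', hy', h2⟩ := (hcl.and_eventually hcon).exists
    exact hi (h2.symm.trans hy')

lemma flow_iterate (φ : Flow ℝ Y) (j : ℕ) (x : Y) : (φ.toFun 1)^[j] x = φ.toFun j x := by
  induction j with
  | zero => simp
  | succ j ih =>
    rw [Function.iterate_succ_apply', ih, ← φ.map_add', Nat.cast_succ, add_comm]

/-- Small distance after an extra time in `[0,1]` forces small distance before. -/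
lemma exists_backward_close (φ : Flow ℝ Y) {ε : ℝ} (hε : 0 < ε) :
    ∃ ε' > 0, ∀ s ∈ Icc (0 : ℝ) 1, ∀ x y : Y, dist (φ.toFun s x) (φ.toFun s y) ≤ ε' →
      dist x y ≤ ε := by
  have hK : IsCompact (Icc (-1 : ℝ) 0 ×ˢ (univ : Set Y)) := isCompact_Icc.prod isCompact_univ
  have huc := hK.uniformContinuousOn_of_continuous (flow_cont φ).continuousOn
  rw [Metric.uniformContinuousOn_iff] at huc
  obtain ⟨δ, hδ, h⟩ := huc ε hε
  refine ⟨δ / 2, by positivity, fun s hs x y hxy => ?_⟩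
  have h1 := h (-s, φ.toFun s x) ⟨⟨by linarith [hs.2], by linarith [hs.1]⟩, mem_univ _⟩
    (-s, φ.toFun s y) ⟨⟨by linarith [hs.2], by linarith [hs.1]⟩, mem_univ _⟩
    (by rw [Prod.dist_eq]; simp only [dist_self]; exact max_lt hδ (by linarith))
  simp only [← φ.map_add', neg_add_cancel, φ.map_zero'] at h1
  exact h1.le

/-- If time averages converge uniformly on `Γ` to an invariant measure `μ`, the entropy of `μ` is
at least the topological entropy on `Γ`. -/
theorem le_measEntropy_of_uniform (φ : Flow ℝ Y) (μ : Measure Y) [IsProbabilityMeasure μ]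
    (hμ : FlowInvariant φ μ) {Γ : Set Y} (hΓ : Γ.Nonempty)
    (hconv : ∀ g : Y → ℝ, Continuous g → ∀ ε > 0, ∀ᶠ n : ℕ in atTop, ∀ y ∈ Γ,
      |(n : ℝ)⁻¹ * (∫ u in (0 : ℝ)..n, g (φ.toFun u y)) - ∫ y, g y ∂μ| ≤ ε)
    {c : ℝ} (hc : (c : EReal) < topEntropyOn (φ.toFun 1) Γ) :
    (c : EReal) ≤ measEntropy (φ.toFun 1) μ := by
  classical
  obtain ⟨ε0, hε0, c', hcc', hfreq⟩ := exists_of_lt_topEntropyOn hc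
  obtain ⟨ε', hε', hback⟩ := exists_backward_close φ hε0
  obtain ⟨K, p, hp, hpd, hpn⟩ := exists_null_boundary_code μ hε'
  have hT : Continuous (φ.toFun 1) := φ.continuous_toFun 1
  have hsel : ∀ n : ℕ, ∃ ν : Measure Y, IsProbabilityMeasure ν ∧ (∀ᵐ x ∂ν, x ∈ Γ) ∧
      ∀ q : ℕ, 0 < q → (q * Real.log (sepCount (φ.toFun 1) Γ n ε0) -
        q * (q * Real.log (Fintype.card (Fin K → Bool)))) / (n + 1 : ℕ) ≤
          Hent (flowAvg φ ν n) (name (φ.toFun 1) p q) := by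
    intro n
    obtain ⟨E, hEΓ, hEs, hEc⟩ := exists_card_eq_sepCount (φ.toFun 1) Γ n hε0
    have hEne : E.Nonempty := by
      rw [← Finset.card_pos, hEc]
      obtain ⟨y, hy⟩ := hΓ
      have : ({y} : Finset Y).card ≤ _ :=
        card_le_sepCount (f := φ.toFun 1) (K := Γ) (n := n) hε0 (by simpa using hy)
          (by simp [IsDynSep])
      rw [Finset.card_singleton] at this
      omega
    obtain ⟨ν, hν, hνE, hνA⟩ := exists_uniform hEne
    refine ⟨ν, hν, hνE.mono fun x hx => hEΓ hx, fun q hq => ?_⟩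
    refine Hent_flowAvg_ge φ ν (FM_name hT.measurable hp q) n fun s hs => ?_
    have hb := block_inequality ν hEne hνA (fun j x => p (φ.toFun (j + s) x))
      (fun j => hp.comp (φ.continuous_toFun _).measurable) n q hq (by
        intro x hx y hy hxy
        by_contra hne
        obtain ⟨j, hj, hd⟩ := hEs hx hy hne
        have h1 := hpd _ _ (hxy j hj)
        rw [add_comm (j : ℝ) s, φ.map_add', φ.map_add'] at h1
        have h2 := hback s hs _ _ h1
        rw [flow_iterate, flow_iterate] at hd
        linarith)
    rw [hEc] at hb
    have h3 : ∀ t : ℕ, (fun x => name (φ.toFun 1) p q (φ.toFun (t + s) x)) =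
        fun x (i : Fin q) => p (φ.toFun ((t + i : ℕ) + s) x) := by
      intro t
      funext x i
      simp only [name, flow_iterate, ← φ.map_add']
      congr 2
      push_cast; ring
    simp only [h3]
    linarith
  choose ν hνp hνΓ hνH using hsel
  let m : ℕ → ProbabilityMeasure Y := fun n => ⟨flowAvg φ (ν n) n, inferInstance⟩
  let μ' : ProbabilityMeasure Y := ⟨μ, inferInstance⟩
  have hlim : Tendsto m atTop (𝓝 μ') := by
    refine ProbabilityMeasure.tendsto_iff_forall_integral_tendsto.mpr fun g => ?_
    rw [Metric.tendsto_atTop']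
    intro ε hε
    have h1 := (tendsto_add_atTop_nat 1).eventually
      (hconv g g.continuous (ε / 2) (by positivity))
    obtain ⟨N, hN⟩ := eventually_atTop.mp h1
    refine ⟨N, fun n hn => ?_⟩
    have h2 := integral_flowAvg_sub_le φ (ν n) (hνΓ n) g.continuous n (hN n hn.le)
    rw [Real.dist_eq]
    have h3 : (∫ y, g y ∂((m n : ProbabilityMeasure Y) : Measure Y)) =
      ∫ y, g y ∂(flowAvg φ (ν n) n) := rfl
    rw [h3]
    exact lt_of_le_of_lt h2 (by linarith)
  have hHq : ∀ q : ℕ, 0 < q → q * c' ≤ Hent μ (name (φ.toFun 1) p q) := by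
    intro q hq
    have hnull : ∀ᵐ y ∂μ, ∀ᶠ y' in 𝓝 y, name (φ.toFun 1) p q y' = name (φ.toFun 1) p q y := by
      have h1 : ∀ᵐ y ∂μ, ∀ i : Fin q, ∀ᶠ y' in 𝓝 ((φ.toFun 1)^[(i : ℕ)] y),
          p y' = p ((φ.toFun 1)^[(i : ℕ)] y) := by
        rw [ae_all_iff]
        intro i
        exact ((hμ 1).iterate i).quasiMeasurePreserving.ae hpn
      filter_upwards [h1] with y hy
      have h2 : ∀ i : Fin q, ∀ᶠ y' in 𝓝 y, p ((φ.toFun 1)^[(i : ℕ)] y') =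
          p ((φ.toFun 1)^[(i : ℕ)] y) := fun i =>
        (hT.iterate i).continuousAt.tendsto.eventually (hy i)
      filter_upwards [eventually_all.mpr h2] with y' hy'
      funext i
      exact hy' i
    have hH : Tendsto (fun n => Hent (flowAvg φ (ν n) n) (name (φ.toFun 1) p q)) atTop
        (𝓝 (Hent μ (name (φ.toFun 1) p q))) := by
      refine tendsto_finsetSum _ fun a _ => ?_
      refine (Real.continuous_negMulLog.tendsto _).comp ?_
      have h3 := ProbabilityMeasure.tendsto_measure_of_null_frontier_of_tendsto' hlim
        (frontier_fiber_null μ hnull a)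
      exact (ENNReal.tendsto_toReal (measure_ne_top _ _)).comp h3
    by_contra! hlt
    obtain ⟨d, hd1, hd2⟩ := exists_between hlt
    have hR : Tendsto (fun n : ℕ => (-(q * (q * Real.log (Fintype.card (Fin K → Bool)))) +
        (q * c') * (n : ℝ)) / (1 + 1 * (n : ℝ))) atTop
        (𝓝 ((q * c') / 1)) :=
      tendsto_add_mul_div_add_mul_atTop_nhds _ _ _ one_ne_zero
    rw [div_one] at hR
    obtain ⟨n, hn, hn1, hn2⟩ := (hfreq.and_eventually ((hH.eventually (gt_mem_nhds hd1)).and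
      (hR.eventually (lt_mem_nhds hd2)))).exists
    have h4 := hνH n q hq
    have h5 : (-(q * (q * Real.log (Fintype.card (Fin K → Bool)))) +
        (q * c') * (n : ℝ)) / (1 + 1 * (n : ℝ)) ≤
        (q * Real.log (sepCount (φ.toFun 1) Γ n ε0) -
        q * (q * Real.log (Fintype.card (Fin K → Bool)))) / (n + 1 : ℕ) := by
      push_cast
      rw [one_mul, add_comm 1 (n : ℝ)]
      refine div_le_div_of_nonneg_right ?_ (by positivity)
      have := mul_le_mul_of_nonneg_left hn (Nat.cast_nonneg (α := ℝ) q)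
      linarith
    linarith
  set P : Finset (Set Y) := Finset.univ.image (fun i : Fin K → Bool => p ⁻¹' {i}) with hPdef
  have hP : IsMeasPartition P := by
    refine ⟨?_, ?_, ?_⟩
    · intro s hs
      obtain ⟨i, -, rfl⟩ := Finset.mem_image.mp hs
      exact hp i
    · refine eq_univ_of_forall fun y => ?_
      exact ⟨p ⁻¹' {p y}, by simp [hPdef], rfl⟩
    · intro s hs s' hs' hne
      obtain ⟨i, -, rfl⟩ := Finset.mem_image.mp (Finset.mem_coe.mp hs)
      obtain ⟨j, -, rfl⟩ := Finset.mem_image.mp (Finset.mem_coe.mp hs')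
      refine Set.disjoint_left.mpr fun y hy hy' => hne ?_
      have : i = j := hy.symm.trans hy'
      rw [this]
  obtain ⟨pc, hpc, hpcm⟩ := exists_cell hP
  refine le_trans ?_ (le_iSup₂ (f := fun (P : Finset (Set Y)) (_ : IsMeasPartition P) =>
    ((partEntropy (φ.toFun 1) μ P : ℝ) : EReal)) P hP)
  rw [EReal.coe_le_coe_iff]
  have hb := refinedInfo_bounds hT.measurable μ hP
  unfold partEntropy
  refine le_limsup_of_frequently_le (Eventually.frequently ?_)
    (isBoundedUnder_of ⟨_, fun n => (hb n).2⟩)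
  filter_upwards [eventually_gt_atTop 0] with n hn
  have hn' : (0 : ℝ) < n := by exact_mod_cast hn
  rw [le_div_iff₀ hn', refinedInfo_eq _ μ hpc]
  have h6 : Hent μ (name (φ.toFun 1) p n) ≤ Hent μ (name (φ.toFun 1) pc n) := by
    refine Hent_le_of_det μ (FM_name hT.measurable hp n) (FM_name hT.measurable hpcm n) ?_
    intro x y hxy
    funext i
    have h7 := congrFun hxy i
    simp only [name] at h7 ⊢
    have h8 : (φ.toFun 1)^[(i : ℕ)] x ∈ pc ⁻¹' {pc ((φ.toFun 1)^[(i : ℕ)] y)} := h7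
    have h9 : (φ.toFun 1)^[(i : ℕ)] y ∈ pc ⁻¹' {pc ((φ.toFun 1)^[(i : ℕ)] y)} := rfl
    rw [hpc] at h8 h9
    obtain ⟨a, -, ha⟩ := Finset.mem_image.mp (pc ((φ.toFun 1)^[(i : ℕ)] y)).2
    rw [← ha] at h8 h9
    exact h8.trans h9.symm
  have h10 := hHq n hn
  have h11 : c * n ≤ n * c' := by rw [mul_comm]; exact mul_le_mul_of_nonneg_left hcc'.le hn'.le
  linarith

end

/-! ### Unique ergodicity from uniform convergence of time averages -/

section
variable {Y : Type*} [MetricSpace Y] [CompactSpace Y] [MeasurableSpace Y] [BorelSpace Y]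

/-- Time averages of continuous functions over `[0,n]` are asymptotically constant on `Γ`,
uniformly in the starting point. -/
def UnifAvg (φ : Flow ℝ Y) (Γ : Set Y) : Prop :=
  ∀ g : Y → ℝ, Continuous g → ∀ ε > 0, ∃ l : ℝ, ∀ᶠ n : ℕ in atTop, ∀ y ∈ Γ,
    |(n : ℝ)⁻¹ * (∫ u in (0 : ℝ)..n, g (φ.toFun u y)) - l| ≤ ε

/-- Time averages of continuous functions converge to the `μ`-mean uniformly on `Γ`. -/
def UnifConv (φ : Flow ℝ Y) (Γ : Set Y) (μ : Measure Y) : Prop :=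
  ∀ g : Y → ℝ, Continuous g → ∀ ε > 0, ∀ᶠ n : ℕ in atTop, ∀ y ∈ Γ,
    |(n : ℝ)⁻¹ * (∫ u in (0 : ℝ)..n, g (φ.toFun u y)) - ∫ y, g y ∂μ| ≤ ε

lemma eq_zero_of_forall_abs_le {a : ℝ} (h : ∀ ε > 0, |a| ≤ ε) : a = 0 :=
  abs_eq_zero.mp (le_antisymm (le_of_forall_pos_le_add fun ε hε => by simpa using h ε hε)
    (abs_nonneg a))

lemma flowAvg_eq_self (φ : Flow ℝ Y) {ν : Measure Y} [IsProbabilityMeasure ν]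
    (hν : FlowInvariant φ ν) (n : ℕ) : flowAvg φ ν n = ν := by
  refine Measure.ext fun C hC => ?_
  rw [← measureReal_eq_measureReal_iff, flowAvg_real φ ν n hC]
  have : ∀ u, ν.real (φ.toFun u ⁻¹' C) = ν.real C := fun u =>
    (hν u).measureReal_preimage hC.nullMeasurableSet
  simp [this]

lemma UnifAvg.exists_measure {φ : Flow ℝ Y} {Γ : Set Y} (h : UnifAvg φ Γ) (hΓ : Γ.Nonempty) :
    ∃ μ : Measure Y, IsProbabilityMeasure μ ∧ UnifConv φ Γ μ := by
  obtain ⟨y0, hy0⟩ := hΓ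
  let m : ℕ → ProbabilityMeasure Y := fun n => ⟨flowAvg φ (Measure.dirac y0) n, inferInstance⟩
  obtain ⟨μ', -, hμ'⟩ := isCompact_univ (X := ProbabilityMeasure Y) |>.ultrafilter_le_nhds
    ((hyperfilter ℕ).map m) (by simp)
  have hlim : Tendsto m (hyperfilter ℕ : Filter ℕ) (𝓝 μ') := hμ'
  have hle : (hyperfilter ℕ : Filter ℕ) ≤ atTop := by
    rw [← Nat.cofinite_eq_atTop]; exact hyperfilter_le_cofinite
  refine ⟨μ', inferInstance, fun g hg ε hε => ?_⟩
  obtain ⟨l, hl⟩ := h g hg (ε / 2) (by positivity)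
  have h1 : ∀ᶠ n : ℕ in atTop, |∫ y, g y ∂(flowAvg φ (Measure.dirac y0) n) - l| ≤ ε / 2 := by
    have h2 := (tendsto_add_atTop_nat 1).eventually hl
    filter_upwards [h2] with n hn
    refine integral_flowAvg_sub_le φ (Measure.dirac y0) (Γ := {y0}) ?_ hg n ?_
    · rw [ae_dirac_iff (by simp)]
      rfl
    · rintro y rfl
      exact hn y hy0
  have h3 : Tendsto (fun n => ∫ y, g y ∂(flowAvg φ (Measure.dirac y0) n))
      (hyperfilter ℕ : Filter ℕ) (𝓝 (∫ y, g y ∂(μ' : Measure Y))) :=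
    ProbabilityMeasure.tendsto_iff_forall_integral_tendsto.mp hlim
      (BoundedContinuousFunction.mkOfCompact ⟨g, hg⟩)
  have h4 : |∫ y, g y ∂(μ' : Measure Y) - l| ≤ ε / 2 :=
    le_of_tendsto ((h3.sub_const l).abs) (hle h1)
  filter_upwards [hl] with n hn y hy
  have h5 := hn y hy
  rw [abs_le] at *
  constructor <;> linarith [h4.1, h4.2, h5.1, h5.2]

lemma UnifConv.eq_of_invariant {φ : Flow ℝ Y} {Γ : Set Y} {μ ν : Measure Y}
    [IsProbabilityMeasure μ] [IsProbabilityMeasure ν] (h : UnifConv φ Γ μ)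
    (hν : FlowInvariant φ ν) (hνΓ : ν Γᶜ = 0) : ν = μ := by
  refine ext_of_forall_integral_eq_of_IsFiniteMeasure fun g => ?_
  refine sub_eq_zero.mp (eq_zero_of_forall_abs_le fun ε hε => ?_)
  obtain ⟨n, hn⟩ := ((tendsto_add_atTop_nat 1).eventually (h g g.continuous ε hε)).exists
  have h1 := integral_flowAvg_sub_le φ ν (Γ := Γ) (by rw [ae_iff]; exact hνΓ) g.continuous n hn
  rwa [flowAvg_eq_self φ hν] at h1

lemma UnifConv.invariant {φ : Flow ℝ Y} {Γ : Set Y} {μ : Measure Y} [IsProbabilityMeasure μ]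
    (h : UnifConv φ Γ μ) (hΓ : Γ.Nonempty) (hinv : FlowInvSet φ Γ) : FlowInvariant φ μ := by
  obtain ⟨y0, hy0⟩ := hΓ
  intro t
  have hct := φ.continuous_toFun t
  refine ⟨hct.measurable, ?_⟩
  have : IsProbabilityMeasure (μ.map (φ.toFun t)) :=
    Measure.isProbabilityMeasure_map hct.measurable.aemeasurable
  refine ext_of_forall_integral_eq_of_IsFiniteMeasure fun g => ?_
  rw [integral_map hct.measurable.aemeasurable g.continuous.aestronglyMeasurable]
  refine sub_eq_zero.mp (eq_zero_of_forall_abs_le fun ε hε => ?_)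
  have hty : φ.toFun t y0 ∈ Γ := by rw [← hinv t]; exact mem_image_of_mem _ hy0
  obtain ⟨n, h1, h2⟩ := ((h g g.continuous (ε / 2) (by positivity)).and
    (h (fun y => g (φ.toFun t y)) (g.continuous.comp hct) (ε / 2) (by positivity))).exists
  have h3 := h1 _ hty
  have h4 := h2 _ hy0
  have h5 : ∀ u, φ.toFun t (φ.toFun u y0) = φ.toFun u (φ.toFun t y0) := fun u => by
    rw [← φ.map_add', ← φ.map_add', add_comm]
  simp only [h5] at h4
  rw [abs_le] at *
  constructor <;> linarith [h4.1, h4.2, h3.1, h3.2]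

lemma UnifConv.carrier {φ : Flow ℝ Y} {Γ : Set Y} {μ : Measure Y} [IsProbabilityMeasure μ]
    (h : UnifConv φ Γ μ) (hΓ : Γ.Nonempty) (hinv : FlowInvSet φ Γ) (hc : IsClosed Γ) :
    μ Γᶜ = 0 := by
  have hg : Continuous (fun y => Metric.infDist y Γ) := Metric.continuous_infDist_pt Γ
  have hz : ∀ y ∈ Γ, Metric.infDist y Γ = 0 := fun y hy => Metric.infDist_zero_of_mem hy
  have h0 : ∫ y, Metric.infDist y Γ ∂μ = 0 := by
    refine eq_zero_of_forall_abs_le fun ε hε => ?_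
    obtain ⟨n, hn⟩ := (h _ hg ε hε).exists
    obtain ⟨y0, hy0⟩ := hΓ
    have h1 := hn y0 hy0
    have h2 : ∀ u, Metric.infDist (φ.toFun u y0) Γ = 0 := fun u =>
      hz _ (by rw [← hinv u]; exact mem_image_of_mem _ hy0)
    simpa [h2] using h1
  obtain ⟨C, hC⟩ := isCompact_univ.exists_bound_of_continuousOn hg.continuousOn
  have hgint : Integrable (fun y => Metric.infDist y Γ) μ :=
    Integrable.of_bound hg.aestronglyMeasurable C
      (Eventually.of_forall fun z => hC _ (mem_univ _))
  rw [integral_eq_zero_iff_of_nonneg (fun y => Metric.infDist_nonneg) hgint] at h0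
  refine measure_mono_null ?_ h0
  intro y hy hcon
  exact hy ((hc.mem_iff_infDist_zero hΓ).mpr hcon)

/-- Uniform time averages give unique ergodicity, with an ergodic measure. -/
theorem UnifAvg.main {φ : Flow ℝ Y} {Γ : Set Y} (h : UnifAvg φ Γ) (hΓ : Γ.Nonempty)
    (hinv : FlowInvSet φ Γ) (hc : IsClosed Γ) :
    FlowUniquelyErgodicOn φ Γ ∧ ∃ μ : Measure Y, IsProbabilityMeasure μ ∧ FlowErgodic φ μ ∧
      μ Γᶜ = 0 ∧ UnifConv φ Γ μ := by
  obtain ⟨μ, hμp, hμ⟩ := h.exists_measure hΓ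
  have hμi := hμ.invariant hΓ hinv
  have hμc := hμ.carrier hΓ hinv hc
  refine ⟨⟨μ, ⟨hμp, hμi, hμc⟩, ?_⟩, μ, hμp, ⟨hμi, ?_⟩, hμc, hμ⟩
  · rintro ν ⟨hν1, hν2, hν3⟩
    exact hμ.eq_of_invariant hν2 hν3
  · intro s hs hst
    by_cases h0 : μ s = 0
    · exact Or.inl h0
    right
    set ν : Measure Y := (μ s)⁻¹ • μ.restrict s with hν
    have hν1 : IsProbabilityMeasure ν := ⟨by
      simp [hν, ENNReal.inv_mul_cancel h0 (measure_ne_top _ _)]⟩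
    have hν2 : FlowInvariant φ ν := by
      intro t
      have h1 := (hμi t).restrict_preimage hs
      rw [hst t] at h1
      exact h1.smul_measure _
    have hν3 : ν Γᶜ = 0 := by
      have : (μ.restrict s) Γᶜ = 0 := Measure.restrict_apply_eq_zero hc.isOpen_compl.measurableSet |>.mpr
        (measure_mono_null inter_subset_left hμc)
      simp [hν, this]
    have h2 := hμ.eq_of_invariant hν2 hν3
    rw [← h2]
    simp [hν, ENNReal.inv_mul_cancel h0 (measure_ne_top _ _)]

end

/-! ### Suspension flows: basic facts -/

/-- `φ` is the suspension flow of `(f,ρ)` with base embedding `e`, and `a`, `b` are positive bounds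
for the roof function. -/
structure Susp {X Y : Type*} [MetricSpace X] [MetricSpace Y] (f : X ≃ₜ X) (ρ : X → ℝ)
    (φ : Flow ℝ Y) (e : X → Y) (a b : ℝ) : Prop where
  ρc : Continuous ρ
  ec : Continuous e
  a_pos : 0 < a
  b_pos : 0 < b
  ρa : ∀ x, a ≤ ρ x
  ρb : ∀ x, ρ x ≤ b
  ret : ∀ x, φ.toFun (ρ x) (e x) = e (f x)
  surj : ∀ z, ∃ x, ∃ s, 0 ≤ s ∧ s < ρ x ∧ φ.toFun s (e x) = z
  inj : ∀ x y s u, 0 ≤ s → s < ρ x → 0 ≤ u → u < ρ y →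
    φ.toFun s (e x) = φ.toFun u (e y) → x = y ∧ s = u

section
variable {X Y : Type*} [MetricSpace X] [CompactSpace X] [MetricSpace Y] [CompactSpace Y]
  {f : X ≃ₜ X} {ρ : X → ℝ} {φ : Flow ℝ Y} {e : X → Y} {a b : ℝ}

lemma Susp.ret_iter (hS : Susp f ρ φ e a b)
    (j : ℕ) (x : X) : φ.toFun (birkhoffSum f ρ j x) (e x) = e (f^[j] x) := by
  induction j with
  | zero => simp [φ.map_zero']
  | succ j ih =>
    rw [birkhoffSum_succ, add_comm, φ.map_add', ih, hS.ret, Function.iterate_succ_apply']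

lemma Susp.le_sum (hS : Susp f ρ φ e a b) (j : ℕ) (x : X) : j * a ≤ birkhoffSum f ρ j x := by
  induction j with
  | zero => simp
  | succ j ih =>
    rw [birkhoffSum_succ]; push_cast; linarith [hS.ρa (f^[j] x)]

lemma Susp.sum_le (hS : Susp f ρ φ e a b) (j : ℕ) (x : X) : birkhoffSum f ρ j x ≤ j * b := by
  induction j with
  | zero => simp
  | succ j ih =>
    rw [birkhoffSum_succ]; push_cast; linarith [hS.ρb (f^[j] x)]

lemma Susp.sum_nonneg (hS : Susp f ρ φ e a b) (j : ℕ) (x : X) : 0 ≤ birkhoffSum f ρ j x :=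
  (mul_nonneg (Nat.cast_nonneg j) hS.a_pos.le).trans (hS.le_sum j x)

lemma Susp.sum_strictMono (hS : Susp f ρ φ e a b)
    (x : X) : StrictMono (fun j => birkhoffSum f ρ j x) :=
  strictMono_nat_of_lt_succ fun j => by
    rw [birkhoffSum_succ]; linarith [hS.ρa (f^[j] x), hS.a_pos]

/-- The return index at a given time. -/
lemma Susp.exists_window (hS : Susp f ρ φ e a b) (x : X) {T : ℝ} (hT : 0 ≤ T) :
    ∃ j : ℕ, birkhoffSum f ρ j x ≤ T ∧ T < birkhoffSum f ρ (j + 1) x := by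
  classical
  have hex : ∃ j : ℕ, T < birkhoffSum f ρ j x := by
    obtain ⟨j, hj⟩ := exists_nat_gt (T / a)
    refine ⟨j, lt_of_lt_of_le ?_ (hS.le_sum j x)⟩
    rwa [div_lt_iff₀ hS.a_pos] at hj
  have h0 : Nat.find hex ≠ 0 := fun h => by
    have := Nat.find_spec hex
    rw [h] at this
    simp at this
    linarith
  obtain ⟨j, hj⟩ := Nat.exists_eq_succ_of_ne_zero h0
  refine ⟨j, ?_, ?_⟩
  · exact not_lt.mp (Nat.find_min hex (by omega))
  · have := Nat.find_spec hex
    rwa [hj] at this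

lemma Susp.window_le (hS : Susp f ρ φ e a b)
    {x : X} {T : ℝ} {j J : ℕ} (hj : birkhoffSum f ρ j x ≤ T)
    (hJ : T ≤ birkhoffSum f ρ J x) : j ≤ J := by
  by_contra! h
  have := hS.sum_strictMono x h
  simp only at this
  linarith

lemma Susp.flow_eq (hS : Susp f ρ φ e a b) (x : X) (t : ℝ) (j : ℕ) :
    φ.toFun t (e x) = φ.toFun (t - birkhoffSum f ρ j x) (e (f^[j] x)) := by
  rw [← hS.ret_iter, ← φ.map_add']; congr 1; ring

lemma Susp.flow_unif (hS : Susp f ρ φ e a b) {ε A : ℝ} (hε : 0 < ε) :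
    ∃ θ > 0, ∀ u ∈ Icc (-A) A, ∀ u' ∈ Icc (-A) A, ∀ x x' : X, |u - u'| ≤ θ → dist x x' ≤ θ →
      dist (φ.toFun u (e x)) (φ.toFun u' (e x')) ≤ ε := by
  have hK : IsCompact (Icc (-A) A ×ˢ (univ : Set X)) := isCompact_Icc.prod isCompact_univ
  have hc : Continuous (fun z : ℝ × X => φ.toFun z.1 (e z.2)) :=
    φ.cont'.comp (continuous_fst.prodMk (hS.ec.comp continuous_snd))
  have huc := hK.uniformContinuousOn_of_continuous hc.continuousOn
  rw [Metric.uniformContinuousOn_iff] at huc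
  obtain ⟨δ, hδ, h⟩ := huc ε hε
  refine ⟨δ / 2, by positivity, fun u hu u' hu' x x' h1 h2 => ?_⟩
  refine (h (u, x) ⟨hu, mem_univ _⟩ (u', x') ⟨hu', mem_univ _⟩ ?_).le
  rw [Prod.dist_eq, Real.dist_eq]
  exact max_lt (by simp only; linarith) (by simp only; linarith)

lemma Susp.roof_unif (hS : Susp f ρ φ e a b) {ε : ℝ} (hε : 0 < ε) :
    ∃ δ > 0, ∀ x x' : X, dist x x' ≤ δ → |ρ x - ρ x'| ≤ ε := by
  have huc := CompactSpace.uniformContinuous_of_continuous hS.ρc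
  rw [Metric.uniformContinuous_iff] at huc
  obtain ⟨δ, hδ, h⟩ := huc ε hε
  refine ⟨δ / 2, by positivity, fun x x' h1 => ?_⟩
  have := h (a := x) (b := x') (by linarith)
  rw [Real.dist_eq] at this
  exact this.le

lemma Susp.sum_sub_le (hS : Susp f ρ φ e a b)
    {ω δ : ℝ} (hω : ∀ x x' : X, dist x x' ≤ δ → |ρ x - ρ x'| ≤ ω) {x x' : X}
    {i j : ℕ} (hij : i ≤ j) (h : ∀ k, i ≤ k → k < j → dist (f^[k] x) (f^[k] x') ≤ δ) :
    |(birkhoffSum f ρ j x - birkhoffSum f ρ j x') - (birkhoffSum f ρ i x - birkhoffSum f ρ i x')|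
      ≤ (j - i : ℕ) * ω := by
  induction j, hij using Nat.le_induction with
  | base => simp
  | succ j hij ih =>
    have h1 := ih fun k hk hk' => h k hk (by omega)
    have h2 := hω _ _ (h j hij (by omega))
    rw [birkhoffSum_succ, birkhoffSum_succ]
    have h3 : ((j + 1 - i : ℕ) : ℝ) = (j - i : ℕ) + 1 := by
      rw [Nat.succ_sub hij]; push_cast; ring
    rw [h3]
    rw [abs_le] at *
    constructor <;> linarith [h1.1, h1.2, h2.1, h2.2]

end

lemma abs_floor_sub_floor_le {x y : ℝ} (h : |x - y| ≤ 1) : ⌊x⌋ - ⌊y⌋ ∈ Finset.Icc (-1 : ℤ) 1 := by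
  rw [abs_le] at h
  rw [Finset.mem_Icc]
  have h1 : ⌊x⌋ ≤ ⌊y⌋ + 1 := by
    rw [← Int.floor_add_one]; exact Int.floor_le_floor (by linarith)
  have h2 : ⌊y⌋ ≤ ⌊x⌋ + 1 := by
    rw [← Int.floor_add_one]; exact Int.floor_le_floor (by linarith)
  constructor <;> omega

section
variable {X Y : Type*} [MetricSpace X] [CompactSpace X] [MetricSpace Y] [CompactSpace Y]
  {f : X ≃ₜ X} {ρ : X → ℝ} {φ : Flow ℝ Y} {e : X → Y} {a b : ℝ}

/-- Flow orbits over mutually close base orbits can only be separated through the slow drift of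
their return times, which allows few of them. -/
theorem Susp.drift (hS : Susp f ρ φ e a b) {ε γ : ℝ} (hε : 0 < ε) (hγ : 0 < γ) :
    ∃ δ > 0, ∃ C > 0, ∀ (n J : ℕ) (Q : Finset (X × ℝ)),
      (∀ z ∈ Q, 0 ≤ z.2 ∧ z.2 ≤ b) →
      (∀ z ∈ Q, ∀ z' ∈ Q, ∀ j ≤ J, dist (f^[j] z.1) (f^[j] z'.1) ≤ δ) →
      (∀ z ∈ Q, n + b ≤ birkhoffSum f ρ J z.1) →
      (∀ z ∈ Q, ∀ z' ∈ Q, z ≠ z' → ∃ t : ℕ, t ≤ n ∧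
        ε < dist (φ.toFun t (φ.toFun z.2 (e z.1))) (φ.toFun t (φ.toFun z'.2 (e z'.1)))) →
      (Q.card : ℝ) ≤ C * Real.exp (γ * J) := by
  classical
  obtain ⟨θ0, hθ0, hθ⟩ := hS.flow_unif (A := b + 1) hε
  set θ : ℝ := min θ0 1 with hθdef
  have hθpos : 0 < θ := lt_min hθ0 one_pos
  obtain ⟨L, hL⟩ := exists_nat_gt (Real.log 3 / γ)
  have hL0 : (0 : ℝ) < L := lt_of_le_of_lt (by positivity) hL
  have hL0' : 0 < L := by exact_mod_cast hL0
  obtain ⟨δ1, hδ1, hω⟩ := hS.roof_unif (ε := θ / 4 / L) (by positivity)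
  set A : ℤ := ⌊(0 - b) / (θ / 4)⌋ with hA
  set B : ℤ := ⌊(0 : ℝ) / (θ / 4)⌋ with hB
  have hAB : A ≤ B := Int.floor_le_floor (by
    have := hS.b_pos
    gcongr; linarith)
  refine ⟨min δ1 θ, lt_min hδ1 hθpos, (Finset.Icc A B).card, ?_, ?_⟩
  · have : (Finset.Icc A B).Nonempty := Finset.nonempty_Icc.mpr hAB
    exact_mod_cast this.card_pos
  intro n J Q hs hclose hlong hsep
  rcases Q.eq_empty_or_nonempty with rfl | ⟨z0, hz0⟩
  · simp; positivity
  have hω' : ∀ x x' : X, dist x x' ≤ min δ1 θ → |ρ x - ρ x'| ≤ θ / 4 / L := fun x x' h =>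
    hω x x' (h.trans (min_le_left _ _))
  -- the return-time drift of `z` relative to the base orbit of `z0`
  set τ : X × ℝ → ℕ → ℝ := fun z j => birkhoffSum f ρ j z.1 - birkhoffSum f ρ j z0.1 - z.2 with hτ
  have hτd : ∀ z ∈ Q, ∀ i j : ℕ, i ≤ j → j ≤ J → j ≤ i + L → |τ z j - τ z i| ≤ θ / 4 := by
    intro z hz i j hij hjJ hjL
    have h1 := hS.sum_sub_le hω' hij fun k _ hk => hclose z hz z0 hz0 k (by omega)
    have h2 : ((j - i : ℕ) : ℝ) * (θ / 4 / L) ≤ θ / 4 := by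
      have : ((j - i : ℕ) : ℝ) ≤ L := by exact_mod_cast (by omega : j - i ≤ L)
      calc ((j - i : ℕ) : ℝ) * (θ / 4 / L) ≤ L * (θ / 4 / L) := by gcongr
        _ = θ / 4 := by field_simp
    have h3 : τ z j - τ z i = (birkhoffSum f ρ j z.1 - birkhoffSum f ρ j z0.1) -
      (birkhoffSum f ρ i z.1 - birkhoffSum f ρ i z0.1) := by simp only [hτ]; ring
    rw [h3]; exact h1.trans h2
  set cd : X × ℝ → ℕ → ℤ := fun z i => ⌊τ z (i * L) / (θ / 4)⌋ with hcd
  set code : X × ℝ → ℤ × (Fin (J / L) → ℤ) := fun z =>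
    (cd z 0, fun i => cd z (i + 1) - cd z i) with hcode
  have hmaps : ∀ z ∈ Q, code z ∈ (Finset.Icc A B) ×ˢ
      Fintype.piFinset (fun _ : Fin (J / L) => Finset.Icc (-1 : ℤ) 1) := by
    intro z hz
    rw [Finset.mem_product]
    constructor
    · simp only [hcode, hcd, hτ, zero_mul, birkhoffSum_zero, sub_zero, zero_sub, hA, hB,
        Finset.mem_Icc]
      have := hs z hz
      constructor
      · refine Int.floor_le_floor ?_
        gcongr; exact this.2
      · refine Int.floor_le_floor ?_
        gcongr; linarith
    · rw [Fintype.mem_piFinset]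
      intro i
      refine abs_floor_sub_floor_le ?_
      rw [← sub_div, abs_div, abs_of_pos (show 0 < θ / 4 by positivity), div_le_one (by positivity)]
      have hiL : ((i : ℕ) + 1) * L ≤ J := by
        have := i.2
        calc ((i : ℕ) + 1) * L ≤ (J / L) * L := Nat.mul_le_mul_right _ (by omega)
          _ ≤ J := Nat.div_mul_le_self J L
      exact hτd z hz _ _ (Nat.mul_le_mul_right _ (by omega)) hiL (by rw [add_mul]; omega)
  have hinj : Set.InjOn code (Q : Set (X × ℝ)) := by
    intro z hz z' hz' hzz
    by_contra hne
    have hcdeq : ∀ i ≤ J / L, cd z i = cd z' i := by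
      intro i
      induction i with
      | zero => intro _; exact congrArg Prod.fst hzz
      | succ i ih =>
        intro hi
        have h1 := ih (by omega)
        have h2 := congrFun (congrArg Prod.snd hzz) ⟨i, by omega⟩
        simp only [hcode] at h2
        omega
    have hτclose : ∀ j ≤ J, |τ z j - τ z' j| ≤ θ := by
      intro j hj
      have h1 := hcdeq (j / L) (Nat.div_le_div_right hj)
      have h2 : j / L * L ≤ j := Nat.div_mul_le_self j L
      have h3 : j ≤ j / L * L + L := by
        have := Nat.lt_div_mul_add (a := j) hL0'; omega
      have h4 := hτd z hz _ _ h2 hj h3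
      have h5 := hτd z' hz' _ _ h2 hj h3
      have h6 : |τ z (j / L * L) / (θ / 4) - τ z' (j / L * L) / (θ / 4)| < 1 :=
        Int.abs_sub_lt_one_of_floor_eq_floor h1
      rw [← sub_div, abs_div, abs_of_pos (show 0 < θ / 4 by positivity),
        div_lt_one (by positivity)] at h6
      rw [abs_le] at *
      rw [abs_lt] at h6
      constructor <;> linarith [h4.1, h4.2, h5.1, h5.2, h6.1, h6.2]
    obtain ⟨t, ht, hd⟩ := hsep z hz z' hz' hne
    have hsz := hs z hz
    have ht0 : (0 : ℝ) ≤ t + z.2 := add_nonneg (Nat.cast_nonneg t) hsz.1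
    have htn : (t : ℝ) ≤ n := by exact_mod_cast ht
    obtain ⟨j, hj1, hj2⟩ := hS.exists_window z.1 ht0
    have hjJ : j ≤ J := hS.window_le hj1 (by linarith [hlong z hz])
    have hc := hτclose j hjJ
    rw [← φ.map_add', ← φ.map_add', hS.flow_eq z.1 _ j, hS.flow_eq z'.1 _ j] at hd
    rw [birkhoffSum_succ] at hj2
    have hρ := hS.ρb (f^[j] z.1)
    have hθ1 : θ ≤ 1 := min_le_right _ _
    have hdiff : |(t + z.2 - birkhoffSum f ρ j z.1) - (t + z'.2 - birkhoffSum f ρ j z'.1)| ≤ θ := by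
      have : (t + z.2 - birkhoffSum f ρ j z.1) - (t + z'.2 - birkhoffSum f ρ j z'.1) =
        -(τ z j - τ z' j) := by simp only [hτ]; ring
      rw [this, abs_neg]; exact hc
    have hbp := hS.b_pos
    have habs := abs_le.mp hdiff
    have := hθ ((t : ℝ) + z.2 - birkhoffSum f ρ j z.1) ⟨by linarith, by linarith⟩
      ((t : ℝ) + z'.2 - birkhoffSum f ρ j z'.1) ⟨by linarith [habs.2], by linarith [habs.1]⟩
      (f^[j] z.1) (f^[j] z'.1) (hdiff.trans (min_le_left _ _))
      ((hclose z hz z' hz' j hjJ).trans ((min_le_right _ _).trans (min_le_left _ _)))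
    linarith
  have hcard := Finset.card_le_card_of_injOn code hmaps hinj
  rw [Finset.card_product, Fintype.card_piFinset] at hcard
  simp only [Int.card_Icc, Finset.prod_const, Finset.card_univ, Fintype.card_fin] at hcard
  have h3 : ((1 : ℤ) + 1 - (-1)).toNat = 3 := by decide
  rw [h3] at hcard
  have hcard' : (Q.card : ℝ) ≤ ((Finset.Icc A B).card : ℝ) * 3 ^ (J / L) := by
    rw [Int.card_Icc]; exact_mod_cast hcard
  refine hcard'.trans ?_
  gcongr
  rw [← Real.log_le_iff_le_exp (by positivity), Real.log_pow]
  have h4 : ((J / L : ℕ) : ℝ) ≤ J / L := Nat.cast_div_le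
  have hl3 : 0 ≤ Real.log 3 := Real.log_nonneg (by norm_num)
  rw [div_lt_iff₀ hγ] at hL
  calc ((J / L : ℕ) : ℝ) * Real.log 3 ≤ (J / L) * (L * γ) := by gcongr
    _ = γ * J := by field_simp

end

/-! ### From entropy of the flow to weighted separated sets of the base -/

lemma eventually_log_affine (p q : ℝ) {κ : ℝ} (hκ : 0 < κ) :
    ∀ᶠ n : ℕ in atTop, Real.log (p * n + q) ≤ κ * n := by
  have h0 : ∀ᶠ n : ℕ in atTop, Real.log ((|p| + 1) * n + (|q| + 1)) ≤ κ * n := by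
    have hy : Tendsto (fun n : ℕ => (|p| + 1) * (n : ℝ) + (|q| + 1)) atTop atTop :=
      tendsto_atTop_add_const_right _ _
        (tendsto_natCast_atTop_atTop.const_mul_atTop (by positivity))
    have hlo := (Real.isLittleO_log_id_atTop.comp_tendsto hy).def
      (show 0 < κ / (2 * (|p| + 1)) by positivity)
    have hn : ∀ᶠ n : ℕ in atTop, (|q| + 1) / (|p| + 1) ≤ (n : ℝ) :=
      tendsto_natCast_atTop_atTop.eventually_ge_atTop _
    filter_upwards [hlo, hn] with n h1 h2
    rw [div_le_iff₀ (by positivity)] at h2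
    simp only [Function.comp, id, Real.norm_eq_abs] at h1
    have h3 : |(|p| + 1) * (n : ℝ) + (|q| + 1)| ≤ 2 * ((|p| + 1) * n) := by
      rw [abs_of_nonneg (by positivity)]; linarith
    calc _ ≤ _ := le_abs_self _
      _ ≤ _ := h1
      _ ≤ κ / (2 * (|p| + 1)) * (2 * ((|p| + 1) * n)) := by gcongr
      _ = κ * n := by field_simp
  filter_upwards [h0] with n hn
  refine le_trans ?_ hn
  rw [← Real.log_abs]
  rcases eq_or_ne (|p * n + q|) 0 with h | h
  · rw [h, Real.log_zero]
    refine Real.log_nonneg ?_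
    nlinarith [abs_nonneg p, abs_nonneg q, (Nat.cast_nonneg n : (0 : ℝ) ≤ n),
      mul_nonneg (abs_nonneg p) (Nat.cast_nonneg n : (0 : ℝ) ≤ n)]
  · refine Real.log_le_log (lt_of_le_of_ne (abs_nonneg _) h.symm) ?_
    have h1 := abs_add_le (p * n) q
    rw [abs_mul, Nat.abs_cast] at h1
    nlinarith [(Nat.cast_nonneg n : (0 : ℝ) ≤ n)]

lemma exists_fiber_card {α β : Type*} [DecidableEq β] {s : Finset α} {t : Finset β} {g : α → β}
    (hg : ∀ x ∈ s, g x ∈ t) (ht : t.Nonempty) :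
    ∃ y ∈ t, (s.card : ℝ) ≤ t.card * ({x ∈ s | g x = y}.card : ℝ) := by
  have htc : (0 : ℝ) < t.card := by exact_mod_cast ht.card_pos
  obtain ⟨y, hy, h⟩ := Finset.exists_le_card_fiber_of_nsmul_le_card_of_maps_to
    (b := (s.card : ℝ) / t.card) hg ht (by rw [nsmul_eq_mul]; field_simp; exact le_rfl)
  exact ⟨y, hy, by rwa [div_le_iff₀' htc] at h⟩

lemma flow_iter {Y : Type*} [TopologicalSpace Y] (φ : Flow ℝ Y) (j : ℕ) (x : Y) :
    (φ.toFun 1)^[j] x = φ.toFun (j : ℝ) x := by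
  induction j with
  | zero => simp [φ.map_zero']
  | succ j ih => rw [Function.iterate_succ_apply', ih, ← φ.map_add']; congr 1; push_cast; ring

section
variable {X Y : Type*} [MetricSpace X] [CompactSpace X] [MetricSpace Y] [CompactSpace Y]
  {f : X ≃ₜ X} {ρ : X → ℝ} {φ : Flow ℝ Y} {e : X → Y} {a b : ℝ}

/-- Coordinates `(x, s)` under the roof for the points of a separated set of the flow. -/
lemma Susp.sep_lift (hS : Susp f ρ φ e a b)
    {n : ℕ} {ε : ℝ} {Q : Finset Y} (hQ : IsDynSep (φ.toFun 1) n ε ↑Q) :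
    ∃ Q' : Finset (X × ℝ), Q'.card = Q.card ∧
      (∀ z ∈ Q', 0 ≤ z.2 ∧ z.2 ≤ b ∧ φ.toFun z.2 (e z.1) ∈ Q) ∧
      (∀ z ∈ Q', ∀ z' ∈ Q', z ≠ z' → ∃ t : ℕ, t ≤ n ∧
        ε < dist (φ.toFun t (φ.toFun z.2 (e z.1))) (φ.toFun t (φ.toFun z'.2 (e z'.1)))) := by
  classical
  choose x s h0 h1 h2 using hS.surj
  have hinj : Function.Injective (fun y => (x y, s y)) := by
    intro y y' h
    simp only [Prod.mk.injEq] at h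
    rw [← h2 y, ← h2 y', h.1, h.2]
  refine ⟨Q.image fun y => (x y, s y), Finset.card_image_of_injective _ hinj, ?_, ?_⟩
  · intro z hz
    obtain ⟨y, hy, rfl⟩ := Finset.mem_image.mp hz
    exact ⟨h0 y, (h1 y).le.trans (hS.ρb _), by rw [h2]; exact hy⟩
  · intro z hz z' hz' hne
    obtain ⟨y, hy, rfl⟩ := Finset.mem_image.mp hz
    obtain ⟨y', hy', rfl⟩ := Finset.mem_image.mp hz'
    obtain ⟨j, hj, hd⟩ := hQ hy hy' (fun h => hne (by rw [h]))
    refine ⟨j, hj, ?_⟩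
    simp only [h2]
    rwa [flow_iter, flow_iter] at hd

/-- If the flow has entropy more than `c`, the base has separated sets whose weights
`exp (-c S_J)` have exponentially large sums. -/
theorem Susp.exists_weighted (hS : Susp f ρ φ e a b)
    {c : ℝ} (hc : 0 ≤ c) (h : (c : EReal) < topEntropy (φ.toFun 1)) :
    ∃ δ > 0, ∃ γ > 0, ∀ J0 : ℕ, ∃ J ≥ J0, ∃ R : Finset X,
      (∀ x ∈ R, ∀ y ∈ R, x ≠ y → ∃ j ≤ J, δ < dist (f^[j] x) (f^[j] y)) ∧
      Real.exp (γ * J) ≤ ∑ x ∈ R, Real.exp (-(c * birkhoffSum f ρ J x)) := by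
  classical
  obtain ⟨ε, hε, c2, hc2, hfr⟩ := exists_of_lt_topEntropyOn h
  have ha := hS.a_pos
  have hb := hS.b_pos
  have hcc : 0 < c2 - c := sub_pos.mpr hc2
  set γ : ℝ := (c2 - c) * a / 4 with hγ
  have hγp : 0 < γ := by positivity
  obtain ⟨δ, hδ, C, hC, hdrift⟩ := hS.drift hε hγp
  refine ⟨δ / 2, by positivity, γ, hγp, fun J0 => ?_⟩
  have he1 := eventually_log_affine (1 / a) (b / a + 1) (show 0 < (c2 - c) / 4 by positivity)
  have he2 : ∀ᶠ n : ℕ in atTop, (max (J0 * b) ((Real.log C + 2 * b * c +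
      (c2 - c) / 2 * (b + a)) / ((c2 - c) / 4))) ≤ (n : ℝ) :=
    tendsto_natCast_atTop_atTop.eventually_ge_atTop _
  obtain ⟨n, hn, hn1, hn2⟩ := (hfr.and_eventually (he1.and he2)).exists
  have hn2a := (le_max_left _ _).trans hn2
  have hn2b := (le_max_right _ _).trans hn2
  rw [div_le_iff₀ (by positivity)] at hn2b
  obtain ⟨Q0, -, hQ0, hQ0c⟩ := exists_card_eq_sepCount (φ.toFun 1) univ n hε
  obtain ⟨Q, hQc, hQ1, hQ2⟩ := hS.sep_lift hQ0
  have hT : (0 : ℝ) ≤ n + b := by positivity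
  choose w hw1 hw2 using fun x : X => hS.exists_window x hT
  set t : Finset ℕ := Finset.range (⌊(n + b) / a⌋₊ + 1) with ht
  have hwt : ∀ z ∈ Q, w z.1 ∈ t := by
    intro z _
    rw [ht, Finset.mem_range, Nat.lt_succ_iff]
    refine Nat.le_floor ?_
    rw [le_div_iff₀ ha]
    exact (hS.le_sum _ _).trans (hw1 z.1)
  obtain ⟨j, hj, hfib⟩ := exists_fiber_card (g := fun z : X × ℝ => w z.1) hwt
    ⟨0, by simp [ht]⟩
  set QJ : Finset (X × ℝ) := {z ∈ Q | w z.1 = j} with hQJ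
  set J : ℕ := j + 1 with hJ
  have hQJw : ∀ z ∈ QJ, n + b < birkhoffSum f ρ J z.1 ∧ birkhoffSum f ρ J z.1 ≤ n + 2 * b := by
    intro z hz
    have hz' := (Finset.mem_filter.mp hz).2
    have h1 := hw1 z.1
    have h2 := hw2 z.1
    rw [hz'] at h1 h2
    refine ⟨h2, ?_⟩
    rw [hJ, birkhoffSum_succ]
    linarith [hS.ρb (f^[j] z.1)]
  obtain ⟨R, hRQ, hRs, hRm⟩ := exists_maximal_sep QJ
    (fun z z' => ∀ i ≤ J, dist (f^[i] z.1) (f^[i] z'.1) ≤ δ / 2)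
    (fun z i _ => by simp; positivity)
    (fun z z' hzz i hi => by rw [dist_comm]; exact hzz i hi)
  have hcount : (QJ.card : ℝ) ≤ (C * Real.exp (γ * J)) * R.card := by
    choose! r hr1 hr2 using hRm
    have := Finset.card_le_mul_card_image_of_maps_to (f := r) hr1 ⌊C * Real.exp (γ * J)⌋₊ (by
      intro y hy
      refine Nat.le_floor (hdrift n J _ ?_ ?_ ?_ ?_)
      · intro z hz
        have hz := (Finset.mem_filter.mp (Finset.mem_filter.mp hz).1).1
        exact ⟨(hQ1 z hz).1, (hQ1 z hz).2.1⟩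
      · intro z hz z' hz' i hi
        obtain ⟨hz1, hz2⟩ := Finset.mem_filter.mp hz
        obtain ⟨hz1', hz2'⟩ := Finset.mem_filter.mp hz'
        have h1 := hr2 z hz1 i hi
        have h2 := hr2 z' hz1' i hi
        rw [hz2] at h1
        rw [hz2'] at h2
        linarith [dist_triangle_right (f^[i] z.1) (f^[i] z'.1) (f^[i] y.1)]
      · intro z hz
        exact (hQJw z (Finset.mem_filter.mp hz).1).1.le
      · intro z hz z' hz' hne
        exact hQ2 z (Finset.mem_filter.mp (Finset.mem_filter.mp hz).1).1 z'
          (Finset.mem_filter.mp (Finset.mem_filter.mp hz').1).1 hne)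
    calc (QJ.card : ℝ) ≤ ((⌊C * Real.exp (γ * J)⌋₊ * R.card : ℕ) : ℝ) := by exact_mod_cast this
      _ ≤ _ := by
        push_cast
        gcongr
        exact Nat.floor_le (by positivity)
  have hfst : Set.InjOn Prod.fst (R : Set (X × ℝ)) := by
    intro z hz z' hz' hzz
    by_contra hne
    refine hRs hz hz' hne fun i _ => ?_
    rw [hzz]; simp; positivity
  have hQpos : 0 < (Q.card : ℝ) := by
    by_contra! h0
    have h1 : (Q.card : ℝ) = 0 := le_antisymm h0 (Nat.cast_nonneg _)
    have h1' : Q.card = 0 := by exact_mod_cast h1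
    -- the empty separated set is not of maximal size, since the flow has positive entropy
    rw [hQc, hQ0c] at h1'
    rw [h1', Nat.cast_zero, Real.log_zero] at hn
    have hY : IsEmpty Y := by
      by_contra hne
      rw [not_isEmpty_iff] at hne
      obtain ⟨y⟩ := hne
      have := card_le_sepCount (f := φ.toFun 1) (K := univ) (n := n) hε (Q := {y})
        (subset_univ _) (by simp [IsDynSep])
      simp [h1'] at this
    have htop : topEntropyOn (φ.toFun 1) univ ≤ ((0 : ℝ) : EReal) := by
      refine topEntropyOn_le_of fun ε' hε' c' hc' => Eventually.of_forall fun m => ?_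
      obtain ⟨Q1, -, -, hQ1⟩ := exists_card_eq_sepCount (φ.toFun 1) univ m hε'
      have : Q1 = ∅ := Finset.eq_empty_of_isEmpty Q1
      rw [this] at hQ1
      rw [← hQ1]
      simp; positivity
    have := h.trans_le htop
    rw [EReal.coe_lt_coe_iff] at this
    linarith
  refine ⟨J, ?_, R.image Prod.fst, ?_, ?_⟩
  · obtain ⟨z, hz⟩ : QJ.Nonempty := by
      rw [Finset.nonempty_iff_ne_empty]
      intro h0
      rw [h0] at hfib
      simp at hfib
      rw [hfib] at hQpos
      simp at hQpos
    have h1 := (hQJw z hz).1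
    have h2 := hS.sum_le J z.1
    have h3 : (J0 : ℝ) * b < J * b := by linarith
    have h4 : (J0 : ℝ) < J := lt_of_mul_lt_mul_right h3 hb.le
    exact_mod_cast h4.le
  · intro x hx y hy hne
    obtain ⟨z, hz, rfl⟩ := Finset.mem_image.mp hx
    obtain ⟨z', hz', rfl⟩ := Finset.mem_image.mp hy
    have := hRs hz hz' (fun h => hne (by rw [h]))
    push Not at this
    exact this
  · rw [Finset.sum_image hfst]
    have hsum : (R.card : ℝ) * Real.exp (-(c * (n + 2 * b))) ≤
        ∑ z ∈ R, Real.exp (-(c * birkhoffSum f ρ J z.1)) := by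
      rw [← nsmul_eq_mul]
      refine Finset.card_nsmul_le_sum _ _ _ fun z hz => ?_
      gcongr
      exact (hQJw z (hRQ hz)).2
    refine le_trans ?_ hsum
    -- taking logarithms, everything reduces to a linear inequality in `n`
    have hQexp : Real.exp (c2 * n) ≤ Q.card := by
      rw [← Real.le_log_iff_exp_le hQpos, hQc, hQ0c]; exact hn
    have htc : (t.card : ℝ) ≤ 1 / a * n + (b / a + 1) := by
      rw [ht, Finset.card_range]; push_cast
      have := Nat.floor_le (show 0 ≤ ((n : ℝ) + b) / a by positivity)
      calc _ ≤ (n + b) / a + 1 := by linarith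
        _ = _ := by ring
    have hlt : (t.card : ℝ) ≤ Real.exp ((c2 - c) / 4 * n) := by
      refine htc.trans ?_
      rw [← Real.log_le_iff_le_exp (by positivity)]; exact hn1
    have hJn : γ * J ≤ (c2 - c) / 4 * (n + b + a) := by
      have : (J : ℝ) * a ≤ n + b + a := by
        rw [ht, Finset.mem_range, Nat.lt_succ_iff] at hj
        have h1 : (j : ℝ) ≤ (n + b) / a :=
          (Nat.cast_le.mpr hj).trans (Nat.floor_le (by positivity))
        rw [le_div_iff₀ ha] at h1
        rw [hJ]; push_cast; linarith
      rw [hγ]; nlinarith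
    have hall : Real.exp (c2 * n) ≤ Real.exp ((c2 - c) / 4 * n) *
        ((Real.exp (Real.log C) * Real.exp (γ * J)) * R.card) := by
      rw [Real.exp_log hC]
      refine hQexp.trans (hfib.trans ?_)
      exact mul_le_mul hlt hcount (Nat.cast_nonneg _) (by positivity)
    have hR : Real.exp (c2 * n - (c2 - c) / 4 * n - Real.log C - γ * J) ≤ R.card := by
      rw [Real.exp_sub, Real.exp_sub, Real.exp_sub, div_div, div_div,
        div_le_iff₀ (by positivity)]
      calc _ ≤ _ := hall
        _ = _ := by ring
    calc Real.exp (γ * J) ≤ Real.exp (c2 * n - (c2 - c) / 4 * n - Real.log C - γ * J) *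
          Real.exp (-(c * (n + 2 * b))) := by
          rw [← Real.exp_add, Real.exp_le_exp]
          nlinarith
      _ ≤ _ := by gcongr

end

/-! ### Returns to a cell -/

section
variable {X : Type*} [MetricSpace X] {f : X → X} {ρ : X → ℝ} {b c η δ : ℝ} {K : ℕ}
  {κ : X → Fin K}

/-- Number of keys (cell, last visit time, quantized return time) for orbits of length `m`. -/
noncomputable def keyCount (K : ℕ) (b η : ℝ) (m : ℕ) : ℕ := (K + 1) * (m + 1) * (⌊m * b / η⌋₊ + 1)

lemma keyCount_mono (hb : 0 ≤ b) (hη : 0 < η) {m m' : ℕ} (h : m ≤ m') :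
    keyCount K b η m ≤ keyCount K b η m' := by
  unfold keyCount
  gcongr

/-- If orbit segments returning to their initial cell are never numerous, then by removing the
cells one at a time, neither are general orbit segments. -/
theorem weighted_le (hρ0 : ∀ x, 0 ≤ ρ x) (hρb : ∀ x, ρ x ≤ b) (hb : 0 ≤ b) (hc : 0 ≤ c) (hη : 0 < η)
    (hδ : 0 < δ)
    (hκ : ∀ x y, κ x = κ y → dist x y ≤ δ)
    (H : ∀ (l : ℕ) (U : Fin K) (i : ℕ) (R : Finset X), 1 ≤ l →
      (∀ x ∈ R, κ x = U ∧ κ (f^[l] x) = U ∧ i * η ≤ birkhoffSum f ρ l x ∧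
        birkhoffSum f ρ l x < (i + 1) * η) →
      (∀ x ∈ R, ∀ y ∈ R, x ≠ y → ∃ j < l, δ / 2 < dist (f^[j] x) (f^[j] y)) →
      (R.card : ℝ) ≤ Real.exp (c * ((i + 1) * η + l * η)))
    (s : ℕ) : ∀ (S : Finset (Fin K)) (m : ℕ) (Q : Finset X), S.card = s →
      (∀ x ∈ Q, ∀ j < m, κ (f^[j] x) ∈ S) →
      (∀ x ∈ Q, ∀ y ∈ Q, x ≠ y → ∃ j < m, δ < dist (f^[j] x) (f^[j] y)) →
      ∑ x ∈ Q, Real.exp (-(c * birkhoffSum f ρ m x)) ≤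
        (keyCount K b η m : ℝ) ^ s * Real.exp (c * η * (m + s)) := by
  classical
  have hS0 : ∀ m x, 0 ≤ birkhoffSum f ρ m x := fun m x => Finset.sum_nonneg fun j _ => hρ0 _
  have hSb : ∀ m x, birkhoffSum f ρ m x ≤ m * b := fun m x => by
    have := Finset.sum_le_card_nsmul (Finset.range m) (fun j => ρ (f^[j] x)) b fun j _ => hρb _
    simpa [birkhoffSum] using this
  have hP1 : ∀ m, (1 : ℝ) ≤ keyCount K b η m := fun m => by
    have : 1 ≤ keyCount K b η m := Nat.one_le_iff_ne_zero.mpr (by unfold keyCount; positivity)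
    exact_mod_cast this
  have hH : ∀ (l : ℕ) (U : Fin K) (i : ℕ) (R : Finset X),
      (∀ x ∈ R, κ x = U ∧ κ (f^[l] x) = U ∧ i * η ≤ birkhoffSum f ρ l x ∧
        birkhoffSum f ρ l x < (i + 1) * η) →
      (∀ x ∈ R, ∀ y ∈ R, x ≠ y → ∃ j < l, δ / 2 < dist (f^[j] x) (f^[j] y)) →
      (R.card : ℝ) ≤ Real.exp (c * ((i + 1) * η + l * η)) := by
    intro l U i R h1 h2
    rcases Nat.eq_zero_or_pos l with rfl | hl
    · have : R.card ≤ 1 := Finset.card_le_one.mpr fun x hx y hy => by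
        by_contra hne
        obtain ⟨j, hj, -⟩ := h2 x hx y hy hne
        omega
      refine le_trans (b := 1) (by exact_mod_cast this) (Real.one_le_exp (by positivity))
    · exact H l U i R hl h1 h2
  have hm0 : ∀ (s : ℕ) (Q : Finset X),
      (∀ x ∈ Q, ∀ y ∈ Q, x ≠ y → ∃ j < 0, δ < dist (f^[j] x) (f^[j] y)) →
      ∑ x ∈ Q, Real.exp (-(c * birkhoffSum f ρ 0 x)) ≤
        (keyCount K b η 0 : ℝ) ^ s * Real.exp (c * η * ((0 : ℕ) + s)) := by
    intro s Q h
    have : Q.card ≤ 1 := Finset.card_le_one.mpr fun x hx y hy => by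
        by_contra hne
        obtain ⟨j, hj, -⟩ := h x hx y hy hne
        omega
    have h1 : ∑ x ∈ Q, Real.exp (-(c * birkhoffSum f ρ 0 x)) ≤ 1 := by
      simp; exact_mod_cast this
    refine h1.trans (one_le_mul_of_one_le_of_one_le (one_le_pow₀ (hP1 0)) (Real.one_le_exp ?_))
    positivity
  induction s with
  | zero =>
    intro S m Q hS hQ hsep
    rcases Nat.eq_zero_or_pos m with rfl | hm
    · exact hm0 0 Q hsep
    · have : Q = ∅ := by
        rw [Finset.eq_empty_iff_forall_notMem]
        intro x hx
        have := hQ x hx 0 hm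
        rw [Finset.card_eq_zero.mp hS] at this
        simp at this
      rw [this, Finset.sum_empty]; positivity
  | succ s ih =>
    intro S m Q hS hQ hsep
    rcases Nat.eq_zero_or_pos m with rfl | hm
    · exact hm0 (s + 1) Q hsep
    have hlast : ∀ x, ∃ l < m, κ (f^[l] x) = κ x ∧ ∀ j, l < j → j < m → κ (f^[j] x) ≠ κ x := by
      intro x
      obtain ⟨l, hl, hmax⟩ := Finset.exists_max_image
        ({l ∈ Finset.range m | κ (f^[l] x) = κ x}) id ⟨0, by simp [hm]⟩
      rw [Finset.mem_filter, Finset.mem_range] at hl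
      refine ⟨l, hl.1, hl.2, fun j hj hjm hκj => ?_⟩
      have := hmax j (by simp [hjm, hκj])
      simp at this; omega
    choose L hL1 hL2 hL3 using hlast
    set key : X → Fin K × ℕ × ℕ := fun x => (κ x, L x, ⌊birkhoffSum f ρ (L x) x / η⌋₊) with hkey
    set t : Finset (Fin K × ℕ × ℕ) :=
      Finset.univ ×ˢ (Finset.range m ×ˢ Finset.range (⌊m * b / η⌋₊ + 1)) with ht
    have hmaps : ∀ x ∈ Q, key x ∈ t := by
      intro x _
      simp only [ht, hkey, Finset.mem_product, Finset.mem_univ, Finset.mem_range, true_and,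
        Nat.lt_succ_iff]
      refine ⟨hL1 x, Nat.floor_le_floor ?_⟩
      gcongr
      refine (hSb _ _).trans ?_
      gcongr
      exact (hL1 x).le
    rw [← Finset.sum_fiberwise_of_maps_to hmaps]
    have htc : (t.card : ℝ) ≤ keyCount K b η m := by
      have : t.card ≤ keyCount K b η m := by
        rw [ht, Finset.card_product, Finset.card_product, Finset.card_univ, Fintype.card_fin,
          Finset.card_range, Finset.card_range, keyCount, mul_assoc]
        gcongr <;> omega
      exact_mod_cast this
    have hgroup : ∀ g ∈ t, ∑ x ∈ Q with key x = g, Real.exp (-(c * birkhoffSum f ρ m x)) ≤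
        (keyCount K b η m : ℝ) ^ s * Real.exp (c * η * (m + (s + 1 : ℕ))) := by
      rintro ⟨U, l, i⟩ hg
      set G : Finset X := {x ∈ Q | key x = (U, l, i)} with hG
      rcases G.eq_empty_or_nonempty with h0 | ⟨x0, hx0⟩
      · rw [h0, Finset.sum_empty]; positivity
      have hGp : ∀ x ∈ G, x ∈ Q ∧ κ x = U ∧ L x = l ∧ i * η ≤ birkhoffSum f ρ l x ∧
          birkhoffSum f ρ l x < (i + 1) * η := by
        intro x hx
        obtain ⟨hx1, hx2⟩ := Finset.mem_filter.mp hx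
        simp only [hkey, Prod.mk.injEq] at hx2
        obtain ⟨h1, h2, h3⟩ := hx2
        rw [h2] at h3
        refine ⟨hx1, h1, h2, ?_, ?_⟩
        · rw [← le_div_iff₀ hη, ← h3]
          exact Nat.floor_le (div_nonneg (hS0 _ _) hη.le)
        · rw [← div_lt_iff₀ hη, ← h3]
          exact Nat.lt_floor_add_one _
      have hlm : l < m := by
        have := hL1 x0
        rwa [(hGp x0 hx0).2.2.1] at this
      have hUS : U ∈ S := by
        have h1 := hQ x0 (hGp x0 hx0).1 0 hm
        simp only [Function.iterate_zero, id] at h1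
        rwa [(hGp x0 hx0).2.1] at h1
      obtain ⟨R, hRG, hRs, hRm⟩ := exists_maximal_sep G
        (fun x y => ∀ j < l, dist (f^[j] x) (f^[j] y) ≤ δ / 2)
        (fun z j _ => by simp; positivity)
        (fun z z' hzz j hj => by rw [dist_comm]; exact hzz j hj)
      have hRc : (R.card : ℝ) ≤ Real.exp (c * ((i + 1) * η + l * η)) := by
        refine hH l U i R (fun x hx => ?_) fun x hx y hy hne => ?_
        · obtain ⟨_, h1, h2, h3⟩ := hGp x (hRG hx)
          have h4 := hL2 x
          rw [h2, h1] at h4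
          exact ⟨h1, h4, h3⟩
        · have := hRs hx hy hne
          push Not at this
          exact this
      choose! r hr1 hr2 using hRm
      rw [← Finset.sum_fiberwise_of_maps_to hr1]
      have hclass : ∀ y ∈ R, ∑ x ∈ G with r x = y, Real.exp (-(c * birkhoffSum f ρ m x)) ≤
          Real.exp (-(c * (i * η))) * ((keyCount K b η m : ℝ) ^ s *
            Real.exp (c * η * ((m - (l + 1) : ℕ) + s))) := by
        intro y hy
        set F : Finset X := {x ∈ G | r x = y} with hF
        have hFG : ∀ x ∈ F, x ∈ G := fun x hx => (Finset.mem_filter.mp hx).1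
        -- points of one class can only be separated after the last visit to the cell
        have hsepF : ∀ x ∈ F, ∀ x' ∈ F, x ≠ x' → ∃ j < m - (l + 1),
            δ < dist (f^[j] (f^[l + 1] x)) (f^[j] (f^[l + 1] x')) := by
          intro x hx x' hx' hne
          have hxG := hGp x (hFG x hx)
          have hxG' := hGp x' (hFG x' hx')
          obtain ⟨j, hj, hd⟩ := hsep x hxG.1 x' hxG'.1 hne
          have hjl : l < j := by
            by_contra! hjl
            rcases hjl.lt_or_eq with h | h
            · have h1 := hr2 x (hFG x hx) j h
              have h2 := hr2 x' (hFG x' hx') j h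
              rw [(Finset.mem_filter.mp hx).2] at h1
              rw [(Finset.mem_filter.mp hx').2] at h2
              linarith [dist_triangle_right (f^[j] x) (f^[j] x') (f^[j] y)]
            · have h1 := hL2 x
              have h2 := hL2 x'
              rw [hxG.2.2.1, hxG.2.1] at h1
              rw [hxG'.2.2.1, hxG'.2.1] at h2
              rw [h] at hd
              linarith [hκ _ _ (h1.trans h2.symm)]
          refine ⟨j - (l + 1), by omega, ?_⟩
          rw [← Function.iterate_add_apply, ← Function.iterate_add_apply,
            show j - (l + 1) + (l + 1) = j by omega]
          exact hd
        have hinjF : Set.InjOn (f^[l + 1]) (F : Set X) := by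
          intro x hx x' hx' hxx
          by_contra hne
          obtain ⟨j, -, hd⟩ := hsepF x hx x' hx' hne
          rw [hxx, dist_self] at hd
          linarith
        have hrec := ih (S.erase U) (m - (l + 1)) (F.image f^[l + 1])
          (by rw [Finset.card_erase_of_mem hUS, hS]; omega)
          (by
            intro z hz j hj
            obtain ⟨x, hx, rfl⟩ := Finset.mem_image.mp hz
            have hxG := hGp x (hFG x hx)
            rw [← Function.iterate_add_apply]
            refine Finset.mem_erase.mpr ⟨?_, hQ x hxG.1 _ (by omega)⟩
            have := hL3 x (j + (l + 1)) (by rw [hxG.2.2.1]; omega) (by omega)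
            rwa [hxG.2.1] at this)
          (by
            intro z hz z' hz' hne
            obtain ⟨x, hx, rfl⟩ := Finset.mem_image.mp hz
            obtain ⟨x', hx', rfl⟩ := Finset.mem_image.mp hz'
            exact hsepF x hx x' hx' fun h => hne (by rw [h]))
        rw [Finset.sum_image hinjF] at hrec
        calc ∑ x ∈ F, Real.exp (-(c * birkhoffSum f ρ m x))
            ≤ ∑ x ∈ F, Real.exp (-(c * (i * η))) *
              Real.exp (-(c * birkhoffSum f ρ (m - (l + 1)) (f^[l + 1] x))) := by
              refine Finset.sum_le_sum fun x hx => ?_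
              rw [← Real.exp_add, Real.exp_le_exp]
              have hxG := hGp x (hFG x hx)
              have h1 : birkhoffSum f ρ m x = birkhoffSum f ρ (l + 1) x +
                  birkhoffSum f ρ (m - (l + 1)) (f^[l + 1] x) := by
                rw [← birkhoffSum_add]; congr 1; omega
              have h2 : i * η ≤ birkhoffSum f ρ (l + 1) x := by
                rw [birkhoffSum_succ]; linarith [hxG.2.2.2.1, hρ0 (f^[l] x)]
              rw [h1]
              nlinarith
          _ = Real.exp (-(c * (i * η))) * ∑ x ∈ F,
              Real.exp (-(c * birkhoffSum f ρ (m - (l + 1)) (f^[l + 1] x))) := by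
              rw [Finset.mul_sum]
          _ ≤ Real.exp (-(c * (i * η))) * ((keyCount K b η (m - (l + 1)) : ℝ) ^ s *
            Real.exp (c * η * ((m - (l + 1) : ℕ) + s))) := by gcongr
          _ ≤ _ := by
            gcongr
            exact keyCount_mono hb hη (by omega)
      calc _ ≤ R.card • (Real.exp (-(c * (i * η))) * ((keyCount K b η m : ℝ) ^ s *
            Real.exp (c * η * ((m - (l + 1) : ℕ) + s)))) := Finset.sum_le_card_nsmul _ _ _ hclass
        _ ≤ Real.exp (c * ((i + 1) * η + l * η)) * (Real.exp (-(c * (i * η))) *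
            ((keyCount K b η m : ℝ) ^ s * Real.exp (c * η * ((m - (l + 1) : ℕ) + s)))) := by
            rw [nsmul_eq_mul]; gcongr
        _ = (keyCount K b η m : ℝ) ^ s * (Real.exp (c * ((i + 1) * η + l * η)) *
            Real.exp (-(c * (i * η))) * Real.exp (c * η * ((m - (l + 1) : ℕ) + s))) := by ring
        _ ≤ _ := by
            gcongr
            rw [← Real.exp_add, ← Real.exp_add, Real.exp_le_exp, Nat.cast_sub hlm]
            push_cast
            have : 0 ≤ c * η := by positivity
            nlinarith
    calc _ ≤ t.card • ((keyCount K b η m : ℝ) ^ s * Real.exp (c * η * (m + (s + 1 : ℕ)))) :=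
          Finset.sum_le_card_nsmul _ _ _ hgroup
      _ ≤ keyCount K b η m * ((keyCount K b η m : ℝ) ^ s *
          Real.exp (c * η * (m + (s + 1 : ℕ)))) := by
          rw [nsmul_eq_mul]; gcongr
      _ = _ := by rw [pow_succ]; ring

/-- There are many separated orbit segments with nearly the same return time that come back to
their initial cell. -/
theorem exists_return (hρ0 : ∀ x, 0 ≤ ρ x) (hρb : ∀ x, ρ x ≤ b) (hb : 0 ≤ b) (hc : 0 ≤ c)
    (hη : 0 < η) (hδ : 0 < δ) (hκ : ∀ x y, κ x = κ y → dist x y ≤ δ) {γ : ℝ} (hγ : 0 < γ)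
    (hcη : c * η ≤ γ / 4)
    (hw : ∀ J0 : ℕ, ∃ J ≥ J0, ∃ R : Finset X,
      (∀ x ∈ R, ∀ y ∈ R, x ≠ y → ∃ j ≤ J, δ < dist (f^[j] x) (f^[j] y)) ∧
      Real.exp (γ * J) ≤ ∑ x ∈ R, Real.exp (-(c * birkhoffSum f ρ J x))) :
    ∃ (l : ℕ) (i : ℕ) (R : Finset X), 1 ≤ l ∧
      (∀ x ∈ R, ∀ y ∈ R, κ (f^[l] x) = κ y) ∧
      (∀ x ∈ R, birkhoffSum f ρ l x < (i + 1) * η) ∧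
      (∀ x ∈ R, ∀ y ∈ R, x ≠ y → ∃ j < l, δ / 2 < dist (f^[j] x) (f^[j] y)) ∧
      Real.exp (c * ((i + 1) * η + l * η)) < (R.card : ℝ) := by
  classical
  by_contra! hcon
  have hwl := weighted_le (κ := κ) hρ0 hρb hb hc hη hδ hκ (fun l U i R hl h1 h2 =>
    hcon l i R hl (fun x hx y hy => by rw [(h1 x hx).2.1, (h1 y hy).1])
      (fun x hx => (h1 x hx).2.2.2) h2) K
  have hg : 0 < γ / (8 * (K + 1)) := by positivity
  have e1 := eventually_log_affine 1 2 hg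
  have e2 := eventually_log_affine (b / η) (b / η + 1) hg
  have e3 : ∀ᶠ n : ℕ in atTop,
      (c * b + K * Real.log (K + 1) + c * η * (1 + K)) / (γ / 4) ≤ (n : ℝ) :=
    tendsto_natCast_atTop_atTop.eventually_ge_atTop _
  obtain ⟨N, hN⟩ := ((e1.and e2).and (e3.and (eventually_ge_atTop 1))).exists_forall_of_atTop
  obtain ⟨J, hJ, R, hR, hZ⟩ := hw N
  obtain ⟨⟨h1, h2⟩, h3, h4⟩ := hN J hJ
  have hZ' := hwl Finset.univ (J + 1) R (by simp) (by simp) (fun x hx y hy hne => by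
    obtain ⟨j, hj, hd⟩ := hR x hx y hy hne
    exact ⟨j, by omega, hd⟩)
  have hle : Real.exp (γ * J) * Real.exp (-(c * b)) ≤
      (keyCount K b η (J + 1) : ℝ) ^ K * Real.exp (c * η * ((J + 1 : ℕ) + K)) := by
    refine le_trans ?_ hZ'
    calc _ ≤ (∑ x ∈ R, Real.exp (-(c * birkhoffSum f ρ J x))) * Real.exp (-(c * b)) := by gcongr
      _ ≤ _ := by
        rw [Finset.sum_mul]
        refine Finset.sum_le_sum fun x _ => ?_
        rw [← Real.exp_add, Real.exp_le_exp, birkhoffSum_succ]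
        nlinarith [hρb (f^[J] x)]
  have hkc : Real.log (keyCount K b η (J + 1) : ℝ) ≤ Real.log (K + 1) +
      γ / (8 * (K + 1)) * J + γ / (8 * (K + 1)) * J := by
    unfold keyCount
    push_cast
    rw [Real.log_mul (by positivity) (by positivity), Real.log_mul (by positivity) (by positivity)]
    have h5 : Real.log ((J : ℝ) + 1 + 1) ≤ γ / (8 * (K + 1)) * J := by
      refine le_trans (le_of_eq ?_) h1; congr 1; ring
    have h6 : Real.log ((⌊((J : ℝ) + 1) * b / η⌋₊ : ℝ) + 1) ≤ γ / (8 * (K + 1)) * J := by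
      refine le_trans (Real.log_le_log (by positivity) ?_) h2
      have := Nat.floor_le (show 0 ≤ ((J : ℝ) + 1) * b / η by positivity)
      calc _ ≤ ((J : ℝ) + 1) * b / η + 1 := by linarith
        _ = _ := by ring
    linarith
  have hkpos : (0 : ℝ) < keyCount K b η (J + 1) := by
    have : 0 < keyCount K b η (J + 1) := by unfold keyCount; positivity
    exact_mod_cast this
  have hlog := Real.log_le_log (by positivity) hle
  rw [Real.log_mul (by positivity) (by positivity), Real.log_mul (by positivity) (by positivity),
    Real.log_pow, Real.log_exp, Real.log_exp, Real.log_exp] at hlog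
  push_cast at hlog
  have hKl : (K : ℝ) * Real.log (keyCount K b η (J + 1) : ℝ) ≤
      K * Real.log (K + 1) + γ / 4 * J := by
    calc _ ≤ (K : ℝ) * (Real.log (K + 1) +
      γ / (8 * (K + 1)) * J + γ / (8 * (K + 1)) * J) := by gcongr
      _ = K * Real.log (K + 1) + (K / (K + 1)) * (γ / 4 * J) := by field_simp; ring
      _ ≤ K * Real.log (K + 1) + 1 * (γ / 4 * J) := by
        gcongr
        rw [div_le_one (by positivity)]; linarith
      _ = _ := by ring
  rw [div_le_iff₀ (by positivity)] at h3
  have h4' : (1 : ℝ) ≤ J := by exact_mod_cast h4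
  nlinarith

end

/-! ### Horseshoes of the base homeomorphism -/

/-- The shift by `i` places. -/
def sh {A : Type*} (i : ℤ) (a : ℤ → A) : ℤ → A := fun n => a (n + i)

lemma sh_sh {A : Type*} (i j : ℤ) (a : ℤ → A) : sh i (sh j a) = sh (i + j) a := by
  funext n; simp only [sh]; congr 1; ring

lemma sh_zero {A : Type*} (a : ℤ → A) : sh 0 a = a := by
  funext n; simp [sh]

section
variable {X : Type*} [MetricSpace X] {f : X ≃ₜ X}

lemma zpow_natCast_apply (n : ℕ) (x : X) : (f ^ (n : ℤ)) x = f^[n] x := by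
  induction n with
  | zero => simp
  | succ n ih =>
    rw [Function.iterate_succ_apply', ← ih, add_comm, Nat.cast_add, zpow_add]; simp

lemma zpow_add_apply (n m : ℤ) (x : X) : (f ^ (n + m)) x = (f ^ n) ((f ^ m) x) := by
  rw [zpow_add]; rfl

/-- Uniform expansivity with constant `ex`: orbits that are `ex`-close for a long time are close. -/
def UExp (f : X ≃ₜ X) (ex : ℝ) : Prop :=
  ∀ η > 0, ∃ M : ℕ, ∀ x y : X,
    (∀ n : ℤ, -(M : ℤ) ≤ n → n ≤ M → dist ((f ^ n) x) ((f ^ n) y) ≤ ex) → dist x y ≤ η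

lemma uexp_of_expansive [CompactSpace X] {ex : ℝ}
    (h : ∀ x y : X, (∀ n : ℤ, dist ((f ^ n) x) ((f ^ n) y) ≤ ex) → x = y) : UExp f ex := by
  intro η hη
  by_contra! hcon
  set A : ℕ → Set (X × X) := fun M => {p | η ≤ dist p.1 p.2 ∧
    ∀ n : ℤ, -(M : ℤ) ≤ n → n ≤ M → dist ((f ^ n) p.1) ((f ^ n) p.2) ≤ ex} with hA
  have hcl : ∀ M, IsClosed (A M) := by
    intro M
    have hAM : A M = {p : X × X | η ≤ dist p.1 p.2} ∩ ⋂ (n : ℤ) (_ : -(M : ℤ) ≤ n) (_ : n ≤ M),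
        {p : X × X | dist ((f ^ n) p.1) ((f ^ n) p.2) ≤ ex} := by
      ext p; simp [hA]
    rw [hAM]
    refine (isClosed_le continuous_const continuous_dist).inter ?_
    refine isClosed_iInter fun n => isClosed_iInter fun _ => isClosed_iInter fun _ => ?_
    exact isClosed_le (((f ^ n).continuous.comp continuous_fst).dist
      ((f ^ n).continuous.comp continuous_snd)) continuous_const
  obtain ⟨p, hp⟩ := IsCompact.nonempty_iInter_of_sequence_nonempty_isCompact_isClosed A
    (fun M p hp => ⟨hp.1, fun n h1 h2 => hp.2 n (by push_cast; omega) (by push_cast; omega)⟩)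
    (fun M => by
      obtain ⟨x, y, h1, h2⟩ := hcon M
      exact ⟨(x, y), h2.le, h1⟩)
    (hcl 0).isCompact hcl
  rw [mem_iInter] at hp
  have heq : p.1 = p.2 := h _ _ fun n => (hp n.natAbs).2 n (by omega) (by omega)
  have := (hp 0).1
  rw [heq, dist_self] at this
  linarith

end

/-- A horseshoe for the iterate `f^m`: a semiconjugacy from the full shift on `N` symbols, such that
the orbit segments of length `m` coded by the same symbol are `ex`-close and those coded by different
symbols are `δ`-separated. -/
structure HS {X : Type*} [MetricSpace X] (f : X ≃ₜ X) (ex δ : ℝ) where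
  /-- number of symbols -/
  N : ℕ
  /-- length of the orbit segments -/
  m : ℕ
  /-- coding map -/
  π : (ℤ → Fin N) → X
  hN : 0 < N
  hm : 0 < m
  shift : ∀ a, π (sh 1 a) = f^[m] (π a)
  close : ∀ a b, a 0 = b 0 → ∀ j < m, dist (f^[j] (π a)) (f^[j] (π b)) ≤ ex
  sep : ∀ a b, a 0 ≠ b 0 → ∃ j < m, δ < dist (f^[j] (π a)) (f^[j] (π b))

namespace HS
variable {X : Type*} [MetricSpace X] {f : X ≃ₜ X} {ex δ : ℝ} (H : HS f ex δ)

lemma shift_int (i : ℤ) (a : ℤ → Fin H.N) : H.π (sh i a) = (f ^ (H.m * i)) (H.π a) := by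
  have key : ∀ (i : ℤ), H.π (sh (i + 1) a) = (f ^ (H.m : ℤ)) (H.π (sh i a)) := by
    intro i
    rw [zpow_natCast_apply, ← H.shift, sh_sh, add_comm]
  induction i using Int.induction_on with
  | zero => simp [sh_zero]
  | succ i ih => rw [key, ih, ← zpow_add_apply]; congr 2; ring
  | pred i ih =>
    apply (f ^ (H.m : ℤ)).injective
    rw [← key, sub_add_cancel, ih, ← zpow_add_apply]; congr 2; ring

lemma shift_nat (i : ℕ) (a : ℤ → Fin H.N) : H.π (sh i a) = f^[H.m * i] (H.π a) := by
  rw [shift_int, ← zpow_natCast_apply]; push_cast; rfl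

lemma zpow_eq (j : ℤ) (a : ℤ → Fin H.N) :
    (f ^ j) (H.π a) = f^[(j % H.m).toNat] (H.π (sh (j / H.m) a)) := by
  have hm : (0 : ℤ) < H.m := by exact_mod_cast H.hm
  rw [shift_int, ← zpow_natCast_apply, ← zpow_add_apply, Int.toNat_of_nonneg
    (Int.emod_nonneg _ hm.ne'), Int.emod_add_mul_ediv]

lemma close_int {a b : ℤ → Fin H.N} {lo hi : ℤ} (h : ∀ i, lo ≤ i → i < hi → a i = b i) {j : ℤ}
    (h1 : H.m * lo ≤ j) (h2 : j < H.m * hi) : dist ((f ^ j) (H.π a)) ((f ^ j) (H.π b)) ≤ ex := by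
  have hm : (0 : ℤ) < H.m := by exact_mod_cast H.hm
  rw [zpow_eq, zpow_eq]
  refine H.close _ _ ?_ _ ?_
  · simp only [sh, zero_add]
    refine h _ ?_ ?_
    · rw [Int.le_ediv_iff_mul_le hm]; linarith
    · rw [Int.ediv_lt_iff_lt_mul hm]; linarith
  · have := Int.emod_lt_of_pos j hm
    have h0 := Int.emod_nonneg j hm.ne'
    omega

lemma close_window {η : ℝ} {M : ℕ}
    (hM : ∀ x y : X, (∀ n : ℤ, -(M : ℤ) ≤ n → n ≤ M → dist ((f ^ n) x) ((f ^ n) y) ≤ ex) →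
      dist x y ≤ η) {a b : ℤ → Fin H.N} {lo hi : ℤ}
    (h : ∀ i, lo ≤ i → i < hi → a i = b i) {j : ℤ}
    (h1 : H.m * lo + M ≤ j) (h2 : j + M < H.m * hi) :
    dist ((f ^ j) (H.π a)) ((f ^ j) (H.π b)) ≤ η := by
  refine hM _ _ fun n hn1 hn2 => ?_
  rw [← zpow_add_apply, ← zpow_add_apply]
  exact H.close_int h (by linarith) (by linarith)

lemma continuous_π (hu : UExp f ex) : Continuous H.π := by
  have hm : (1 : ℤ) ≤ H.m := by exact_mod_cast H.hm
  rw [continuous_iff_continuousAt]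
  intro a
  rw [ContinuousAt, Metric.tendsto_nhds]
  intro η hη
  obtain ⟨M, hM⟩ := hu (η / 2) (by positivity)
  have hev : ∀ᶠ b in 𝓝 a, ∀ i ∈ Finset.Icc (-(M : ℤ)) M, b i = a i := by
    rw [Filter.eventually_all_finset]
    intro i _
    have : Tendsto (fun b : ℤ → Fin H.N => b i) (𝓝 a) (𝓝 (a i)) := (continuous_apply i).tendsto a
    rw [nhds_discrete (Fin H.N)] at this
    exact (tendsto_pure.mp this)
  filter_upwards [hev] with b hb
  have := H.close_window hM (a := b) (b := a) (lo := -M) (hi := M + 1)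
    (fun i h1 h2 => hb i (Finset.mem_Icc.mpr ⟨h1, by omega⟩)) (j := 0) (by nlinarith)
    (by nlinarith)
  simp at this
  linarith

/-- For long words, Birkhoff sums along a word are determined by the word up to a small relative
error. -/
lemma exists_osc [CompactSpace X] (hu : UExp f ex) {h : X → ℝ} (hh : Continuous h) {ε : ℝ}
    (hε : 0 < ε) : ∃ m0 : ℕ, ∀ H : HS f ex δ, m0 ≤ H.m → ∀ a b : ℤ → Fin H.N, a 0 = b 0 →
      |birkhoffSum f h H.m (H.π a) - birkhoffSum f h H.m (H.π b)| ≤ ε * H.m := by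
  have huc := CompactSpace.uniformContinuous_of_continuous hh
  rw [Metric.uniformContinuous_iff] at huc
  obtain ⟨η, hη, huc⟩ := huc (ε / 2) (by positivity)
  obtain ⟨M, hM⟩ := hu (η / 2) (by positivity)
  obtain ⟨B, hB⟩ := isCompact_univ.exists_bound_of_continuousOn hh.continuousOn
  set B' : ℝ := max B 0 with hB'
  obtain ⟨m0, hm0⟩ := exists_nat_ge (2 * M * (2 * B') / (ε / 2))
  refine ⟨m0, fun H hH a b hab => ?_⟩
  rw [birkhoffSum, birkhoffSum, ← Finset.sum_sub_distrib]
  -- the terms at distance at least `M` from both ends are small, the others are bounded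
  have hterm : ∀ j ∈ Finset.range H.m, |h (f^[j] (H.π a)) - h (f^[j] (H.π b))| ≤
      ε / 2 + ((if j < M then 2 * B' else 0) + (if H.m - M ≤ j then 2 * B' else 0)) := by
    intro j hj
    rw [Finset.mem_range] at hj
    have hB0 : 0 ≤ B' := le_max_right _ _
    have hgen : |h (f^[j] (H.π a)) - h (f^[j] (H.π b))| ≤ 2 * B' := by
      have h1 := (hB (f^[j] (H.π a)) (mem_univ _)).trans (le_max_left B 0)
      have h2 := (hB (f^[j] (H.π b)) (mem_univ _)).trans (le_max_left B 0)
      rw [Real.norm_eq_abs] at h1 h2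
      have := abs_sub (h (f^[j] (H.π a))) (h (f^[j] (H.π b)))
      linarith
    by_cases hjM : j < M
    · rw [if_pos hjM]
      have : (0 : ℝ) ≤ (if H.m - M ≤ j then 2 * B' else 0) := by split_ifs <;> positivity
      linarith
    by_cases hjm : H.m - M ≤ j
    · rw [if_pos hjm, if_neg hjM]; linarith
    rw [if_neg hjM, if_neg hjm]
    have hd := H.close_window hM (a := a) (b := b) (lo := 0) (hi := 1)
      (fun i h1 h2 => by rw [show i = 0 by omega]; exact hab) (j := j) (by omega)
      (by omega)
    rw [zpow_natCast_apply, zpow_natCast_apply] at hd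
    have := huc (lt_of_le_of_lt hd (by linarith))
    rw [Real.dist_eq] at this
    linarith
  refine (Finset.abs_sum_le_sum_abs _ _).trans ((Finset.sum_le_sum hterm).trans ?_)
  rw [Finset.sum_add_distrib, Finset.sum_add_distrib, Finset.sum_const, Finset.card_range,
    nsmul_eq_mul, ← Finset.sum_filter, ← Finset.sum_filter, Finset.sum_const, Finset.sum_const,
    nsmul_eq_mul, nsmul_eq_mul]
  have hc1 : ((Finset.range H.m).filter (fun j => j < M)).card ≤ M := by
    calc _ ≤ (Finset.range M).card := Finset.card_le_card fun j hj => by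
          rw [Finset.mem_filter] at hj; exact Finset.mem_range.mpr hj.2
      _ = M := Finset.card_range M
  have hc2 : ((Finset.range H.m).filter (fun j => H.m - M ≤ j)).card ≤ M := by
    calc _ ≤ (Finset.Ico (H.m - M) H.m).card := Finset.card_le_card fun j hj => by
          rw [Finset.mem_filter, Finset.mem_range] at hj
          exact Finset.mem_Ico.mpr ⟨hj.2, hj.1⟩
      _ ≤ M := by rw [Nat.card_Ico]; omega
  have hB0 : 0 ≤ B' := le_max_right _ _
  have hc1' : (((Finset.range H.m).filter (fun j => j < M)).card : ℝ) ≤ M := by exact_mod_cast hc1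
  have hc2' : (((Finset.range H.m).filter (fun j => H.m - M ≤ j)).card : ℝ) ≤ M := by
    exact_mod_cast hc2
  rw [div_le_iff₀ (by positivity)] at hm0
  have hmm : (m0 : ℝ) ≤ H.m := by exact_mod_cast hH
  nlinarith [mul_le_mul_of_nonneg_right hc1' (show 0 ≤ 2 * B' by positivity),
    mul_le_mul_of_nonneg_right hc2' (show 0 ≤ 2 * B' by positivity)]

end HS

/-! ### From shadowing to a horseshoe -/

section
variable {X Y : Type*} [MetricSpace X] [CompactSpace X] [MetricSpace Y] [CompactSpace Y]
  {f : X ≃ₜ X} {ρ : X → ℝ} {φ : Flow ℝ Y} {e : X → Y} {a b : ℝ}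

lemma orbit_eq {z : ℤ → X} (hz : ∀ n, z (n + 1) = f (z n)) (n : ℤ) : z n = (f ^ n) (z 0) := by
  induction n using Int.induction_on with
  | zero => simp
  | succ i ih => rw [hz, ih, add_comm, zpow_add_apply, zpow_one]
  | pred i ih =>
    apply f.injective
    rw [← hz, sub_add_cancel, ih]
    have : (-(i : ℤ)) = 1 + (-(i : ℤ) - 1) := by ring
    conv_lhs => rw [this, zpow_add_apply, zpow_one]

/-- Free concatenations of segments returning to the same small cell are shadowed, which gives a
horseshoe. -/
theorem Susp.exists_HS (hS : Susp f ρ φ e a b) {ex : ℝ} (hex0 : 0 < ex)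
    (hex : ∀ x y : X, (∀ n : ℤ, dist ((f ^ n) x) ((f ^ n) y) ≤ ex) → x = y)
    (hsh : ShadowingProperty f) {c : ℝ} (hc : 0 ≤ c) (h : (c : EReal) < topEntropy (φ.toFun 1)) :
    ∃ δ > 0, ∃ H : HS f ex δ, ∃ T : ℝ, (∀ s, birkhoffSum f ρ H.m (H.π s) ≤ T) ∧
      c * T < Real.log H.N := by
  classical
  obtain ⟨δ, hδ, γ, hγ, hw⟩ := hS.exists_weighted hc h
  set η : ℝ := γ / (4 * (c + 1)) with hη
  have hηp : 0 < η := by positivity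
  have hcη : c * η ≤ γ / 4 := by
    rw [hη, mul_div_assoc', div_le_div_iff₀ (by positivity) (by positivity)]
    nlinarith
  obtain ⟨δρ, hδρ, hroof⟩ := hS.roof_unif hηp
  set α : ℝ := min (ex / 2) (min (δ / 8) δρ) with hα
  have hαp : 0 < α := by positivity
  have hα1 : α ≤ ex / 2 := min_le_left _ _
  have hα2 : α ≤ δ / 8 := (min_le_right _ _).trans (min_le_left _ _)
  have hα3 : α ≤ δρ := (min_le_right _ _).trans (min_le_right _ _)
  obtain ⟨δs, hδs, hshad⟩ := hsh α hαp
  obtain ⟨K, κ, hκ⟩ := exists_cells (Z := X) (lt_min hδs hδ)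
  obtain ⟨l, i, R, hl, hRκ, hRT, hRs, hRc⟩ := exists_return (f := f) (κ := κ)
    (fun x => hS.a_pos.le.trans (hS.ρa x)) hS.ρb hS.b_pos.le hc hηp hδ
    (fun x y hxy => (hκ x y hxy).trans (min_le_right _ _)) hγ hcη hw
  set ℓ : Fin R.card → X := fun w => (R.equivFin.symm w : X) with hℓ
  have hℓR : ∀ w, ℓ w ∈ R := fun w => (R.equivFin.symm w).2
  have hℓinj : Function.Injective ℓ := Subtype.val_injective.comp R.equivFin.symm.injective
  have hlz : (0 : ℤ) < l := by exact_mod_cast hl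
  set p : (ℤ → Fin R.card) → ℤ → X := fun s n => f^[(n % l).toNat] (ℓ (s (n / l))) with hp
  have hpseudo : ∀ s n, dist (f (p s n)) (p s (n + 1)) ≤ δs := by
    intro s n
    have h0 := Int.emod_nonneg n hlz.ne'
    have h1 := Int.emod_lt_of_pos n hlz
    have h2 := Int.emod_add_mul_ediv n l
    simp only [hp]
    rw [← Function.iterate_succ_apply' (f : X → X)]
    by_cases hlast : n % l + 1 < l
    · have h3 : (n + 1) / l = n / l ∧ (n + 1) % l = n % l + 1 := by
        rw [Int.ediv_emod_unique hlz]; exact ⟨by linarith, by omega, by omega⟩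
      rw [h3.1, h3.2, show (n % l + 1).toNat = (n % l).toNat + 1 by omega, dist_self]
      exact hδs.le
    · have h3 : (n + 1) / l = n / l + 1 ∧ (n + 1) % l = 0 := by
        rw [Int.ediv_emod_unique hlz]; exact ⟨by linarith, by omega, by omega⟩
      rw [h3.1, h3.2, show (n % l).toNat.succ = l by omega]
      simp only [Int.toNat_zero, Function.iterate_zero, id]
      exact (hκ _ _ (hRκ _ (hℓR _) _ (hℓR _))).trans (min_le_left _ _)
  choose z hz1 hz2 using fun s => hshad (p s) (hpseudo s)
  set π : (ℤ → Fin R.card) → X := fun s => z s 0 with hπ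
  have hπd : ∀ s n, dist ((f ^ n) (π s)) (p s n) ≤ α := fun s n => by
    rw [hπ, ← orbit_eq (hz1 s)]; exact hz2 s n
  have hπ0 : ∀ s, ∀ j < l, dist (f^[j] (π s)) (f^[j] (ℓ (s 0))) ≤ α := by
    intro s j hj
    have := hπd s j
    rw [zpow_natCast_apply] at this
    simp only [hp] at this
    rwa [Int.emod_eq_of_lt (by omega) (by omega), Int.ediv_eq_zero_of_lt (by omega) (by omega),
      Int.toNat_natCast] at this
  have hshift : ∀ s, π (sh 1 s) = f^[l] (π s) := by
    intro s
    refine hex _ _ fun n => ?_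
    have h1 := hπd (sh 1 s) n
    have h2 := hπd s (n + l)
    have h3 : p (sh 1 s) n = p s (n + l) := by
      simp only [hp, sh, Int.add_emod_right, Int.add_ediv_of_dvd_right (dvd_refl (l : ℤ)),
        Int.ediv_self hlz.ne']
    rw [← zpow_natCast_apply, ← zpow_add_apply]
    rw [h3] at h1
    linarith [dist_triangle_right ((f ^ n) (π (sh 1 s))) ((f ^ (n + l)) (π s)) (p s (n + l))]
  have hRpos : (1 : ℝ) < R.card := lt_of_le_of_lt (Real.one_le_exp (by positivity)) hRc
  refine ⟨δ / 4, by positivity,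
    { N := R.card, m := l, π := π, hN := ?_, hm := hl, shift := hshift, close := ?_, sep := ?_ },
    (i + 1) * η + l * η, ?_, ?_⟩
  · have : (0 : ℝ) < R.card := by linarith
    exact_mod_cast this
  · intro s s' hs j hj
    have h1 := hπ0 s j hj
    have h2 := hπ0 s' j hj
    rw [← hs] at h2
    linarith [dist_triangle_right (f^[j] (π s)) (f^[j] (π s')) (f^[j] (ℓ (s 0)))]
  · intro s s' hs
    obtain ⟨j, hj, hd⟩ := hRs _ (hℓR (s 0)) _ (hℓR (s' 0)) (fun h => hs (hℓinj h))
    refine ⟨j, hj, ?_⟩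
    have h1 := hπ0 s j hj
    have h2 := hπ0 s' j hj
    rw [dist_comm] at h1
    linarith [dist_triangle4 (f^[j] (ℓ (s 0))) (f^[j] (π s)) (f^[j] (π s')) (f^[j] (ℓ (s' 0)))]
  · intro s
    have h1 := hS.sum_sub_le hroof (x := π s) (x' := ℓ (s 0)) (Nat.zero_le l)
      fun k _ hk => (hπ0 s k hk).trans hα3
    have h2 := hRT _ (hℓR (s 0))
    simp only [birkhoffSum_zero, sub_zero, Nat.sub_zero] at h1
    have := (abs_le.mp h1).2
    simp only
    linarith
  · rw [Real.lt_log_iff_exp_lt (by simp only; linarith)]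
    exact hRc

end

lemma birkhoffSum_mul {X : Type*} (f : X → X) (h : X → ℝ) (m q : ℕ) (x : X) :
    birkhoffSum f h (m * q) x = ∑ i ∈ Finset.range q, birkhoffSum f h m (f^[m * i] x) := by
  induction q with
  | zero => simp
  | succ q ih => rw [Nat.mul_succ, birkhoffSum_add, ih, Finset.sum_range_succ]

/-! ### Passing to a sub-horseshoe of words with equal letter counts -/

/-- The concatenation of the words `W (a i)`, `i ∈ ℤ`, each of length `q`. -/
def concat {A B : Type*} {q : ℕ} (hq : 0 < q) (W : A → Fin q → B) (a : ℤ → A) : ℤ → B :=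
  fun n => W (a (n / q)) ⟨(n % q).toNat, by
    have hq' : (0 : ℤ) < q := by exact_mod_cast hq
    have h0 := Int.emod_nonneg n hq'.ne'
    have h1 := Int.emod_lt_of_pos n hq'
    omega⟩

lemma concat_sh {A B : Type*} {q : ℕ} (hq : 0 < q) (W : A → Fin q → B) (a : ℤ → A) :
    concat hq W (sh 1 a) = sh q (concat hq W a) := by
  have hq' : (q : ℤ) ≠ 0 := by exact_mod_cast hq.ne'
  funext n
  simp only [concat, sh, Int.add_emod_right, Int.add_ediv_of_dvd_right (dvd_refl (q : ℤ)),
    Int.ediv_self hq']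

lemma concat_apply {A B : Type*} {q : ℕ} (hq : 0 < q) (W : A → Fin q → B) (a : ℤ → A) (i : Fin q) :
    concat hq W a (i : ℕ) = W (a 0) i := by
  have := i.2
  simp only [concat]
  congr 1
  · rw [Int.ediv_eq_zero_of_lt (by omega) (by omega)]
  · ext
    simp only
    rw [Int.emod_eq_of_lt (by omega) (by omega), Int.toNat_natCast]

namespace HS
variable {X : Type*} [MetricSpace X] {f : X ≃ₜ X} {ex δ : ℝ} (H : HS f ex δ)

/-- The horseshoe whose symbols are distinct words of length `q` of `H`. -/
def subst {q N' : ℕ} (hq : 0 < q) (hN' : 0 < N') (W : Fin N' → Fin q → Fin H.N)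
    (hW : Function.Injective W) : HS f ex δ where
  N := N'
  m := H.m * q
  π := fun a => H.π (concat hq W a)
  hN := hN'
  hm := Nat.mul_pos H.hm hq
  shift := fun a => by rw [concat_sh, shift_nat]
  close := fun a b hab j hj => by
    have := H.close_int (a := concat hq W a) (b := concat hq W b) (lo := 0) (hi := q)
      (fun i h1 h2 => by
        have hi := concat_apply hq W a ⟨i.toNat, by omega⟩
        have hi' := concat_apply hq W b ⟨i.toNat, by omega⟩
        simp only [Int.toNat_of_nonneg h1] at hi hi'
        rw [hi, hi', hab]) (j := j) (by positivity) (by exact_mod_cast hj)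
    rwa [zpow_natCast_apply, zpow_natCast_apply] at this
  sep := fun a b hab => by
    obtain ⟨i, hi⟩ : ∃ i, W (a 0) i ≠ W (b 0) i := by
      by_contra! hcon
      exact hab (hW (funext hcon))
    obtain ⟨j, hj, hd⟩ := H.sep (sh (i : ℕ) (concat hq W a)) (sh (i : ℕ) (concat hq W b)) (by
      simp only [sh, zero_add, concat_apply]; exact hi)
    refine ⟨j + H.m * i, ?_, ?_⟩
    · have := i.2
      calc j + H.m * i < H.m + H.m * i := by omega
        _ = H.m * (i + 1) := by ring
        _ ≤ H.m * q := Nat.mul_le_mul_left _ (by omega)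
    · rw [Function.iterate_add_apply, Function.iterate_add_apply]
      rwa [shift_nat, shift_nat] at hd

/-- Supremum of the return times of a horseshoe. -/
noncomputable def Tp (ρ : X → ℝ) : ℝ := ⨆ s, birkhoffSum f ρ H.m (H.π s)

lemma le_Tp {ρ : X → ℝ} {b : ℝ} (hρb : ∀ x, ρ x ≤ b) (s : ℤ → Fin H.N) :
    birkhoffSum f ρ H.m (H.π s) ≤ H.Tp ρ := by
  refine le_ciSup (f := fun s => birkhoffSum f ρ H.m (H.π s)) ⟨H.m * b, ?_⟩ s
  rintro _ ⟨s, rfl⟩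
  have := Finset.sum_le_card_nsmul (Finset.range H.m) (fun j => ρ (f^[j] (H.π s))) b
    fun j _ => hρb _
  simpa [birkhoffSum] using this

lemma Tp_le {ρ : X → ℝ} {T : ℝ} (h : ∀ s, birkhoffSum f ρ H.m (H.π s) ≤ T) : H.Tp ρ ≤ T := by
  have : Nonempty (ℤ → Fin H.N) := ⟨fun _ => ⟨0, H.hN⟩⟩
  exact ciSup_le h

/-- `H'` is obtained from `H` by passing to words of length `q` that all have the same letter counts
and contain all letters; their number is about `exp (c q T)`, where `T` is `H.Tp ρ`. -/
def StepRel (c : ℝ) (ρ : X → ℝ) (H H' : HS f ex δ) : Prop :=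
  ∃ q : ℕ, 0 < q ∧ H'.m = H.m * q ∧ Real.log H'.N ≤ c * (q * H.Tp ρ) + Real.log 2 ∧
    (∀ s, ∃ s', H'.π s = H.π s') ∧
    (∀ (h : X → ℝ) (E : ℝ), (∀ s s', s 0 = s' 0 →
      |birkhoffSum f h H.m (H.π s) - birkhoffSum f h H.m (H.π s')| ≤ E) →
      ∀ s s', |birkhoffSum f h H'.m (H'.π s) - birkhoffSum f h H'.m (H'.π s')| ≤ 2 * (q * E)) ∧
    (∀ (h : X → ℝ) (t : ℝ), (∀ s, t ≤ birkhoffSum f h H.m (H.π s)) →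
      ∀ s, q * t ≤ birkhoffSum f h H'.m (H'.π s)) ∧
    (∀ s (u : Fin H.N), ∃ (j : ℕ) (s' : ℤ → Fin H.N), s' 0 = u ∧ H.π s' = f^[j] (H'.π s))

theorem exists_step {ρ : X → ℝ} {b c : ℝ} (hc : 0 ≤ c) (hρ0 : ∀ x, 0 ≤ ρ x) (hρb : ∀ x, ρ x ≤ b)
    (hT : c * H.Tp ρ < Real.log H.N) (m0 : ℕ) :
    ∃ H' : HS f ex δ, StepRel c ρ H H' ∧ c * H'.Tp ρ < Real.log H'.N ∧ m0 ≤ H'.m := by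
  classical
  set N := H.N with hNdef
  have hN0 : (0 : ℝ) < N := by exact_mod_cast H.hN
  set D : ℝ := Real.log N - c * H.Tp ρ with hD
  have hDp : 0 < D := sub_pos.mpr hT
  have hTp0 : 0 ≤ H.Tp ρ :=
    (Finset.sum_nonneg fun j _ => hρ0 _).trans (H.le_Tp hρb (fun _ => ⟨0, H.hN⟩))
  have e1 := eventually_log_affine 1 1 (show 0 < D / (2 * N) by positivity)
  have e2 : ∀ᶠ n : ℕ in atTop, (c * (N * H.Tp ρ) + Real.log 2) / (D / 2) ≤ (n : ℝ) :=
    tendsto_natCast_atTop_atTop.eventually_ge_atTop _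
  obtain ⟨q0, ⟨h1, h2⟩, h3⟩ := ((e1.and e2).and (eventually_ge_atTop m0)).exists
  rw [div_le_iff₀ (by positivity)] at h2
  rw [one_mul] at h1
  set q : ℕ := N + q0 with hq
  have hqp : 0 < q := Nat.add_pos_left H.hN _
  set That : ℝ := q * H.Tp ρ with hThat
  -- letter counts
  set cnt : (Fin q0 → Fin N) → (Fin N → Fin (q0 + 1)) := fun w u =>
    ⟨(Finset.univ.filter fun i => w i = u).card, by
      rw [Nat.lt_succ_iff]; simpa using Finset.card_le_univ (Finset.univ.filter fun i => w i = u)⟩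
    with hcnt
  obtain ⟨ty, -, hfib⟩ := exists_fiber_card (s := (Finset.univ : Finset (Fin q0 → Fin N)))
    (t := Finset.univ) (g := cnt) (fun _ _ => Finset.mem_univ _) ⟨fun _ => 0, Finset.mem_univ _⟩
  set 𝒲 : Finset (Fin q0 → Fin N) := {w ∈ Finset.univ | cnt w = ty} with h𝒲
  simp only [Finset.card_univ, Fintype.card_fun, Fintype.card_fin] at hfib
  push_cast at hfib
  have hlarge : ((q0 : ℝ) + 1) ^ N * (2 * Real.exp (c * That)) ≤ (N : ℝ) ^ q0 := by
    rw [← Real.log_le_log_iff (by positivity) (by positivity), Real.log_mul (by positivity)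
      (by positivity), Real.log_mul (by positivity) (by positivity), Real.log_pow, Real.log_pow,
      Real.log_exp]
    have h5 : (N : ℝ) * Real.log ((q0 : ℝ) + 1) ≤ D / 2 * q0 := by
      calc _ ≤ (N : ℝ) * (D / (2 * N) * q0) := by gcongr
        _ = _ := by field_simp
    rw [hThat, hq]; push_cast
    have : Real.log N = D + c * H.Tp ρ := by rw [hD]; ring
    rw [this]
    nlinarith
  have h𝒲c : 2 * Real.exp (c * That) ≤ (𝒲.card : ℝ) := by
    refine le_of_mul_le_mul_left (hlarge.trans hfib) (by positivity)
  set N' : ℕ := ⌊Real.exp (c * That)⌋₊ + 1 with hN'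
  have hexp1 : 1 ≤ Real.exp (c * That) := Real.one_le_exp (by positivity)
  have hfl := Nat.floor_le (Real.exp_pos (c * That)).le
  have hfl2 := Nat.lt_floor_add_one (Real.exp (c * That))
  have hN'c : N' ≤ 𝒲.card := by
    have : (N' : ℝ) ≤ 𝒲.card := by rw [hN']; push_cast; linarith
    exact_mod_cast this
  obtain ⟨ι⟩ : Nonempty (Fin N' ↪ 𝒲) :=
    Function.Embedding.nonempty_of_card_le (by simpa using hN'c)
  set W : Fin N' → Fin q → Fin N := fun v => Fin.append id (ι v : Fin q0 → Fin N) with hW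
  have hWinj : Function.Injective W := by
    intro v v' hv
    apply ι.injective
    apply Subtype.ext
    funext i
    have := congrFun hv (Fin.natAdd N i)
    simpa only [hW, Fin.append_right] using this
  have hWsum : ∀ (r : Fin N → ℝ) v v', ∑ i, r (W v i) = ∑ i, r (W v' i) := by
    have hkey : ∀ (r : Fin N → ℝ) v, ∑ i, r (W v i) = ∑ u, r u + ∑ u, (ty u : ℕ) * r u := by
      intro r v
      rw [Fin.sum_univ_add]
      simp only [hW, Fin.append_left, Fin.append_right, id]
      congr 1
      rw [← Finset.sum_fiberwise' Finset.univ (fun i => (ι v : Fin q0 → Fin N) i) r]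
      refine Finset.sum_congr rfl fun u _ => ?_
      rw [Finset.sum_const, nsmul_eq_mul]
      have := (Finset.mem_filter.mp (ι v).2).2
      rw [← this]
    intro r v v'
    rw [hkey, hkey]
  set H' : HS f ex δ := H.subst hqp (Nat.succ_pos _ : 0 < N') W hWinj with hH'
  have hsum : ∀ (h : X → ℝ) (s : ℤ → Fin N'), birkhoffSum f h H'.m (H'.π s) =
      ∑ i ∈ Finset.range q, birkhoffSum f h H.m (H.π (sh i (concat hqp W s))) := by
    intro h s
    simp only [H.shift_nat]
    exact birkhoffSum_mul _ _ _ _ _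
  have hTp' : H'.Tp ρ ≤ That := H'.Tp_le fun s => by
    refine (hsum ρ s).le.trans ?_
    refine (Finset.sum_le_card_nsmul _ _ _ fun i _ => H.le_Tp hρb _).trans ?_
    simp [hThat]
  refine ⟨H', ⟨q, hqp, rfl, ?_, fun s => ⟨_, rfl⟩, ?_, ?_, ?_⟩, ?_, ?_⟩
  · have : Real.log N' ≤ Real.log (2 * Real.exp (c * That)) := by
      refine Real.log_le_log (by positivity) ?_
      rw [hN']; push_cast; linarith
    rw [Real.log_mul (by positivity) (by positivity), Real.log_exp] at this
    have h6 : (H'.N : ℝ) = N' := rfl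
    rw [h6]
    linarith
  · intro h E hE
    -- compare with the sum determined by the letter counts
    set r : Fin N → ℝ := fun u => birkhoffSum f h H.m (H.π fun _ => u) with hr
    have hone : ∀ s : ℤ → Fin N', |birkhoffSum f h H'.m (H'.π s) - ∑ i, r (W (s 0) i)| ≤ q * E := by
      intro s
      rw [hsum, Finset.sum_range, ← Finset.sum_sub_distrib]
      refine (Finset.abs_sum_le_sum_abs _ _).trans ?_
      refine (Finset.sum_le_card_nsmul _ _ E fun i _ => ?_).trans ?_
      · refine hE _ _ ?_
        simp only [sh, zero_add, concat_apply]
      · simp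
    intro s s'
    have h1 := hone s
    have h2 := hone s'
    rw [hWsum r (s' 0) (s 0)] at h2
    rw [abs_le] at *
    constructor <;> linarith [h1.1, h1.2, h2.1, h2.2]
  · intro h t ht s
    refine le_trans ?_ (hsum h s).ge
    have := Finset.card_nsmul_le_sum (Finset.range q)
      (fun i => birkhoffSum f h H.m (H.π (sh i (concat hqp W s)))) t fun i _ => ht _
    simpa using this
  · intro s u
    refine ⟨H.m * u, sh (u : ℕ) (concat hqp W s), ?_, by rw [shift_nat]; rfl⟩
    have h1 : ((u : ℕ) : ℤ) = ((Fin.castAdd q0 u : Fin q) : ℕ) := rfl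
    simp only [sh, zero_add]
    rw [h1]
    refine (concat_apply hqp W s (Fin.castAdd q0 u : Fin q)).trans ?_
    simp only [hW, Fin.append_left, id]
  · have h6 : (H'.N : ℝ) = N' := rfl
    rw [h6, Real.lt_log_iff_exp_lt (by positivity)]
    refine lt_of_le_of_lt (Real.exp_le_exp.mpr (mul_le_mul_of_nonneg_left hTp' hc)) ?_
    rw [hN']; push_cast; exact hfl2
  · have h6 : H'.m = H.m * q := rfl
    rw [h6]
    have := H.hm
    nlinarith

end HS

/-! ### Towers of horseshoes -/

/-- A sequence of nested horseshoes whose Birkhoff averages become constant and whose entropy, measured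
in flow time, decreases to `c`. -/
structure Tower {X : Type*} [MetricSpace X] (f : X ≃ₜ X) (ex δ : ℝ) (ρ : X → ℝ) (c : ℝ)
    (H : ℕ → HS f ex δ) : Prop where
  le_m : ∀ k, k ≤ (H k).m
  nested : ∀ k s, ∃ s', (H (k + 1)).π s = (H k).π s'
  osc : ∀ h : X → ℝ, Continuous h → ∀ ε > 0, ∀ᶠ k in atTop, ∀ s s',
    |birkhoffSum f h (H k).m ((H k).π s) - birkhoffSum f h (H k).m ((H k).π s')| ≤ ε * (H k).m
  lower : ∀ k, c * (H k).Tp ρ < Real.log (H k).N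
  upper : ∀ ε > 0, ∀ᶠ k in atTop, ∀ s,
    Real.log (H k).N ≤ c * birkhoffSum f ρ (H k).m ((H k).π s) + ε * (H k).m
  visit : ∀ k s (u : Fin (H k).N), ∃ (j : ℕ) (s' : ℤ → Fin (H k).N), s' 0 = u ∧
    (H k).π s' = f^[j] ((H (k + 1)).π s)

theorem exists_tower {X : Type*} [MetricSpace X] [CompactSpace X] {f : X ≃ₜ X} {ex δ : ℝ}
    (hu : UExp f ex) {ρ : X → ℝ} {b c : ℝ} (hρc : Continuous ρ) (hc : 0 ≤ c) (hρ0 : ∀ x, 0 ≤ ρ x)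
    (hρb : ∀ x, ρ x ≤ b) (H0 : HS f ex δ) (hT : c * H0.Tp ρ < Real.log H0.N) :
    ∃ H : ℕ → HS f ex δ, Tower f ex δ ρ c H := by
  choose! st h1 h2 h3 using fun (H : HS f ex δ) (hT : c * H.Tp ρ < Real.log H.N) (m0 : ℕ) =>
    H.exists_step hc hρ0 hρb hT m0
  set H : ℕ → HS f ex δ := fun k => Nat.rec H0 (fun k H => st H (k + 1)) k with hH
  have hsucc : ∀ k, H (k + 1) = st (H k) (k + 1) := fun k => rfl
  have hlow : ∀ k, c * (H k).Tp ρ < Real.log (H k).N := by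
    intro k
    induction k with
    | zero => exact hT
    | succ k ih => rw [hsucc]; exact h2 _ ih _
  have hrel : ∀ k, HS.StepRel c ρ (H k) (H (k + 1)) := fun k => h1 _ (hlow k) _
  have hm : ∀ k, k ≤ (H k).m := by
    intro k
    cases k with
    | zero => exact Nat.zero_le _
    | succ k => exact h3 _ (hlow k) _
  have hosc : ∀ h : X → ℝ, Continuous h → ∀ ε > 0, ∀ᶠ k in atTop, ∀ s s',
      |birkhoffSum f h (H k).m ((H k).π s) - birkhoffSum f h (H k).m ((H k).π s')|
        ≤ ε * (H k).m := by
    intro h hh ε hε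
    obtain ⟨m0, hm0⟩ := HS.exists_osc (δ := δ) hu hh (half_pos hε)
    filter_upwards [eventually_ge_atTop (m0 + 1)] with k hk s s'
    obtain ⟨k, rfl⟩ : ∃ l, k = l + 1 := ⟨k - 1, by omega⟩
    obtain ⟨q, hq, hmq, -, -, h5, -, -⟩ := hrel k
    refine (h5 h _ (hm0 (H k) (by have := hm k; omega)) s s').trans (le_of_eq ?_)
    rw [hmq]; push_cast; ring
  refine ⟨H, hm, ?_, hosc, hlow, ?_, ?_⟩
  · intro k
    obtain ⟨q, hq, hmq, -, h4, -, -, -⟩ := hrel k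
    exact h4
  · intro ε hε
    have e1 := hosc ρ hρc (ε / (2 * (c + 1))) (by positivity)
    have e2 : ∀ᶠ k : ℕ in atTop, Real.log 2 / (ε / 2) ≤ (k : ℝ) :=
      tendsto_natCast_atTop_atTop.eventually_ge_atTop _
    obtain ⟨k0, hk0⟩ := eventually_atTop.mp (e1.and e2)
    filter_upwards [eventually_ge_atTop (k0 + 1)] with k hk s
    obtain ⟨k, rfl⟩ : ∃ l, k = l + 1 := ⟨k - 1, by omega⟩
    obtain ⟨h6, -⟩ := hk0 k (by omega)
    obtain ⟨-, h7⟩ := hk0 (k + 1) (by omega)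
    rw [div_le_iff₀ (by positivity)] at h7
    obtain ⟨q, hq, hmq, hN, -, -, hlb, -⟩ := hrel k
    have h8 := hlb ρ ((H k).Tp ρ - ε / (2 * (c + 1)) * (H k).m) (fun s => by
      have : (H k).Tp ρ ≤ birkhoffSum f ρ (H k).m ((H k).π s) + ε / (2 * (c + 1)) * (H k).m :=
        (H k).Tp_le fun s' => by
          have := (abs_le.mp (h6 s' s)).2
          linarith
      linarith) s
    have h9 : ((k + 1 : ℕ) : ℝ) ≤ (H (k + 1)).m := by exact_mod_cast hm (k + 1)
    have h10 : ((H (k + 1)).m : ℝ) = (H k).m * q := by rw [hmq]; push_cast; ring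
    have h11 := mul_le_mul_of_nonneg_left h8 hc
    have h12 : c * (ε / (2 * (c + 1))) ≤ ε / 2 := by
      rw [← mul_div_assoc, div_le_div_iff₀ (by positivity) (by positivity)]
      nlinarith
    have h13 : c * (ε / (2 * (c + 1))) * (H (k + 1)).m ≤ ε / 2 * (H (k + 1)).m := by gcongr
    have h14 : c * (q * (H k).Tp ρ) = c * (q * ((H k).Tp ρ - ε / (2 * (c + 1)) * (H k).m))
        + c * (ε / (2 * (c + 1))) * (H (k + 1)).m := by rw [h10]; ring
    nlinarith
  · intro k
    obtain ⟨q, hq, hmq, -, -, -, -, h5⟩ := hrel k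
    exact h5

/-! ### The flow-invariant set spanned by a horseshoe -/

/-- The saturation under the flow of the coded points of a horseshoe. -/
def HS.flowSet {X Y : Type*} [MetricSpace X] [TopologicalSpace Y] {f : X ≃ₜ X} {ex δ : ℝ}
    (H : HS f ex δ) (φ : Flow ℝ Y) (e : X → Y) : Set Y :=
  {y | ∃ t s, φ.toFun t (e (H.π s)) = y}

section
variable {X Y : Type*} [MetricSpace X] [CompactSpace X] [MetricSpace Y] [CompactSpace Y]
  {f : X ≃ₜ X} {ρ : X → ℝ} {φ : Flow ℝ Y} {e : X → Y} {a b : ℝ} {ex δ : ℝ}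

lemma HS.mem_flowSet_iff (H : HS f ex δ) (t : ℝ) (y : Y) :
    φ.toFun t y ∈ H.flowSet φ e ↔ y ∈ H.flowSet φ e := by
  constructor
  · rintro ⟨u, s, h⟩
    refine ⟨-t + u, s, ?_⟩
    rw [φ.map_add', h, ← φ.map_add', neg_add_cancel, φ.map_zero']
  · rintro ⟨u, s, rfl⟩
    exact ⟨t + u, s, φ.map_add' _ _ _⟩

/-- Every point of `flowSet` lies on the first orbit segment of some coded point. -/
lemma Susp.reduce (hS : Susp f ρ φ e a b) (H : HS f ex δ) {y : Y} (hy : y ∈ H.flowSet φ e) :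
    ∃ t s, 0 ≤ t ∧ t < birkhoffSum f ρ H.m (H.π s) ∧ φ.toFun t (e (H.π s)) = y := by
  obtain ⟨t, s, rfl⟩ := hy
  have hm : (0 : ℝ) < H.m := by exact_mod_cast H.hm
  -- make the time nonnegative
  obtain ⟨t, s, ht, hts⟩ : ∃ t' s', 0 ≤ t' ∧ φ.toFun t' (e (H.π s')) = φ.toFun t (e (H.π s)) := by
    obtain ⟨i, hi⟩ := exists_nat_ge (-t / (H.m * a))
    rw [div_le_iff₀ (mul_pos hm hS.a_pos)] at hi
    have h1 : f^[H.m * i] (H.π (sh (-i) s)) = H.π s := by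
      rw [← H.shift_nat, sh_sh]; simp [sh_zero]
    refine ⟨t + birkhoffSum f ρ (H.m * i) (H.π (sh (-i) s)), sh (-i) s, ?_, ?_⟩
    · have := hS.le_sum (H.m * i) (H.π (sh (-i) s))
      push_cast at this
      nlinarith
    · rw [hS.flow_eq _ _ (H.m * i), h1, add_sub_cancel_right]
  rw [← hts]
  obtain ⟨j, hj1, hj2⟩ := hS.exists_window (H.π s) ht
  have hmono := (hS.sum_strictMono (H.π s)).monotone
  refine ⟨t - birkhoffSum f ρ (H.m * (j / H.m)) (H.π s), sh (j / H.m : ℕ) s, ?_, ?_, ?_⟩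
  · have := hmono (Nat.mul_div_le j H.m)
    simp only at this
    linarith
  · have := hmono (show j + 1 ≤ H.m * (j / H.m) + H.m by
      have := Nat.lt_mul_div_succ j H.hm
      rw [Nat.mul_add, mul_one] at this
      omega)
    simp only [birkhoffSum_add f ρ (H.m * (j / H.m)) H.m] at this
    rw [H.shift_nat]
    linarith
  · rw [H.shift_nat, ← hS.flow_eq]

lemma Susp.isCompact_flowSet (hS : Susp f ρ φ e a b) (hu : UExp f ex) (H : HS f ex δ) :
    IsCompact (H.flowSet φ e) := by
  have hc : Continuous (fun z : ℝ × (ℤ → Fin H.N) => φ.toFun z.1 (e (H.π z.2))) :=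
    φ.cont'.comp (continuous_fst.prodMk (hS.ec.comp ((H.continuous_π hu).comp continuous_snd)))
  have hK : IsCompact (Icc (0 : ℝ) (H.m * b) ×ˢ (univ : Set (ℤ → Fin H.N))) :=
    isCompact_Icc.prod isCompact_univ
  convert hK.image hc using 1
  ext y
  constructor
  · intro hy
    obtain ⟨t, s, h0, h1, h2⟩ := hS.reduce H hy
    exact ⟨(t, s), ⟨⟨h0, h1.le.trans (hS.sum_le _ _)⟩, mem_univ _⟩, h2⟩
  · rintro ⟨⟨t, s⟩, -, rfl⟩
    exact ⟨t, s, rfl⟩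

lemma Susp.base_of_mem (hS : Susp f ρ φ e a b) (H : HS f ex δ) {x : X}
    (hx : e x ∈ H.flowSet φ e) : ∃ r < H.m, ∃ s, x = f^[r] (H.π s) := by
  obtain ⟨t, s, h0, h1, h2⟩ := hS.reduce H hx
  obtain ⟨j, hj1, hj2⟩ := hS.exists_window (H.π s) h0
  refine ⟨j, ?_, s, ?_⟩
  · by_contra! h
    have : birkhoffSum f ρ H.m (H.π s) ≤ birkhoffSum f ρ j (H.π s) :=
      (hS.sum_strictMono (H.π s)).monotone h
    linarith
  · rw [hS.flow_eq _ _ j] at h2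
    rw [birkhoffSum_succ] at hj2
    refine ((hS.inj _ _ _ 0 (sub_nonneg.mpr hj1) (by linarith) le_rfl
      (by linarith [hS.ρa x, hS.a_pos]) (h2.trans (by rw [φ.map_zero']))).1).symm

end

/-! ### Minimal sets -/

lemma exists_minimal {Y : Type*} [MetricSpace Y] [CompactSpace Y] (φ : Flow ℝ Y)
    {K : Set Y} (hne : K.Nonempty) (hcl : IsClosed K) (hinv : FlowInvSet φ K) :
    ∃ Γ ⊆ K, Γ.Nonempty ∧ IsClosed Γ ∧ FlowInvSet φ Γ ∧ FlowMinimalOn φ Γ := by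
  have hinv_iff : ∀ Γ : Set Y, FlowInvSet φ Γ ↔ ∀ t, ∀ y ∈ Γ, φ.toFun t y ∈ Γ := by
    intro Γ
    constructor
    · intro h t y hy
      rw [← h t]; exact mem_image_of_mem _ hy
    · intro h t
      refine Subset.antisymm (by rintro _ ⟨y, hy, rfl⟩; exact h t y hy) fun y hy => ?_
      refine ⟨φ.toFun (-t) y, h _ _ hy, ?_⟩
      rw [← φ.map_add', add_neg_cancel, φ.map_zero']
  obtain ⟨Γ, hΓ, hmin⟩ := zorn_superset_nonempty
    {Γ : Set Y | Γ.Nonempty ∧ IsClosed Γ ∧ FlowInvSet φ Γ} (by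
      intro C hC hchain hCne
      refine ⟨⋂₀ C, ⟨?_, isClosed_sInter fun s hs => (hC hs).2.1, ?_⟩, fun s hs =>
        sInter_subset_of_mem hs⟩
      · have : Nonempty C := hCne.to_subtype
        rw [sInter_eq_iInter]
        refine IsCompact.nonempty_iInter_of_directed_nonempty_isCompact_isClosed _ ?_
          (fun s => (hC s.2).1) (fun s => (hC s.2).2.1.isCompact) (fun s => (hC s.2).2.1)
        intro s s'
        rcases hchain.total s.2 s'.2 with h | h
        · exact ⟨s, subset_rfl, h⟩
        · exact ⟨s', h, subset_rfl⟩
      · rw [hinv_iff]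
        intro t y hy s hs
        exact (hinv_iff s).mp (hC hs).2.2 t y (hy s hs)) K ⟨hne, hcl, hinv⟩
  refine ⟨Γ, hΓ, hmin.prop.1, hmin.prop.2.1, hmin.prop.2.2, fun L hL hLne hLc hLi => ?_⟩
  exact Subset.antisymm hL (hmin.le_of_le ⟨hLne, hLc, hLi⟩ hL)

section
variable {X Y : Type*} [MetricSpace X] [CompactSpace X] [MetricSpace Y] [CompactSpace Y]
  {f : X ≃ₜ X} {ρ : X → ℝ} {φ : Flow ℝ Y} {e : X → Y} {a b : ℝ} {ex δ : ℝ}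

lemma Susp.exists_minimal_tower (hS : Susp f ρ φ e a b) (hu : UExp f ex) {c : ℝ}
    {H : ℕ → HS f ex δ} (hH : Tower f ex δ ρ c H) :
    ∃ Γ : Set Y, Γ.Nonempty ∧ IsClosed Γ ∧ FlowInvSet φ Γ ∧ FlowMinimalOn φ Γ ∧
      ∀ k, Γ ⊆ (H k).flowSet φ e := by
  have hne : (⋂ k, (H k).flowSet φ e).Nonempty := by
    refine IsCompact.nonempty_iInter_of_sequence_nonempty_isCompact_isClosed _ ?_ ?_
      (hS.isCompact_flowSet hu _) fun k => (hS.isCompact_flowSet hu _).isClosed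
    · rintro k _ ⟨t, s, rfl⟩
      obtain ⟨s', hs'⟩ := hH.nested k s
      exact ⟨t, s', by rw [hs']⟩
    · intro k
      exact ⟨_, 0, fun _ => ⟨0, (H k).hN⟩, rfl⟩
  obtain ⟨Γ, h1, h2, h3, h4, h5⟩ := exists_minimal φ hne
    (isClosed_iInter fun k => (hS.isCompact_flowSet hu _).isClosed) (by
      intro t
      refine Subset.antisymm ?_ ?_
      · rintro _ ⟨y, hy, rfl⟩
        simp only [mem_iInter] at hy ⊢
        exact fun k => ((H k).mem_flowSet_iff t y).mpr (hy k)
      · intro y hy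
        refine ⟨φ.toFun (-t) y, ?_, by rw [← φ.map_add', add_neg_cancel, φ.map_zero']⟩
        simp only [mem_iInter] at hy ⊢
        exact fun k => ((H k).mem_flowSet_iff _ y).mpr (hy k))
  exact ⟨Γ, h2, h3, h4, h5, fun k => h1.trans (iInter_subset _ k)⟩

end

/-! ### Uniform convergence of time averages on the minimal set -/

section
variable {X Y : Type*} [MetricSpace X] [CompactSpace X] [MetricSpace Y] [CompactSpace Y]
  {f : X ≃ₜ X} {ρ : X → ℝ} {φ : Flow ℝ Y} {e : X → Y} {a b : ℝ} {ex δ : ℝ}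

/-- The integral of `g` over the orbit segment from `e x` to its first return. -/
noncomputable def fiberInt (φ : Flow ℝ Y) (e : X → Y) (ρ : X → ℝ) (g : Y → ℝ) (x : X) : ℝ :=
  ∫ u in (0 : ℝ)..ρ x, g (φ.toFun u (e x))

lemma flow_int {g : Y → ℝ} (hg : Continuous g) (y : Y) (p q : ℝ) :
    IntervalIntegrable (fun u => g (φ.toFun u y)) volume p q :=
  (hg.comp (φ.cont'.comp (continuous_id.prodMk continuous_const))).intervalIntegrable _ _

lemma flow_int_shift {g : Y → ℝ} (y : Y) (t p : ℝ) :
    ∫ u in (0 : ℝ)..p, g (φ.toFun u (φ.toFun t y)) = ∫ u in t..t + p, g (φ.toFun u y) := by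
  have := intervalIntegral.integral_comp_add_right (a := 0) (b := p)
    (fun u => g (φ.toFun u y)) t
  simp only [zero_add] at this
  rw [add_comm t p, ← this]
  simp only [φ.map_add']

lemma Susp.continuous_fiberInt (hS : Susp f ρ φ e a b) {g : Y → ℝ} (hg : Continuous g) :
    Continuous (fiberInt φ e ρ g) := by
  refine intervalIntegral.continuous_parametric_intervalIntegral_of_continuous
    (f := fun x u => g (φ.toFun u (e x))) ?_ hS.ρc
  exact hg.comp (φ.cont'.comp (continuous_snd.prodMk (hS.ec.comp continuous_fst)))

lemma Susp.int_eq_sum (hS : Susp f ρ φ e a b) {g : Y → ℝ} (hg : Continuous g) (j : ℕ) (x : X) :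
    ∫ u in (0 : ℝ)..birkhoffSum f ρ j x, g (φ.toFun u (e x)) =
      birkhoffSum f (fiberInt φ e ρ g) j x := by
  induction j with
  | zero => simp
  | succ j ih =>
    rw [birkhoffSum_succ, birkhoffSum_succ, ← ih, fiberInt, ← hS.ret_iter, flow_int_shift,
      intervalIntegral.integral_add_adjacent_intervals (flow_int hg _ _ _) (flow_int hg _ _ _)]

lemma flow_int_le {g : Y → ℝ} {B : ℝ} (hB : ∀ y, |g y| ≤ B) (y : Y) {p q : ℝ} (hpq : p ≤ q) :
    |∫ u in p..q, g (φ.toFun u y)| ≤ B * (q - p) := by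
  have := intervalIntegral.norm_integral_le_of_norm_le_const (a := p) (b := q)
    (f := fun u => g (φ.toFun u y)) (C := B) fun u _ => hB _
  rwa [Real.norm_eq_abs, abs_of_nonneg (sub_nonneg.mpr hpq)] at this

/-- If over every block the integral of `g` is almost `l` times the duration of the block, then the
same holds over all long times. -/
lemma Susp.block_avg (hS : Susp f ρ φ e a b) (H : HS f ex δ) {g : Y → ℝ} (hg : Continuous g)
    {B l κ : ℝ} (hκ : 0 ≤ κ) (hB : ∀ y, |g y| ≤ B) (hl : |l| ≤ B)
    (h : ∀ s, |birkhoffSum f (fiberInt φ e ρ g) H.m (H.π s) - l * birkhoffSum f ρ H.m (H.π s)|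
      ≤ κ * (H.m * a)) (s : ℤ → Fin H.N) {τ : ℝ} (hτ : 0 ≤ τ) :
    |(∫ u in (0 : ℝ)..τ, g (φ.toFun u (e (H.π s)))) - l * τ| ≤ κ * τ + 2 * B * (H.m * b) := by
  have hm : (0 : ℝ) < H.m := by exact_mod_cast H.hm
  have hB0 : 0 ≤ B := (abs_nonneg l).trans hl
  obtain ⟨j, hj1, hj2⟩ := hS.exists_window (H.π s) hτ
  have hmono := (hS.sum_strictMono (H.π s)).monotone
  set q := j / H.m with hq
  set σ := birkhoffSum f ρ (H.m * q) (H.π s) with hσ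
  have h1 : σ ≤ τ := (hmono (Nat.mul_div_le j H.m)).trans hj1
  have h2 : τ ≤ σ + H.m * b := by
    have : birkhoffSum f ρ (j + 1) (H.π s) ≤ birkhoffSum f ρ (H.m * q + H.m) (H.π s) := by
      refine hmono ?_
      have := Nat.lt_mul_div_succ j H.hm
      rw [Nat.mul_add, mul_one, ← hq] at this
      omega
    rw [birkhoffSum_add f ρ (H.m * q) H.m] at this
    have h3 := hS.sum_le H.m (f^[H.m * q] (H.π s))
    linarith
  have h3 : H.m * q * a ≤ τ := by
    have := hS.le_sum (H.m * q) (H.π s)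
    push_cast at this
    linarith
  have h4 : |(∫ u in (0 : ℝ)..σ, g (φ.toFun u (e (H.π s)))) - l * σ| ≤ q * (κ * (H.m * a)) := by
    rw [hσ, hS.int_eq_sum hg, birkhoffSum_mul, birkhoffSum_mul, Finset.mul_sum,
      ← Finset.sum_sub_distrib]
    refine (Finset.abs_sum_le_sum_abs _ _).trans ?_
    refine (Finset.sum_le_card_nsmul _ _ (κ * (H.m * a)) fun i _ => ?_).trans ?_
    · rw [← H.shift_nat]; exact h _
    · simp
  have h5 := flow_int_le (φ := φ) hB (e (H.π s)) h1
  have h6 := intervalIntegral.integral_add_adjacent_intervals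
    (flow_int (φ := φ) hg (e (H.π s)) 0 σ) (flow_int hg (e (H.π s)) σ τ)
  have h7 : |l * (τ - σ)| ≤ B * (H.m * b) := by
    rw [abs_mul, abs_of_nonneg (sub_nonneg.mpr h1)]
    exact mul_le_mul hl (by linarith) (by linarith) hB0
  have h8 : B * (τ - σ) ≤ B * (H.m * b) := mul_le_mul_of_nonneg_left (by linarith) hB0
  have h9 : q * (κ * (H.m * a)) ≤ κ * τ := by
    calc q * (κ * (H.m * a)) = κ * (H.m * q * a) := by ring
      _ ≤ _ := by gcongr
  rw [← h6]
  rw [abs_le] at *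
  constructor <;> nlinarith [h4.1, h4.2, h5.1, h5.2, h7.1, h7.2]

lemma Susp.unifAvg [MeasurableSpace Y] [BorelSpace Y] (hS : Susp f ρ φ e a b) {c : ℝ}
    {H : ℕ → HS f ex δ} (hH : Tower f ex δ ρ c H) {Γ : Set Y}
    (hΓ : ∀ k, Γ ⊆ (H k).flowSet φ e) : UnifAvg φ Γ := by
  intro g hg ε hε
  obtain ⟨B, hB⟩ : ∃ B : ℝ, ∀ y, |g y| ≤ B := by
    obtain ⟨B, hB⟩ := isCompact_univ.exists_bound_of_continuousOn hg.continuousOn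
    exact ⟨B, fun y => hB y (mem_univ _)⟩
  have hB0 : 0 ≤ B := (abs_nonneg _).trans (hB (e ((H 0).π fun _ => ⟨0, (H 0).hN⟩)))
  have ha := hS.a_pos
  have hb := hS.b_pos
  set ε1 : ℝ := ε * a / (2 * (1 + B)) with hε1
  have hε1p : 0 < ε1 := by positivity
  obtain ⟨k, h1, h2⟩ := ((hH.osc _ (hS.continuous_fiberInt hg) ε1 hε1p).and
    (hH.osc _ hS.ρc ε1 hε1p)).exists
  set s0 : ℤ → Fin (H k).N := fun _ => ⟨0, (H k).hN⟩ with hs0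
  have hm : (0 : ℝ) < (H k).m := by exact_mod_cast (H k).hm
  set T0 := birkhoffSum f ρ (H k).m ((H k).π s0) with hT0
  set I0 := birkhoffSum f (fiberInt φ e ρ g) (H k).m ((H k).π s0) with hI0
  have hT0p : 0 < T0 := lt_of_lt_of_le (mul_pos hm ha) (hS.le_sum _ _)
  have hI0le : |I0| ≤ B * T0 := by
    rw [hI0, ← hS.int_eq_sum hg]
    have := flow_int_le (φ := φ) hB (e ((H k).π s0)) hT0p.le
    rwa [sub_zero] at this
  have hl : |I0 / T0| ≤ B := by rwa [abs_div, abs_of_pos hT0p, div_le_iff₀ hT0p]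
  have hIl : I0 = I0 / T0 * T0 := by field_simp
  set l := I0 / T0 with hldef
  have hblock : ∀ s, |birkhoffSum f (fiberInt φ e ρ g) (H k).m ((H k).π s)
      - l * birkhoffSum f ρ (H k).m ((H k).π s)| ≤ ε / 2 * ((H k).m * a) := by
    intro s
    have h3 := h1 s s0
    have h4 := h2 s0 s
    have h5 : |l * (T0 - birkhoffSum f ρ (H k).m ((H k).π s))| ≤ B * (ε1 * (H k).m) := by
      rw [abs_mul]
      exact mul_le_mul hl h4 (abs_nonneg _) hB0
    have h6 : ε / 2 * ((H k).m * a) = ε1 * (H k).m + B * (ε1 * (H k).m) := by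
      rw [hε1]; field_simp
    rw [h6]
    calc _ = |(birkhoffSum f (fiberInt φ e ρ g) (H k).m ((H k).π s) - I0)
        + l * (T0 - birkhoffSum f ρ (H k).m ((H k).π s))| := by
          congr 1
          linear_combination hIl
      _ ≤ _ := (abs_add_le _ _).trans (add_le_add h3 h5)
  refine ⟨l, ?_⟩
  set R : ℝ := ε / 2 * ((H k).m * b) + 4 * B * ((H k).m * b) with hR
  have e1 : ∀ᶠ n : ℕ in atTop, R / (ε / 2) + 1 ≤ (n : ℝ) :=
    tendsto_natCast_atTop_atTop.eventually_ge_atTop _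
  filter_upwards [e1] with n hn y hy
  have hR0 : 0 ≤ R := by positivity
  have hn0 : (0 : ℝ) < n := lt_of_lt_of_le (by positivity) hn
  have hnR : R ≤ n * (ε / 2) := by
    rw [← div_le_iff₀ (by positivity)]; linarith
  obtain ⟨t, s, ht0, ht1, rfl⟩ := hS.reduce (H k) (hΓ k hy)
  have ht2 : t ≤ (H k).m * b := ht1.le.trans (hS.sum_le _ _)
  have h3 := hS.block_avg (H k) hg (by positivity) hB hl hblock s (τ := t + n) (by positivity)
  have h4 := flow_int_le (φ := φ) hB (e ((H k).π s)) ht0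
  have h5 := intervalIntegral.integral_add_adjacent_intervals
    (flow_int (φ := φ) hg (e ((H k).π s)) 0 t) (flow_int hg (e ((H k).π s)) t (t + n))
  have h6 : |l * t| ≤ B * ((H k).m * b) := by
    rw [abs_mul, abs_of_nonneg ht0]
    exact mul_le_mul hl ht2 ht0 hB0
  have h7 : B * (t - 0) ≤ B * ((H k).m * b) := mul_le_mul_of_nonneg_left (by linarith) hB0
  rw [flow_int_shift]
  set A := ∫ u in t..t + n, g (φ.toFun u (e ((H k).π s)))
  have h8 : |A - n * l| ≤ n * ε := by
    rw [← h5] at h3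
    have h9 : ε / 2 * t ≤ ε / 2 * ((H k).m * b) := by gcongr
    rw [abs_le] at *
    constructor <;> nlinarith [h3.1, h3.2, h4.1, h4.2, h6.1, h6.2]
  have h9 : (n : ℝ)⁻¹ * A - l = (n : ℝ)⁻¹ * (A - n * l) := by field_simp
  rw [h9, abs_mul, abs_of_pos (inv_pos.mpr hn0)]
  calc _ ≤ (n : ℝ)⁻¹ * (n * ε) := by gcongr
    _ = ε := by field_simp

end

/-! ### Upper bound for the entropy of the minimal set -/

section
variable {X Y : Type*} [MetricSpace X] [CompactSpace X] [MetricSpace Y] [CompactSpace Y]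
  {f : X ≃ₜ X} {ρ : X → ℝ} {φ : Flow ℝ Y} {e : X → Y} {a b : ℝ} {ex δ : ℝ}

lemma Susp.sum_block_ge (hS : Susp f ρ φ e a b) (H : HS f ex δ) {T : ℝ}
    (hT : ∀ s, T ≤ birkhoffSum f ρ H.m (H.π s)) (p : ℕ) {r : ℕ} (hr : r < H.m)
    (s : ℤ → Fin H.N) : p * T - H.m * b ≤ birkhoffSum f ρ (H.m * p) (f^[r] (H.π s)) := by
  have h1 : p * T ≤ birkhoffSum f ρ (H.m * p) (H.π s) := by
    rw [birkhoffSum_mul]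
    have := Finset.card_nsmul_le_sum (Finset.range p)
      (fun i => birkhoffSum f ρ H.m (f^[H.m * i] (H.π s))) T fun i _ => by
        rw [← H.shift_nat]; exact hT _
    simpa using this
  have h2 : birkhoffSum f ρ (H.m * p) (H.π s) ≤ birkhoffSum f ρ (r + H.m * p) (H.π s) :=
    (hS.sum_strictMono (H.π s)).monotone (by omega)
  rw [birkhoffSum_add] at h2
  have h3 := hS.sum_le r (H.π s)
  have h4 : (r : ℝ) * b ≤ H.m * b := by
    have : (r : ℝ) ≤ H.m := by exact_mod_cast hr.le
    have := hS.b_pos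
    gcongr
  linarith

/-- Separated sets in `flowSet` are counted by their itineraries, up to the drift of return times. -/
lemma Susp.sepCount_flowSet_le (hS : Susp f ρ φ e a b) (hu : UExp f ex) {ε γ : ℝ}
    (hε : 0 < ε) (hγ : 0 < γ) : ∃ C > 0, ∃ M : ℕ, ∀ (H : HS f ex δ) (T : ℝ),
      (∀ s, T ≤ birkhoffSum f ρ H.m (H.π s)) → ∀ Γ ⊆ H.flowSet φ e, ∀ n p : ℕ,
      n + b + H.m * b ≤ p * T → (sepCount (φ.toFun 1) Γ n ε : ℝ) ≤
        H.m * (H.N : ℝ) ^ (p + 1 + 2 * M) * (C * Real.exp (γ * (H.m * p))) := by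
  classical
  obtain ⟨δ0, hδ0, C, hC, hdrift⟩ := hS.drift hε hγ
  obtain ⟨M, hM⟩ := hu δ0 hδ0
  refine ⟨C, hC, M, fun H T hT Γ hΓ n p hp => ?_⟩
  obtain ⟨Q, hQΓ, hQs, hQc⟩ := exists_card_eq_sepCount (φ.toFun 1) Γ n hε
  obtain ⟨Q', hQ'c, hQ'1, hQ'2⟩ := hS.sep_lift hQs
  rw [← hQc, ← hQ'c]
  have hbase : ∀ z ∈ Q', ∃ r : Fin H.m, ∃ s, z.1 = f^[r] (H.π s) := by
    intro z hz
    have h1 := hΓ (hQΓ (hQ'1 z hz).2.2)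
    rw [H.mem_flowSet_iff] at h1
    obtain ⟨r, hr, s, h⟩ := hS.base_of_mem H h1
    exact ⟨⟨r, hr⟩, s, h⟩
  have hne : Nonempty (Fin H.m) := ⟨⟨0, H.hm⟩⟩
  have hne' : Nonempty (ℤ → Fin H.N) := ⟨fun _ => ⟨0, H.hN⟩⟩
  choose! r s hrs using hbase
  set cl : X × ℝ → Fin H.m × (Fin (p + 1 + 2 * M) → Fin H.N) :=
    fun z => (r z, fun i => s z ((i : ℕ) - (M : ℤ))) with hcl
  obtain ⟨y, -, hy⟩ := exists_fiber_card (s := Q') (t := Finset.univ) (g := cl)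
    (fun _ _ => Finset.mem_univ _) ⟨(⟨0, H.hm⟩, fun _ => ⟨0, H.hN⟩), Finset.mem_univ _⟩
  simp only [Finset.card_univ, Fintype.card_prod, Fintype.card_fun, Fintype.card_fin] at hy
  push_cast at hy
  refine hy.trans (mul_le_mul_of_nonneg_left ?_ (by positivity))
  have hm1 : (1 : ℤ) ≤ H.m := by exact_mod_cast H.hm
  have hJ : ((H.m * p : ℕ) : ℝ) = H.m * p := by push_cast; ring
  rw [← hJ]
  refine hdrift n (H.m * p) _ ?_ ?_ ?_ ?_
  · intro z hz
    have := hQ'1 z (Finset.mem_filter.mp hz).1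
    exact ⟨this.1, this.2.1⟩
  · intro z hz z' hz' j hj
    obtain ⟨hz1, hz2⟩ := Finset.mem_filter.mp hz
    obtain ⟨hz1', hz2'⟩ := Finset.mem_filter.mp hz'
    have hr : r z = r z' := by
      have := congrArg Prod.fst (hz2.trans hz2'.symm)
      exact this
    have hs : ∀ i : Fin (p + 1 + 2 * M), s z ((i : ℕ) - (M : ℤ)) = s z' ((i : ℕ) - (M : ℤ)) := by
      have := congrArg Prod.snd (hz2.trans hz2'.symm)
      exact congrFun this
    rw [hrs z hz1, hrs z' hz1', ← hr, ← Function.iterate_add_apply, ← Function.iterate_add_apply,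
      ← zpow_natCast_apply, ← zpow_natCast_apply]
    refine H.close_window hM (lo := -M) (hi := p + 1 + M) ?_ ?_ ?_
    · intro i h1 h2
      have := hs ⟨(i + M).toNat, by omega⟩
      simp only [Int.toNat_of_nonneg (show 0 ≤ i + M by omega), add_sub_cancel_right] at this
      exact this
    · push_cast
      nlinarith
    · have h1 : ((r z : ℕ) : ℤ) < H.m := by exact_mod_cast (r z).2
      have h2 : (j : ℤ) ≤ H.m * p := by exact_mod_cast hj
      push_cast
      nlinarith
  · intro z hz
    have hz1 := (Finset.mem_filter.mp hz).1
    have := hS.sum_block_ge H hT p (r z).2 (s z)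
    rw [← hrs z hz1] at this
    linarith
  · intro z hz z' hz'
    exact hQ'2 z (Finset.mem_filter.mp hz).1 z' (Finset.mem_filter.mp hz').1

theorem Susp.topEntropyOn_le (hS : Susp f ρ φ e a b) (hu : UExp f ex) {c : ℝ} (hc : 0 ≤ c)
    {H : ℕ → HS f ex δ} (hH : Tower f ex δ ρ c H) {Γ : Set Y}
    (hΓ : ∀ k, Γ ⊆ (H k).flowSet φ e) : topEntropyOn (φ.toFun 1) Γ ≤ c := by
  refine topEntropyOn_le_of fun ε hε c' hc' => ?_
  have ha := hS.a_pos
  have hb := hS.b_pos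
  set κ : ℝ := c' - c with hκ
  have hκp : 0 < κ := sub_pos.mpr hc'
  set γ : ℝ := κ * a / 4 with hγ
  have hγp : 0 < γ := by positivity
  obtain ⟨C, hC, M, hcount⟩ := hS.sepCount_flowSet_le (δ := δ) hu hε hγp
  obtain ⟨k, hk⟩ := (hH.upper γ hγp).exists
  set K := H k with hK
  have hne : Nonempty (ℤ → Fin K.N) := ⟨fun _ => ⟨0, K.hN⟩⟩
  have hm : (0 : ℝ) < K.m := by exact_mod_cast K.hm
  have hN1 : (1 : ℝ) ≤ K.N := by exact_mod_cast K.hN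
  have hN : (0 : ℝ) < K.N := by linarith
  set T : ℝ := ⨅ s, birkhoffSum f ρ K.m (K.π s) with hT
  have hbdd : BddBelow (Set.range fun s => birkhoffSum f ρ K.m (K.π s)) := by
    refine ⟨0, ?_⟩
    rintro _ ⟨s, rfl⟩
    exact hS.sum_nonneg _ _
  have hT1 : ∀ s, T ≤ birkhoffSum f ρ K.m (K.π s) := fun s => ciInf_le hbdd s
  have hT2 : K.m * a ≤ T := le_ciInf fun s => hS.le_sum _ _
  have hTp : 0 < T := lt_of_lt_of_le (by positivity) hT2
  have hT3 : Real.log K.N ≤ c * T + γ * K.m := by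
    rw [hT, Real.mul_iInf_of_nonneg hc, ← sub_le_iff_le_add]
    exact le_ciInf fun s => by linarith [hk s]
  have hrate : Real.log K.N + γ * K.m ≤ (c + κ / 2) * T := by
    have : 2 * (γ * K.m) = κ / 2 * (K.m * a) := by rw [hγ]; ring
    nlinarith
  have hlogN : 0 ≤ Real.log K.N := Real.log_nonneg hN1
  set A : ℝ := (c + κ / 2) * (b + K.m * b) + (Real.log K.N + γ * K.m) + Real.log K.m
    + (1 + 2 * M) * Real.log K.N + Real.log C with hA
  have e1 : ∀ᶠ n : ℕ in atTop, A / (κ / 2) ≤ (n : ℝ) :=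
    tendsto_natCast_atTop_atTop.eventually_ge_atTop _
  filter_upwards [e1] with n hn
  rw [div_le_iff₀ (by positivity)] at hn
  rcases Nat.eq_zero_or_pos (sepCount (φ.toFun 1) Γ n ε) with h0 | h0
  · rw [h0]
    simp only [Nat.cast_zero, Real.log_zero]
    have : 0 ≤ c' := hc.trans hc'.le
    positivity
  set p : ℕ := ⌈(n + b + K.m * b) / T⌉₊ with hp
  have hp1 : n + b + K.m * b ≤ p * T := by
    rw [← div_le_iff₀ hTp]; exact Nat.le_ceil _
  have hp2 : (p : ℝ) ≤ (n + b + K.m * b) / T + 1 := (Nat.ceil_lt_add_one (by positivity)).le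
  have h1 := hcount K T hT1 Γ (hΓ k) n p hp1
  have h2 := Real.log_le_log (by exact_mod_cast h0) h1
  rw [Real.log_mul (by positivity) (by positivity), Real.log_mul (by positivity) (by positivity),
    Real.log_mul (by positivity) (by positivity), Real.log_pow, Real.log_exp] at h2
  push_cast at h2
  have h3 : (p : ℝ) * (Real.log K.N + γ * K.m) ≤
      (c + κ / 2) * (n + b + K.m * b) + (Real.log K.N + γ * K.m) := by
    calc (p : ℝ) * (Real.log K.N + γ * K.m)
        ≤ ((n + b + K.m * b) / T + 1) * (Real.log K.N + γ * K.m) := by gcongr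
      _ = (n + b + K.m * b) / T * (Real.log K.N + γ * K.m) + (Real.log K.N + γ * K.m) := by ring
      _ ≤ (n + b + K.m * b) / T * ((c + κ / 2) * T) + (Real.log K.N + γ * K.m) := by gcongr
      _ = _ := by field_simp
  have h4 : c' * n = (c + κ / 2) * n + n * (κ / 2) := by rw [hκ]; ring
  nlinarith

end

/-! ### Lower bound for the entropy of the minimal set -/

section
variable {X Y : Type*} [MetricSpace X] [CompactSpace X] [MetricSpace Y] [CompactSpace Y]
  {f : X ≃ₜ X} {ρ : X → ℝ} {φ : Flow ℝ Y} {e : X → Y} {a b : ℝ} {ex δ : ℝ}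

/-- The map `(q, s) ↦ φ_s (e q)` is uniformly injective near the base. -/
lemma Susp.local_inj (hS : Susp f ρ φ e a b) {τ : ℝ} (hτ : 0 < τ) :
    ∃ η > 0, ∀ p q s, |s| ≤ a / 2 → dist (e p) (φ.toFun s (e q)) ≤ η → |s| ≤ τ ∧ dist p q ≤ τ := by
  have ha := hS.a_pos
  have hc : Continuous (fun z : (X × X) × ℝ => dist (e z.1.1) (φ.toFun z.2 (e z.1.2))) := by
    refine Continuous.dist (hS.ec.comp (continuous_fst.comp continuous_fst)) ?_
    exact φ.cont'.comp (continuous_snd.prodMk (hS.ec.comp (continuous_snd.comp continuous_fst)))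
  set K : Set ((X × X) × ℝ) := (univ ×ˢ Icc (-(a / 2)) (a / 2)) ∩
    {z | τ ≤ max |z.2| (dist z.1.1 z.1.2)} with hK
  have hKc : IsCompact K := by
    refine (isCompact_univ.prod isCompact_Icc).inter_right (isClosed_le continuous_const ?_)
    fun_prop
  have hpos : ∀ z ∈ K, 0 < dist (e z.1.1) (φ.toFun z.2 (e z.1.2)) := by
    rintro ⟨⟨p, q⟩, s⟩ ⟨⟨-, hs1, hs2⟩, hz⟩
    simp only [mem_ofPred_eq] at hz hs1 hs2 ⊢
    rw [dist_pos]
    intro h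
    have hpq : p = q ∧ s = 0 := by
      rcases le_total 0 s with h0 | h0
      · obtain ⟨h1, h2⟩ := hS.inj p q 0 s le_rfl (by linarith [hS.ρa p]) h0
          (by linarith [hS.ρa q]) (by rw [φ.map_zero', h])
        exact ⟨h1, h2.symm⟩
      · obtain ⟨h1, h2⟩ := hS.inj p q (-s) 0 (by linarith) (by linarith [hS.ρa p]) le_rfl
          (by linarith [hS.ρa q]) (by rw [h, ← φ.map_add', neg_add_cancel])
        exact ⟨h1, by linarith⟩
    rw [hpq.1, hpq.2] at hz
    simp at hz
    linarith
  rcases K.eq_empty_or_nonempty with hemp | hne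
  · refine ⟨1, one_pos, fun p q s hs _ => ?_⟩
    by_contra hcon
    have : ((p, q), s) ∈ K := by
      refine ⟨⟨mem_univ _, abs_le.mp hs⟩, ?_⟩
      by_contra h
      simp only [mem_ofPred_eq, not_le, max_lt_iff] at h
      exact hcon ⟨h.1.le, h.2.le⟩
    rw [hemp] at this
    exact this
  · obtain ⟨z0, hz0, hmin⟩ := hKc.exists_isMinOn hne hc.continuousOn
    refine ⟨dist (e z0.1.1) (φ.toFun z0.2 (e z0.1.2)) / 2, half_pos (hpos z0 hz0),
      fun p q s hs h => ?_⟩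
    by_contra hcon
    have : ((p, q), s) ∈ K := by
      refine ⟨⟨mem_univ _, abs_le.mp hs⟩, ?_⟩
      by_contra h
      simp only [mem_ofPred_eq, not_le, max_lt_iff] at h
      exact hcon ⟨h.1.le, h.2.le⟩
    have h1 := hmin this
    simp only [mem_ofPred_eq] at h1
    linarith [hpos z0 hz0]

/-- Points of the base whose flow orbits stay close at integer times have close base orbits. -/
lemma Susp.base_close (hS : Susp f ρ φ e a b) {δ0 : ℝ} (hδ0 : 0 < δ0) :
    ∃ ε > 0, ∀ (n : ℕ) (x x' : X),
      (∀ t : ℕ, t ≤ n → dist (φ.toFun t (e x)) (φ.toFun t (e x')) ≤ ε) →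
      ∀ j : ℕ, birkhoffSum f ρ j x ≤ n → dist (f^[j] x) (f^[j] x') ≤ δ0 := by
  have ha := hS.a_pos
  obtain ⟨δ1, hδ1, hroof⟩ := hS.roof_unif (show 0 < a / 4 by positivity)
  set τ : ℝ := min δ0 (min δ1 (a / 4)) with hτ
  have hτp : 0 < τ := lt_min hδ0 (lt_min hδ1 (by positivity))
  have hτ0 : τ ≤ δ0 := min_le_left _ _
  have hτ1 : τ ≤ δ1 := (min_le_right _ _).trans (min_le_left _ _)
  have hτa : τ ≤ a / 4 := (min_le_right _ _).trans (min_le_right _ _)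
  obtain ⟨η, hη, hloc⟩ := hS.local_inj hτp
  have hKc : IsCompact (Icc (0 : ℝ) 1 ×ˢ (univ : Set Y)) := isCompact_Icc.prod isCompact_univ
  have huc := hKc.uniformContinuousOn_of_continuous
    (f := fun z : ℝ × Y => φ.toFun z.1 z.2) φ.cont'.continuousOn
  rw [Metric.uniformContinuousOn_iff] at huc
  obtain ⟨ε, hε, huc⟩ := huc η hη
  refine ⟨ε / 2, by positivity, fun n x x' hclose => ?_⟩
  have hreal : ∀ t : ℝ, 0 ≤ t → t ≤ n → dist (φ.toFun t (e x)) (φ.toFun t (e x')) ≤ η := by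
    intro t ht0 htn
    have h1 := hclose ⌊t⌋₊ (by
      have : (⌊t⌋₊ : ℝ) ≤ n := (Nat.floor_le ht0).trans htn
      exact_mod_cast this)
    have h2 : t = (t - ⌊t⌋₊) + ⌊t⌋₊ := by ring
    have h3 := Nat.floor_le ht0
    have h4 := Nat.lt_floor_add_one t
    have hmem : ∀ y : Y, (t - ⌊t⌋₊, y) ∈ Icc (0 : ℝ) 1 ×ˢ (univ : Set Y) := fun y =>
      ⟨⟨by simp only; linarith, by simp only; linarith⟩, mem_univ _⟩
    have h5 := huc _ (hmem (φ.toFun ⌊t⌋₊ (e x))) _ (hmem (φ.toFun ⌊t⌋₊ (e x'))) (by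
      rw [Prod.dist_eq, dist_self]
      exact max_lt hε (by simp only; linarith))
    simp only [← φ.map_add', ← h2] at h5
    exact h5.le
  have key : ∀ j : ℕ, birkhoffSum f ρ j x ≤ n →
      |birkhoffSum f ρ j x - birkhoffSum f ρ j x'| ≤ τ ∧ dist (f^[j] x) (f^[j] x') ≤ τ := by
    have hstep : ∀ j : ℕ, birkhoffSum f ρ j x ≤ n →
        |birkhoffSum f ρ j x - birkhoffSum f ρ j x'| ≤ a / 2 →
        |birkhoffSum f ρ j x - birkhoffSum f ρ j x'| ≤ τ ∧ dist (f^[j] x) (f^[j] x') ≤ τ := by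
      intro j hj hs
      refine hloc _ _ _ hs ?_
      rw [← hS.ret_iter, ← hS.flow_eq]
      exact hreal _ (hS.sum_nonneg _ _) hj
    intro j
    induction j with
    | zero => intro h; exact hstep 0 h (by simp; positivity)
    | succ j ih =>
      intro h
      obtain ⟨h1, h2⟩ := ih (((hS.sum_strictMono x).monotone j.le_succ).trans h)
      refine hstep _ h ?_
      have h3 := hroof _ _ (h2.trans hτ1)
      rw [birkhoffSum_succ, birkhoffSum_succ]
      rw [abs_le] at *
      constructor <;> linarith [h1.1, h1.2, h3.1, h3.2]
  exact fun j hj => (key j hj).2.trans hτ0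

theorem Susp.le_topEntropyOn (hS : Susp f ρ φ e a b) (hδ : 0 < δ) {c : ℝ} (hc : 0 ≤ c)
    {H : ℕ → HS f ex δ} (hH : Tower f ex δ ρ c H) {Γ : Set Y} (hne : Γ.Nonempty)
    (hinv : FlowInvSet φ Γ) (hΓ : ∀ k, Γ ⊆ (H k).flowSet φ e) :
    (c : EReal) ≤ topEntropyOn (φ.toFun 1) Γ := by
  classical
  have ha := hS.a_pos
  have hmem : ∀ t y, y ∈ Γ → φ.toFun t y ∈ Γ := fun t y hy => by
    rw [← hinv t]; exact mem_image_of_mem _ hy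
  obtain ⟨ε, hε, hclose⟩ := hS.base_close hδ
  have hsep : ∀ k, (H k).N ≤ sepCount (φ.toFun 1) Γ ⌈(H k).Tp ρ⌉₊ ε := by
    intro k
    set n := ⌈(H k).Tp ρ⌉₊ with hn
    obtain ⟨y, hy⟩ := hne
    obtain ⟨t, s, rfl⟩ := hΓ (k + 1) hy
    have hes : e ((H (k + 1)).π s) ∈ Γ := by
      have := hmem (-t) _ hy
      rwa [← φ.map_add', neg_add_cancel, φ.map_zero'] at this
    choose j w hw0 hw using hH.visit k s
    have hwΓ : ∀ u, e ((H k).π (w u)) ∈ Γ := fun u => by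
      rw [hw, ← hS.ret_iter]; exact hmem _ _ hes
    have hd : ∀ u v, u ≠ v → ∃ i : ℕ, i ≤ n ∧
        ε < dist ((φ.toFun 1)^[i] (e ((H k).π (w u)))) ((φ.toFun 1)^[i] (e ((H k).π (w v)))) := by
      intro u v huv
      by_contra! hcon
      obtain ⟨i, hi, hlt⟩ := (H k).sep (w u) (w v) (by rw [hw0, hw0]; exact huv)
      refine absurd hlt (not_lt.mpr (hclose n _ _ (fun t ht => ?_) i ?_))
      · rw [← flow_iter, ← flow_iter]; exact hcon t ht
      · exact (((hS.sum_strictMono _).monotone hi.le).trans ((H k).le_Tp hS.ρb (w u))).trans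
          (Nat.le_ceil _)
    have hinj : Function.Injective fun u => e ((H k).π (w u)) := by
      intro u v huv
      by_contra hne
      obtain ⟨i, -, h⟩ := hd u v hne
      simp only at huv
      rw [huv, dist_self] at h
      linarith
    have := card_le_sepCount (f := φ.toFun 1) (K := Γ) (n := n) hε
      (Q := Finset.univ.image fun u => e ((H k).π (w u))) (by
        intro y hy
        obtain ⟨u, -, rfl⟩ := Finset.mem_image.mp hy
        exact hwΓ u) (by
        intro y hy y' hy' hyy'
        obtain ⟨u, -, rfl⟩ := Finset.mem_image.mp hy
        obtain ⟨v, -, rfl⟩ := Finset.mem_image.mp hy'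
        exact hd u v fun h => hyy' (by rw [h]))
    rwa [Finset.card_image_of_injective _ hinj, Finset.card_univ, Fintype.card_fin] at this
  refine le_topEntropyOn_of hε fun c' hc' => ?_
  rw [frequently_atTop]
  intro n0
  have hd : 0 < c - c' := sub_pos.mpr hc'
  obtain ⟨k, hk⟩ := exists_nat_ge (max (n0 : ℝ) (c / (c - c')) / a)
  rw [div_le_iff₀ ha] at hk
  have hTk : k * a ≤ (H k).Tp ρ := by
    refine le_trans ?_ ((H k).le_Tp hS.ρb fun _ => ⟨0, (H k).hN⟩)
    refine le_trans ?_ (hS.le_sum _ _)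
    have : (k : ℝ) ≤ (H k).m := by exact_mod_cast hH.le_m k
    gcongr
  have hT0 : 0 ≤ (H k).Tp ρ := le_trans (by positivity) hTk
  have h1 := Nat.le_ceil ((H k).Tp ρ)
  have h2 := Nat.ceil_lt_add_one hT0
  refine ⟨⌈(H k).Tp ρ⌉₊, ?_, ?_⟩
  · have : (n0 : ℝ) ≤ ⌈(H k).Tp ρ⌉₊ := (((le_max_left _ _).trans hk).trans hTk).trans h1
    exact_mod_cast this
  · have h3 := hH.lower k
    have h4 : Real.log (H k).N ≤ Real.log (sepCount (φ.toFun 1) Γ ⌈(H k).Tp ρ⌉₊ ε) :=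
      Real.log_le_log (by exact_mod_cast (H k).hN) (by exact_mod_cast hsep k)
    have h5 : c / (c - c') ≤ ⌈(H k).Tp ρ⌉₊ := (((le_max_right _ _).trans hk).trans hTk).trans h1
    rw [div_le_iff₀ hd] at h5
    nlinarith

end

/-! ### Strictly ergodic sets of prescribed entropy -/

theorem Susp.exists_strictlyErgodic {X Y : Type*} [MetricSpace X] [CompactSpace X] [MetricSpace Y]
    [CompactSpace Y] [MeasurableSpace Y] [BorelSpace Y] {f : X ≃ₜ X} {ρ : X → ℝ} {φ : Flow ℝ Y}
    {e : X → Y} {a b : ℝ} (hS : Susp f ρ φ e a b) {ex : ℝ} (hex0 : 0 < ex)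
    (hex : ∀ x y : X, (∀ n : ℤ, dist ((f ^ n) x) ((f ^ n) y) ≤ ex) → x = y)
    (hsh : ShadowingProperty f) {c : ℝ} (hc : 0 ≤ c) (h : (c : EReal) < topEntropy (φ.toFun 1)) :
    ∃ Γ : Set Y, IsCompact Γ ∧ FlowInvSet φ Γ ∧ FlowStrictlyErgodicOn φ Γ ∧
      topEntropyOn (φ.toFun 1) Γ = c ∧
      ∃ μ : Measure Y, IsProbabilityMeasure μ ∧ FlowErgodic φ μ ∧ measEntropy (φ.toFun 1) μ = c := by
  have hu : UExp f ex := uexp_of_expansive hex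
  obtain ⟨δ, hδ, H0, T, hT, hcT⟩ := hS.exists_HS hex0 hex hsh hc h
  have hH0 : c * H0.Tp ρ < Real.log H0.N :=
    lt_of_le_of_lt (mul_le_mul_of_nonneg_left (H0.Tp_le hT) hc) hcT
  obtain ⟨H, hH⟩ := exists_tower hu hS.ρc hc (fun x => hS.a_pos.le.trans (hS.ρa x)) hS.ρb H0 hH0
  obtain ⟨Γ, hne, hcl, hinv, hmin, hΓ⟩ := hS.exists_minimal_tower hu hH
  have hle := hS.topEntropyOn_le hu hc hH hΓ
  have hent := le_antisymm hle (hS.le_topEntropyOn hδ hc hH hne hinv hΓ)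
  obtain ⟨hue, μ, hμ, hμe, hμΓ, hconv⟩ := (hS.unifAvg hH hΓ).main hne hinv hcl
  refine ⟨Γ, hcl.isCompact, hinv, ⟨hmin, hue⟩, hent, μ, hμ, hμe, le_antisymm ?_ ?_⟩
  · exact measEntropy_le_of_topEntropyOn_le ((flow_cont φ).comp (Continuous.prodMk_right 1)) μ (hμe.1 1) hμΓ hle
  · rw [← EReal.ge_of_forall_gt_iff_ge]
    intro z hz
    exact le_measEntropy_of_uniform φ μ hμe.1 hne hconv (by rw [hent]; exact hz)

/-- The suspension data in terms of a bundled homeomorphism and bounds of the roof function. -/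
lemma exists_susp {X : Type*} [MetricSpace X] [CompactSpace X] (f : X ≃ₜ X) (ρ : X → ℝ)
    (hρc : Continuous ρ) (hρp : ∀ x, 0 < ρ x) {Y : Type*} [MetricSpace Y] (φ : Flow ℝ Y)
    (hsusp : IsSuspensionOn f Set.univ ρ φ (Set.univ : Set Y)) :
    ∃ (e : X → Y) (a b : ℝ), Susp f ρ φ e a b := by
  obtain ⟨e, hec, -, hret, hsurj, hinj⟩ := hsusp
  obtain ⟨a, b, ha, hb, h1, h2⟩ : ∃ a b : ℝ, 0 < a ∧ 0 < b ∧ (∀ x, a ≤ ρ x) ∧ ∀ x, ρ x ≤ b := by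
    rcases isEmpty_or_nonempty X with hX | hX
    · exact ⟨1, 1, one_pos, one_pos, fun x => hX.elim x, fun x => hX.elim x⟩
    · obtain ⟨x0, -, h0⟩ := isCompact_univ.exists_isMinOn univ_nonempty hρc.continuousOn
      obtain ⟨x1, -, h1⟩ := isCompact_univ.exists_isMaxOn univ_nonempty hρc.continuousOn
      exact ⟨ρ x0, ρ x1, hρp _, hρp _, fun x => h0 (mem_univ x), fun x => h1 (mem_univ x)⟩
  refine ⟨e, a, b, hρc, continuousOn_univ.mp hec, ha, hb, h1, h2, fun x => hret x (mem_univ _),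
    fun z => ?_, fun x y s u => hinj x (mem_univ _) y (mem_univ _) s u⟩
  obtain ⟨x, -, s, h⟩ := hsurj z (mem_univ _)
  exact ⟨x, s, h⟩

end EFlex

/-- The suspension flow of an expansive homeomorphism with the
shadowing property realizes every intermediate entropy value on a strictly
ergodic compact invariant set; in particular it has entropy flexibility. -/
theorem suspension_of_expansive_shadowing_entropy_flexibility
    {X : Type*} [MetricSpace X] [CompactSpace X]
    (f : X → X) (hf : IsHomeomorph f) (hexp : Expansive f) (hsh : ShadowingProperty f)
    (ρ : X → ℝ) (hρc : Continuous ρ) (hρp : ∀ x, 0 < ρ x)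
    {Λ : Type*} [MetricSpace Λ] [CompactSpace Λ] [MeasurableSpace Λ] [BorelSpace Λ]
    (φ : Flow ℝ Λ)
    (hsusp : IsSuspensionOn f Set.univ ρ φ (Set.univ : Set Λ)) :
    (∀ c : ℝ, 0 ≤ c → (c : EReal) < flowTopEntropy φ →
      ∃ Γ : Set Λ, IsCompact Γ ∧ FlowInvSet φ Γ ∧ FlowStrictlyErgodicOn φ Γ ∧
        flowTopEntropyOn φ Γ = (c : EReal)) ∧
    FlowEntropyFlexible φ := by
  obtain ⟨F, rfl⟩ : ∃ F : X ≃ₜ X, ⇑F = f := ⟨hf.homeomorph f, rfl⟩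
  obtain ⟨e, a, b, hS⟩ := EFlex.exists_susp F ρ hρc hρp φ hsusp
  obtain ⟨ex, hex0, hex⟩ := hexp
  have hex' : ∀ x y : X, (∀ n : ℤ, dist ((F ^ n) x) ((F ^ n) y) ≤ ex) → x = y := by
    have horb : ∀ (x : X) (n : ℤ), (F ^ (n + 1)) x = F ((F ^ n) x) := fun x n => by
      rw [add_comm, EFlex.zpow_add_apply, zpow_one]
    intro x y h
    simpa using hex (fun n => (F ^ n) x) (fun n => (F ^ n) y) (horb x) (horb y) h
  constructor
  · intro c hc h
    obtain ⟨Γ, h1, h2, h3, h4, -⟩ := hS.exists_strictlyErgodic hex0 hex' hsh hc h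
    exact ⟨Γ, h1, h2, h3, h4⟩
  · intro c hc h
    obtain ⟨Γ, h1, h2, -, h4, μ, h5, h6, h7⟩ := hS.exists_strictlyErgodic hex0 hex' hsh hc h
    exact ⟨μ, Γ, h5, h6, h1, h2, h4, h7⟩
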